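/- Convergence for s > 1/2. Assume (H1)–(H4) and s ∈ (1/2,1). For each ε > 0 let u^ε be the unique viscosity solution of ∂_t u^ε = ε^{2s−1} I_s[u^ε(t,·)] − W'(u^ε/ε) + σ(t/ε, x/ε) on ℝ⁺×ℝ^N with u^ε(0,x)=u₀(x), and let u⁰ be the unique viscosity solution of ∂_t u = H̄₁(∇_x u) on ℝ⁺×ℝ^N with u(0,x)=u₀(x), where H̄₁(p) := H̄(p,0). Then u^ε converges to u⁰ locally uniformly in (t,x) as ε → 0. -/

import Mathlib

/-!
Since `s > 1/2`, one can fix `γ` with `1 < γ < 2s`. The kernel then integrates `min(|z|², |z|^γ)`,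
so that the *superlinear* function `⟨y⟩^γ = (1 + |y|²)^{γ/2}` can serve as a penalization in
nonlocal comparison arguments.

The heart of the proof is a bound for the slope at contact points. Suppose that a quadratic
function with time slope `λ` and gradient `q`, plus a small multiple of `⟨x⟩`, touches `u^ε` from
above at `(t, x)`. Blow `u^ε` up by the factor `1/ε` at a lattice point lying at rescaled time
about `T₀` before the contact point. By periodicity the blow-up solves an equation without `ε`,
and by the contact it starts below a plane of slope `p` close to `q`, up to `κ ⟨y⟩^γ` with `κ`
small. Comparison with the corrector of slope `p` bounds `λ` by the growth rate of the corrector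
over the time `T₀`, up to an error proportional to `κ`. Choosing first `T₀` large, then `ε` small,
gives `λ ≤ H̄₁(q) + θ`, and compactness makes this uniform over bounded sets of gradients.

Thus no perturbed test function is needed: `u^ε` is compared with `u⁰` directly, by doubling the
variables with a parameter *independent of* `ε`. If `u^ε - u⁰` were somewhere larger than `η`, the
supersolution property of `u⁰` would produce a contact point whose slope violates this bound,
while barriers `u₀ ± C t` keep the contact point away from the initial time. The other inequality
follows from the symmetry `u ↦ -u`, under which the class of equations is invariant.
-/

open MeasureTheory Filter Metric Set RealInnerProductSpace

noncomputable section

/-- `ℝ^N` as a Euclidean space. -/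
abbrev EN (N : ℕ) := EuclideanSpace ℝ (Fin N)

/-- The singular kernel `g(z/|z|) |z|^{-N-2s}` of the anisotropic Lévy operator. -/
noncomputable def levyKernel (N : ℕ) (s : ℝ) (g : EN N → ℝ) (z : EN N) : ℝ :=
  g (‖z‖⁻¹ • z) * ‖z‖ ^ (-(N : ℝ) - 2 * s)

/-- `I^{1,r}[φ, x]`: integral over `|z| ≤ r` of the second order increment of `φ`. -/
noncomputable def levyI1 (N : ℕ) (s : ℝ) (g : EN N → ℝ) (φ : EN N → ℝ) (r : ℝ) (x : EN N) : ℝ :=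
  ∫ z in {z : EN N | ‖z‖ ≤ r}, (φ (x + z) - φ x - fderiv ℝ φ x z) * levyKernel N s g z

/-- `I^{2,r}[u, x]`: integral over `|z| > r` of the increment of `u`. -/
noncomputable def levyI2 (N : ℕ) (s : ℝ) (g : EN N → ℝ) (u : EN N → ℝ) (r : ℝ) (x : EN N) : ℝ :=
  ∫ z in {z : EN N | r < ‖z‖}, (u (x + z) - u x) * levyKernel N s g z

/-- The anisotropic Lévy operator `I_s` of order `2s`, defined as a principal value. -/
noncomputable def levyOp (N : ℕ) (s : ℝ) (g : EN N → ℝ) (φ : EN N → ℝ) (x : EN N) : ℝ :=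
  limUnder (nhdsWithin 0 (Ioi (0:ℝ)))
    (fun ρ => ∫ y in {y : EN N | ρ < ‖y‖}, (φ (x + y) - φ x) * levyKernel N s g y)

/-- (H1): `g` is continuous, positive on the sphere and even. -/
def H1 (N : ℕ) (g : EN N → ℝ) : Prop :=
  Continuous g ∧ (∀ z : EN N, ‖z‖ = 1 → 0 < g z) ∧ (∀ z : EN N, g (-z) = g z)

/-- (H2): `W ∈ C^{1,1}(ℝ)` and `W(v+1) = W(v)`. -/
def H2 (W : ℝ → ℝ) : Prop :=
  ContDiff ℝ 1 W ∧ (∃ K : NNReal, LipschitzWith K (deriv W)) ∧ ∀ v, W (v + 1) = W v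

/-- (H3): `σ ∈ C^{0,1}(ℝ⁺ × ℝ^N)`, 1-periodic in `t` and ℤ^N-periodic in `x`. -/
def H3 (N : ℕ) (σ : ℝ → EN N → ℝ) : Prop :=
  (∃ K : NNReal, LipschitzWith K (fun q : ℝ × EN N => σ q.1 q.2)) ∧
  (∀ t x, σ (t + 1) x = σ t x) ∧
  (∀ (k : Fin N → ℤ) (t : ℝ) (x : EN N), σ t (x + (WithLp.equiv 2 (Fin N → ℝ)).symm (fun j => (k j : ℝ))) = σ t x)

/-- (H4): `u₀ ∈ W^{2,∞}(ℝ^N)`. -/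
def H4 (N : ℕ) (u₀ : EN N → ℝ) : Prop :=
  ContDiff ℝ 2 u₀ ∧
  ∃ M, ∀ x, |u₀ x| ≤ M ∧ ‖fderiv ℝ u₀ x‖ ≤ M ∧ ‖fderiv ℝ (fderiv ℝ u₀) x‖ ≤ M

/-- Boundedness on `(0,T) × ℝ^N` for every `T > 0`. -/
def LocBddPos (N : ℕ) (u : ℝ → EN N → ℝ) : Prop :=
  ∀ T > 0, ∃ M, ∀ t ∈ Ioc (0:ℝ) T, ∀ x, |u t x| ≤ M

/-- Viscosity subsolution of `∂_t u = F(t, x, u, ∇_x u, I_s[u(t,·)])` with initial datum `u₀`. -/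
def IsSubsol (N : ℕ) (s : ℝ) (g : EN N → ℝ)
    (F : ℝ → EN N → ℝ → (EN N →L[ℝ] ℝ) → ℝ → ℝ)
    (u₀ : EN N → ℝ) (u : ℝ → EN N → ℝ) : Prop :=
  UpperSemicontinuousOn (fun q : ℝ × EN N => u q.1 q.2) (Ici 0 ×ˢ univ) ∧
  LocBddPos N u ∧
  (∀ x, u 0 x ≤ u₀ x) ∧
  ∀ (t₀ : ℝ) (x₀ : EN N), 0 < t₀ →
    ∀ (φ : ℝ → EN N → ℝ), ContDiff ℝ 2 (fun q : ℝ × EN N => φ q.1 q.2) →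
    ∀ τ r : ℝ, 0 < τ → τ < t₀ → 0 < r →
    (∀ t x, t ∈ Ioo (t₀ - τ) (t₀ + τ) → x ∈ ball x₀ r →
      u t x - φ t x ≤ u t₀ x₀ - φ t₀ x₀) →
    deriv (fun t => φ t x₀) t₀ -
      F t₀ x₀ (u t₀ x₀) (fderiv ℝ (fun x => φ t₀ x) x₀)
        (levyI1 N s g (fun x => φ t₀ x) r x₀ + levyI2 N s g (fun x => u t₀ x) r x₀) ≤ 0

/-- Viscosity supersolution of `∂_t u = F(t, x, u, ∇_x u, I_s[u(t,·)])` with initial datum `u₀`. -/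
def IsSupersol (N : ℕ) (s : ℝ) (g : EN N → ℝ)
    (F : ℝ → EN N → ℝ → (EN N →L[ℝ] ℝ) → ℝ → ℝ)
    (u₀ : EN N → ℝ) (u : ℝ → EN N → ℝ) : Prop :=
  LowerSemicontinuousOn (fun q : ℝ × EN N => u q.1 q.2) (Ici 0 ×ˢ univ) ∧
  LocBddPos N u ∧
  (∀ x, u₀ x ≤ u 0 x) ∧
  ∀ (t₀ : ℝ) (x₀ : EN N), 0 < t₀ →
    ∀ (φ : ℝ → EN N → ℝ), ContDiff ℝ 2 (fun q : ℝ × EN N => φ q.1 q.2) →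
    ∀ τ r : ℝ, 0 < τ → τ < t₀ → 0 < r →
    (∀ t x, t ∈ Ioo (t₀ - τ) (t₀ + τ) → x ∈ ball x₀ r →
      u t₀ x₀ - φ t₀ x₀ ≤ u t x - φ t x) →
    0 ≤ deriv (fun t => φ t x₀) t₀ -
      F t₀ x₀ (u t₀ x₀) (fderiv ℝ (fun x => φ t₀ x) x₀)
        (levyI1 N s g (fun x => φ t₀ x) r x₀ + levyI2 N s g (fun x => u t₀ x) r x₀)

/-- Viscosity solution in `C_b(ℝ⁺ × ℝ^N)`. -/
def IsSol (N : ℕ) (s : ℝ) (g : EN N → ℝ)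
    (F : ℝ → EN N → ℝ → (EN N →L[ℝ] ℝ) → ℝ → ℝ)
    (u₀ : EN N → ℝ) (u : ℝ → EN N → ℝ) : Prop :=
  ContinuousOn (fun q : ℝ × EN N => u q.1 q.2) (Ici 0 ×ˢ univ) ∧
  IsSubsol N s g F u₀ u ∧ IsSupersol N s g F u₀ u

/-- The right-hand side of the cell problem
`∂_τ w = I_s[w(τ,·)] + L − W'(w + p·y) + σ(τ,y)`. -/
def cellF (N : ℕ) (W : ℝ → ℝ) (σ : ℝ → EN N → ℝ) (p : EN N) (L : ℝ) :
    ℝ → EN N → ℝ → (EN N →L[ℝ] ℝ) → ℝ → ℝ :=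
  fun τ y v _ I => I + L - deriv W (v + ⟪p, y⟫) + σ τ y

/-- `w(τ,y)/τ → lam` as `τ → +∞`, locally uniformly in `y`. -/
def SlopeLim (N : ℕ) (w : ℝ → EN N → ℝ) (lam : ℝ) : Prop :=
  ∀ ε > 0, ∀ R > 0, ∃ T : ℝ, ∀ τ, T ≤ τ → ∀ y : EN N, ‖y‖ ≤ R → |w τ y / τ - lam| ≤ ε

end

/-! ### Lévy kernels -/

section LevyWeight

variable {E : Type*} [NormedAddCommGroup E] {γ : ℝ}

/-- The weight `min (|z|², |z|^γ)`. For `1 < γ < 2` it dominates the second order increments of a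
`C²` function of growth at most `|z|^γ`. -/
noncomputable def levyWeight (γ : ℝ) (z : E) : ℝ := min (‖z‖ ^ 2) (‖z‖ ^ γ)

lemma levyWeight_nonneg (γ : ℝ) (z : E) : 0 ≤ levyWeight γ z :=
  le_min (by positivity) (by positivity)

lemma levyWeight_of_norm_le_one (hγ₀ : 0 < γ) (hγ₂ : γ ≤ 2) {z : E} (hz : ‖z‖ ≤ 1) :
    levyWeight γ z = ‖z‖ ^ 2 := by
  refine min_eq_left ?_
  rw [← Real.rpow_two]
  exact Real.rpow_le_rpow_of_exponent_ge' (norm_nonneg z) hz hγ₀.le hγ₂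

lemma levyWeight_of_one_le_norm (hγ₂ : γ ≤ 2) {z : E} (hz : 1 ≤ ‖z‖) :
    levyWeight γ z = ‖z‖ ^ γ := by
  refine min_eq_right ?_
  rw [← Real.rpow_two]
  exact Real.rpow_le_rpow_of_exponent_le hz hγ₂

lemma le_mul_levyWeight (hγ₀ : 0 < γ) (hγ₂ : γ ≤ 2) {z : E} {a c : ℝ}
    (hnear : ‖z‖ ≤ 1 → a ≤ c * ‖z‖ ^ 2) (hfar : 1 ≤ ‖z‖ → a ≤ c * ‖z‖ ^ γ) :
    a ≤ c * levyWeight γ z := by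
  rcases le_total ‖z‖ 1 with hz | hz
  · rw [levyWeight_of_norm_le_one hγ₀ hγ₂ hz]
    exact hnear hz
  · rw [levyWeight_of_one_le_norm hγ₂ hz]
    exact hfar hz

lemma one_add_norm_le_levyWeight (hγ₁ : 1 ≤ γ) (hγ₂ : γ ≤ 2) {r : ℝ} (hr : 0 < r) {z : E}
    (hz : r < ‖z‖) : 1 + ‖z‖ ≤ 2 * (1 + (r ^ 2)⁻¹) * levyWeight γ z := by
  refine le_mul_levyWeight (by linarith) hγ₂ (fun h => ?_) (fun h => ?_)
  · have hone : 1 ≤ (r ^ 2)⁻¹ * ‖z‖ ^ 2 := by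
      rw [inv_mul_eq_div, one_le_div (by positivity)]
      gcongr
    linarith [sq_nonneg ‖z‖]
  · have hpow : ‖z‖ ≤ ‖z‖ ^ γ := Real.self_le_rpow_of_one_le h hγ₁
    have hnonneg : 0 ≤ (r ^ 2)⁻¹ * ‖z‖ ^ γ := by positivity
    linarith

lemma measurable_levyWeight [MeasurableSpace E] [OpensMeasurableSpace E] (γ : ℝ) :
    Measurable (levyWeight γ : E → ℝ) := by
  unfold levyWeight
  fun_prop

end LevyWeight

section LevyKernel

variable {E : Type*} [NormedAddCommGroup E] [MeasureSpace E] {γ r : ℝ} {k : E → ℝ}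

/-- An even kernel of Lévy type, with finite second moment near the origin and finite moment of
order `γ ∈ (1, 2)` at infinity. -/
structure IsLevyKernel (γ : ℝ) (k : E → ℝ) : Prop where
  one_lt : 1 < γ
  lt_two : γ < 2
  nonneg : ∀ z, 0 ≤ k z
  even : ∀ z, k (-z) = k z
  measurable : Measurable k
  integrable : Integrable (fun z => levyWeight γ z * k z)

/-- The total mass of the kernel `k` against `levyWeight γ`; it bounds the nonlocal operator on
functions whose second order increments are dominated by the weight. -/
noncomputable def levyMass (γ : ℝ) (k : E → ℝ) : ℝ := ∫ z, levyWeight γ z * k z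

/-- The part of `levyMass γ k` carried by the closed ball of radius `r`. -/
noncomputable def innerMass (γ : ℝ) (k : E → ℝ) (r : ℝ) : ℝ :=
  ∫ z in {z : E | ‖z‖ ≤ r}, levyWeight γ z * k z

/-- The part of `levyMass γ k` carried by the complement of the closed ball of radius `r`. -/
noncomputable def outerMass (γ : ℝ) (k : E → ℝ) (r : ℝ) : ℝ :=
  ∫ z in {z : E | r < ‖z‖}, levyWeight γ z * k z

lemma IsLevyKernel.levyMass_nonneg (hk : IsLevyKernel γ k) : 0 ≤ levyMass γ k :=
  integral_nonneg fun z => mul_nonneg (levyWeight_nonneg γ z) (hk.nonneg z)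

variable [BorelSpace E]

lemma measurableSet_norm_le (r : ℝ) : MeasurableSet {z : E | ‖z‖ ≤ r} :=
  measurableSet_le measurable_norm measurable_const

lemma measurableSet_lt_norm (r : ℝ) : MeasurableSet {z : E | r < ‖z‖} :=
  measurableSet_lt measurable_const measurable_norm

lemma IsLevyKernel.tendsto_innerMass (hk : IsLevyKernel γ k) :
    Tendsto (innerMass γ k) (nhdsWithin 0 (Ioi 0)) (nhds 0) := by
  suffices Tendsto (fun r => ∫ z, {z : E | ‖z‖ ≤ r}.indicator (fun z => levyWeight γ z * k z) z)
      (nhdsWithin 0 (Ioi 0)) (nhds (∫ _ : E, (0 : ℝ))) by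
    simp only [integral_zero, integral_indicator (measurableSet_norm_le (E := E) _)] at this
    exact this
  refine tendsto_integral_filter_of_dominated_convergence _
    (Eventually.of_forall fun r => (hk.integrable.aestronglyMeasurable.indicator
      (measurableSet_norm_le r))) (Eventually.of_forall fun r => ae_of_all _ fun z =>
      norm_indicator_le_norm_self _ z) hk.integrable.norm (ae_of_all _ fun z => ?_)
  rcases eq_or_ne z 0 with rfl | hz
  · have hzero : levyWeight γ (0 : E) = 0 := by
      simp [levyWeight_of_norm_le_one (z := (0 : E)) (zero_lt_one.trans hk.one_lt) hk.lt_two.le]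
    simp [indicator_apply, hzero]
  · refine tendsto_const_nhds.congr' ?_
    filter_upwards [Ioo_mem_nhdsGT (norm_pos_iff.2 hz)] with r hr
    exact (indicator_of_notMem (s := {z : E | ‖z‖ ≤ r}) (fun h => hr.2.not_ge h) _).symm

lemma IsLevyKernel.integrableOn_far (hk : IsLevyKernel γ k) (hr : 0 < r) {f : E → ℝ}
    (hf : Measurable f) {B : ℝ} (hB : ∀ z, |f z| ≤ B * (1 + ‖z‖)) :
    IntegrableOn (fun z => f z * k z) {z : E | r < ‖z‖} := by
  have hB0 : 0 ≤ B := by simpa using (abs_nonneg _).trans (hB 0)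
  refine ((hk.integrable.const_mul (B * (2 * (1 + (r ^ 2)⁻¹)))).integrableOn).mono'
    (hf.mul hk.measurable).aestronglyMeasurable
    ((ae_restrict_iff' (measurableSet_lt_norm r)).2 (ae_of_all _ fun z hz => ?_))
  rw [norm_mul, Real.norm_of_nonneg (hk.nonneg z), ← mul_assoc, mul_assoc B]
  refine mul_le_mul_of_nonneg_right ((hB z).trans ?_) (hk.nonneg z)
  exact mul_le_mul_of_nonneg_left
    (one_add_norm_le_levyWeight hk.one_lt.le hk.lt_two.le hr hz) hB0

lemma IsLevyKernel.innerMass_add_outerMass (hk : IsLevyKernel γ k) (r : ℝ) :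
    innerMass γ k r + outerMass γ k r = levyMass γ k := by
  have hcompl : {z : E | r < ‖z‖} = {z : E | ‖z‖ ≤ r}ᶜ := by
    ext z
    simp
  rw [outerMass, hcompl]
  exact integral_add_compl (measurableSet_norm_le r) hk.integrable

variable [NormedSpace ℝ E] [(volume : Measure E).IsNegInvariant]

lemma IsLevyKernel.setIntegral_linear_far (hk : IsLevyKernel γ k) (l : E →L[ℝ] ℝ) (r : ℝ) :
    ∫ z in {z : E | r < ‖z‖}, l z * k z = 0 := by
  rw [← integral_indicator (measurableSet_lt_norm r)]
  set f := indicator {z : E | r < ‖z‖} (fun z => l z * k z) with hf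
  have hodd : ∀ z, f (-z) = -f z := by
    intro z
    simp only [hf, indicator_apply, mem_ofPred_eq, norm_neg, hk.even, map_neg]
    split_ifs <;> ring
  have hreflect : ∫ z, f (-z) = ∫ z, f z := integral_neg_eq_self f volume
  simp_rw [hodd, integral_neg] at hreflect
  linarith

lemma IsLevyKernel.setIntegral_far_le (hk : IsLevyKernel γ k) (hr : 0 < r) {f : E → ℝ}
    (hf : Measurable f) {B : ℝ} (hB : ∀ z, |f z| ≤ B * (1 + ‖z‖)) (l : E →L[ℝ] ℝ) {c : ℝ}
    (hle : ∀ z, r < ‖z‖ → f z ≤ l z + c * levyWeight γ z) :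
    ∫ z in {z : E | r < ‖z‖}, f z * k z ≤ c * outerMass γ k r := by
  have hl : IntegrableOn (fun z => l z * k z) {z : E | r < ‖z‖} := by
    refine hk.integrableOn_far hr l.continuous.measurable (B := ‖l‖) fun z => ?_
    refine (l.le_opNorm z).trans (mul_le_mul_of_nonneg_left ?_ (norm_nonneg l))
    linarith
  have hw : IntegrableOn (fun z => c * (levyWeight γ z * k z)) {z : E | r < ‖z‖} :=
    (hk.integrable.const_mul c).integrableOn
  calc ∫ z in {z : E | r < ‖z‖}, f z * k z
      ≤ ∫ z in {z : E | r < ‖z‖}, (l z * k z + c * (levyWeight γ z * k z)) := by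
        refine setIntegral_mono_on (hk.integrableOn_far hr hf hB) (hl.add hw)
          (measurableSet_lt_norm r) fun z hz => ?_
        rw [← mul_assoc, ← add_mul]
        exact mul_le_mul_of_nonneg_right (hle z hz) (hk.nonneg z)
    _ = c * outerMass γ k r := by
        rw [outerMass, integral_add hl hw, hk.setIntegral_linear_far, zero_add, integral_const_mul]

end LevyKernel

section AnisotropicKernel

variable {N : ℕ} {s : ℝ} {g : EN N → ℝ}

lemma levyKernel_nonneg (hg : ∀ z : EN N, ‖z‖ = 1 → 0 ≤ g z) (hs : 0 < s) (z : EN N) :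
    0 ≤ levyKernel N s g z := by
  rcases eq_or_ne z 0 with rfl | hz
  · have hexp : -(N : ℝ) - 2 * s ≠ 0 := by linarith [(Nat.cast_nonneg N : (0 : ℝ) ≤ N)]
    simp [levyKernel, Real.zero_rpow hexp]
  · exact mul_nonneg (hg _ (norm_smul_inv_norm (𝕜 := ℝ) hz)) (Real.rpow_nonneg (norm_nonneg _) _)

lemma levyKernel_neg (hg : ∀ z, g (-z) = g z) (z : EN N) :
    levyKernel N s g (-z) = levyKernel N s g z := by
  unfold levyKernel
  rw [norm_neg, smul_neg, hg]

lemma measurable_levyKernel (hg : Continuous g) : Measurable (levyKernel N s g) := by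
  have := hg.measurable
  unfold levyKernel
  fun_prop

lemma exists_levyKernel_le (hg : Continuous g) :
    ∃ G : ℝ, ∀ z, levyKernel N s g z ≤ G * ‖z‖ ^ (-(N : ℝ) - 2 * s) := by
  obtain ⟨G, hG⟩ := (isCompact_closedBall (0 : EN N) 1).exists_bound_of_continuousOn
    hg.continuousOn
  refine ⟨G, fun z => mul_le_mul_of_nonneg_right ?_ (Real.rpow_nonneg (norm_nonneg _) _)⟩
  refine (le_abs_self _).trans (hG _ ?_)
  rw [mem_closedBall_zero_iff, norm_smul, norm_inv, norm_norm]
  exact inv_mul_le_one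

lemma levyKernel_smul {c : ℝ} (hc : 0 < c) (z : EN N) :
    levyKernel N s g (c • z) = c ^ (-(N : ℝ) - 2 * s) * levyKernel N s g z := by
  unfold levyKernel
  have hdir : ‖c • z‖⁻¹ • c • z = ‖z‖⁻¹ • z := by
    rw [norm_smul, Real.norm_of_nonneg hc.le, smul_smul, mul_inv, mul_right_comm,
      inv_mul_cancel₀ hc.ne', one_mul]
  rw [hdir, norm_smul, Real.norm_of_nonneg hc.le, Real.mul_rpow hc.le (norm_nonneg _)]
  ring

lemma integrableOn_rpow_mul_min_mul_rpow (n : ℕ) {a γ : ℝ} (ha : a < n + 2) (hγ : n + γ < a)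
    (hγ₂ : γ ≤ 2) :
    IntegrableOn (fun y : ℝ => y ^ ((n : ℝ) - 1) * (min (y ^ 2) (y ^ γ) * y ^ (-a))) (Ioi 0) := by
  rw [← Ioo_union_Ici_eq_Ioi (zero_lt_one (α := ℝ)), integrableOn_union,
    integrableOn_Ici_iff_integrableOn_Ioi]
  constructor
  · refine ((intervalIntegral.integrableOn_Ioo_rpow_iff (s := n + 1 - a) one_pos).2
      (by linarith)).congr_fun (fun y hy => ?_) measurableSet_Ioo
    have hmin : min (y ^ 2) (y ^ γ) = y ^ (2 : ℝ) := by
      rw [← Real.rpow_two]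
      exact min_eq_left (Real.rpow_le_rpow_of_exponent_ge hy.1 hy.2.le hγ₂)
    simp only [hmin, ← Real.rpow_add hy.1]
    congr 1
    ring
  · refine (integrableOn_Ioi_rpow_of_lt (a := n - 1 + γ - a) (by linarith) one_pos).congr_fun
      (fun y hy => ?_) measurableSet_Ioi
    have hy0 : 0 < y := zero_lt_one.trans hy
    have hmin : min (y ^ 2) (y ^ γ) = y ^ γ := by
      rw [← Real.rpow_two]
      exact min_eq_right (Real.rpow_le_rpow_of_exponent_le (le_of_lt hy) hγ₂)
    simp only [hmin, ← Real.rpow_add hy0]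
    congr 1
    ring

lemma integrable_levyWeight_mul_norm_rpow {γ : ℝ} (hs : s < 1) (hγ : γ < 2 * s) :
    Integrable (fun z : EN N => levyWeight γ z * ‖z‖ ^ (-(N : ℝ) - 2 * s)) := by
  rcases Nat.eq_zero_or_pos N with rfl | hN
  · exact Integrable.of_finite
  have : Nonempty (Fin N) := ⟨⟨0, hN⟩⟩
  refine (integrable_fun_norm_addHaar (volume : Measure (EN N)) (f := fun y : ℝ =>
    min (y ^ 2) (y ^ γ) * y ^ (-(N : ℝ) - 2 * s))).2 ?_
  rw [finrank_euclideanSpace_fin]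
  refine (integrableOn_rpow_mul_min_mul_rpow N (a := N + 2 * s) (γ := γ) (by linarith)
    (by linarith) (by linarith)).congr_fun (fun y _ => ?_) measurableSet_Ioi
  have hexp : (N : ℝ) - 1 = ((N - 1 : ℕ) : ℝ) := by
    push_cast [hN]
    ring
  simp only [smul_eq_mul, hexp, Real.rpow_natCast, neg_add']

lemma isLevyKernel_levyKernel {γ : ℝ} (hg : Continuous g) (hg₀ : ∀ z : EN N, ‖z‖ = 1 → 0 ≤ g z)
    (hgeven : ∀ z, g (-z) = g z) (hs : s < 1) (hγ₁ : 1 < γ) (hγ : γ < 2 * s) :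
    IsLevyKernel γ (levyKernel N s g) where
  one_lt := hγ₁
  lt_two := by linarith
  nonneg := levyKernel_nonneg hg₀ (by linarith)
  even := levyKernel_neg hgeven
  measurable := measurable_levyKernel hg
  integrable := by
    obtain ⟨G, hG⟩ := exists_levyKernel_le (s := s) hg
    refine ((integrable_levyWeight_mul_norm_rpow hs hγ).const_mul G).mono'
      ((measurable_levyWeight γ).mul (measurable_levyKernel hg)).aestronglyMeasurable
      (ae_of_all _ fun z => ?_)
    have hk := levyKernel_nonneg (s := s) hg₀ (by linarith) z
    rw [Real.norm_of_nonneg (mul_nonneg (levyWeight_nonneg _ _) hk), mul_left_comm]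
    exact mul_le_mul_of_nonneg_left (hG z) (levyWeight_nonneg _ _)

end AnisotropicKernel

/-! ### One-sided bounds for the Lévy operator -/

section LevyOperator

variable {N : ℕ} {s γ r B c : ℝ} {g u v φ : EN N → ℝ} {x y : EN N}

lemma levyI1_neg (φ : EN N → ℝ) (r : ℝ) (x : EN N) :
    levyI1 N s g (fun y => -φ y) r x = -levyI1 N s g φ r x := by
  unfold levyI1
  rw [← integral_neg]
  congr 1 with z
  rw [fderiv_fun_neg, neg_apply]
  ring

lemma levyI2_neg (u : EN N → ℝ) (r : ℝ) (x : EN N) :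
    levyI2 N s g (fun y => -u y) r x = -levyI2 N s g u r x := by
  unfold levyI2
  rw [← integral_neg]
  congr 1 with z
  ring

-- The junk value `0` of a divergent integral also satisfies the bound.
lemma levyI1_le (hk : IsLevyKernel γ (levyKernel N s g)) (hc : 0 ≤ c)
    (h : ∀ z, ‖z‖ ≤ r → φ (x + z) - φ x - fderiv ℝ φ x z ≤ c * levyWeight γ z) :
    levyI1 N s g φ r x ≤ c * innerMass γ (levyKernel N s g) r := by
  unfold levyI1 innerMass
  rw [← integral_const_mul]
  by_cases hφ : IntegrableOn (fun z => (φ (x + z) - φ x - fderiv ℝ φ x z) * levyKernel N s g z)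
      {z : EN N | ‖z‖ ≤ r}
  · refine setIntegral_mono_on hφ (hk.integrable.const_mul c).integrableOn
      (measurableSet_norm_le r) fun z hz => ?_
    rw [← mul_assoc]
    exact mul_le_mul_of_nonneg_right (h z hz) (hk.nonneg z)
  · rw [integral_undef hφ]
    exact integral_nonneg fun z =>
      mul_nonneg hc (mul_nonneg (levyWeight_nonneg γ z) (hk.nonneg z))

lemma abs_increment_le (hB : ∀ z, |u z| ≤ B) (x z : EN N) :
    |u (x + z) - u x| ≤ 2 * B * (1 + ‖z‖) := by
  have hB0 : 0 ≤ B := (abs_nonneg _).trans (hB 0)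
  calc |u (x + z) - u x| ≤ |u (x + z)| + |u x| := abs_sub _ _
    _ ≤ 2 * B := by linarith [hB (x + z), hB x]
    _ ≤ 2 * B * (1 + ‖z‖) := le_mul_of_one_le_right (by linarith) (by linarith [norm_nonneg z])

lemma levyI2_sub_levyI2_le (hk : IsLevyKernel γ (levyKernel N s g)) (hr : 0 < r)
    (hu : Measurable u) (huB : ∀ z, |u z| ≤ B) (hv : Measurable v) (hvB : ∀ z, |v z| ≤ B)
    (l : EN N →L[ℝ] ℝ)
    (h : ∀ z, u (x + z) - u x - (v (y + z) - v y) ≤ l z + c * levyWeight γ z) :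
    levyI2 N s g u r x - levyI2 N s g v r y ≤ c * outerMass γ (levyKernel N s g) r := by
  have hum : Measurable fun z => u (x + z) - u x := by fun_prop
  have hvm : Measurable fun z => v (y + z) - v y := by fun_prop
  have huint := hk.integrableOn_far hr hum (abs_increment_le huB x)
  have hvint := hk.integrableOn_far hr hvm (abs_increment_le hvB y)
  unfold levyI2
  rw [← integral_sub huint hvint]
  simp_rw [← sub_mul]
  refine hk.setIntegral_far_le hr (hum.sub hvm) (B := 2 * B + 2 * B) (fun z => ?_) l
    fun z _ => h z
  rw [add_mul]
  exact (abs_sub _ _).trans (add_le_add (abs_increment_le huB x z) (abs_increment_le hvB y z))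

lemma levyI2_le (hk : IsLevyKernel γ (levyKernel N s g)) (hr : 0 < r)
    (hu : Measurable u) (huB : ∀ z, |u z| ≤ B) (l : EN N →L[ℝ] ℝ)
    (h : ∀ z, u (x + z) - u x ≤ l z + c * levyWeight γ z) :
    levyI2 N s g u r x ≤ c * outerMass γ (levyKernel N s g) r :=
  hk.setIntegral_far_le hr (by fun_prop) (abs_increment_le huB x) l fun z _ => h z

lemma levyI1_add_levyI2_le (hk : IsLevyKernel γ (levyKernel N s g)) (hr : 0 < r)
    (hu : Measurable u) (huB : ∀ z, |u z| ≤ B) (hc : 0 ≤ c)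
    (hφ : ∀ z, φ (x + z) - φ x - fderiv ℝ φ x z ≤ c * levyWeight γ z)
    (huφ : ∀ z, u (x + z) - u x ≤ φ (x + z) - φ x) :
    levyI1 N s g φ r x + levyI2 N s g u r x ≤ c * levyMass γ (levyKernel N s g) := by
  have hI2 := levyI2_le (x := x) (c := c) hk hr hu huB (fderiv ℝ φ x) fun z => by
    linarith [hφ z, huφ z]
  calc levyI1 N s g φ r x + levyI2 N s g u r x
      ≤ c * innerMass γ (levyKernel N s g) r + c * outerMass γ (levyKernel N s g) r :=
        add_le_add (levyI1_le hk hc fun z _ => hφ z) hI2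
    _ = c * levyMass γ (levyKernel N s g) := by rw [← mul_add, hk.innerMass_add_outerMass]

end LevyOperator

/-! ### Powers of the Japanese bracket -/

section Bracket

variable {E : Type*} [NormedAddCommGroup E] {c γ : ℝ}

/-- The smooth penalization `⟨x⟩^c = (1 + |x|²)^{c/2}`, of growth `|x|^c` at infinity. -/
noncomputable def bracket (c : ℝ) (x : E) : ℝ := (1 + ‖x‖ ^ 2) ^ (c / 2)

lemma one_le_one_add_norm_sq (x : E) : 1 ≤ 1 + ‖x‖ ^ 2 := by linarith [sq_nonneg ‖x‖]

lemma one_le_bracket (hc : 0 ≤ c) (x : E) : 1 ≤ bracket c x :=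
  Real.one_le_rpow (one_le_one_add_norm_sq x) (by linarith)

lemma sq_rpow_half {a : ℝ} (ha : 0 ≤ a) : (a ^ 2) ^ (c / 2) = a ^ c := by
  rw [← Real.rpow_natCast, ← Real.rpow_mul ha]
  congr 1
  push_cast
  ring

lemma norm_rpow_le_bracket (hc : 0 ≤ c) (x : E) : ‖x‖ ^ c ≤ bracket c x := by
  rw [← sq_rpow_half (norm_nonneg x)]
  exact Real.rpow_le_rpow (by positivity) (by linarith) (by linarith)

lemma norm_le_bracket (hc : 1 ≤ c) (x : E) : ‖x‖ ≤ bracket c x := by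
  rcases le_total ‖x‖ 1 with h | h
  · exact h.trans (one_le_bracket (by linarith) x)
  · exact (Real.self_le_rpow_of_one_le h hc).trans (norm_rpow_le_bracket (by linarith) x)

lemma bracket_le_one_add_norm_sq (hc : c ≤ 2) (x : E) : bracket c x ≤ 1 + ‖x‖ ^ 2 :=
  (Real.rpow_le_rpow_of_exponent_le (one_le_one_add_norm_sq x) (by linarith)).trans_eq
    (Real.rpow_one _)

lemma bracket_one_le_one_add_norm (x : E) : bracket 1 x ≤ 1 + ‖x‖ := by
  rw [bracket, ← Real.sqrt_eq_rpow, Real.sqrt_le_left (by positivity)]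
  nlinarith [norm_nonneg x]

lemma exists_norm_le_of_bracket_le (hγ : 1 < γ) {κ : ℝ} (hκ : 0 < κ) (C : ℝ) :
    ∃ R : ℝ, ∀ x : E, κ * bracket γ x ≤ C * (1 + ‖x‖) → ‖x‖ ≤ R := by
  obtain ⟨R, hR⟩ := ((tendsto_rpow_atTop (y := γ - 1) (by linarith)).eventually
    (eventually_gt_atTop (2 * |C| / κ))).exists_forall_of_atTop
  refine ⟨max R 1, fun x hx => ?_⟩
  by_contra! hlarge
  have hx1 : 1 < ‖x‖ := (le_max_right _ _).trans_lt hlarge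
  have hpow : ‖x‖ ^ γ = ‖x‖ ^ (γ - 1) * ‖x‖ := by
    rw [← Real.rpow_add_one (by positivity), sub_add_cancel]
  have hslope : 2 * |C| < ‖x‖ ^ (γ - 1) * κ :=
    (div_lt_iff₀ hκ).1 (hR ‖x‖ ((le_max_left _ _).trans hlarge.le))
  have hupper : κ * ‖x‖ ^ γ ≤ 2 * |C| * ‖x‖ :=
    calc κ * ‖x‖ ^ γ ≤ κ * bracket γ x := by
          gcongr
          exact norm_rpow_le_bracket (by linarith) x
      _ ≤ |C| * (1 + ‖x‖) := hx.trans (by gcongr; exact le_abs_self C)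
      _ ≤ 2 * |C| * ‖x‖ := by nlinarith [abs_nonneg C]
  rw [hpow] at hupper
  nlinarith

variable [InnerProductSpace ℝ E]

/-- The derivative of `bracket c`. -/
noncomputable def bracketDeriv (c : ℝ) (x : E) : E →L[ℝ] ℝ :=
  (c * (1 + ‖x‖ ^ 2) ^ (c / 2 - 1)) • innerSL ℝ x

lemma contDiff_bracket (c : ℝ) : ContDiff ℝ 2 (bracket c : E → ℝ) :=
  ContDiff.rpow_const_of_ne (contDiff_const.add (contDiff_norm_sq ℝ))
    fun x => by linarith [one_le_one_add_norm_sq x]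

lemma hasFDerivAt_bracket (c : ℝ) (x : E) : HasFDerivAt (bracket c) (bracketDeriv c x) x := by
  have hbase : HasFDerivAt (fun x : E => 1 + ‖x‖ ^ 2) (2 • innerSL ℝ x) x :=
    (hasStrictFDerivAt_norm_sq x).hasFDerivAt.const_add 1
  refine (hbase.rpow_const (p := c / 2)
    (Or.inl (by linarith [one_le_one_add_norm_sq x]))).congr_fderiv ?_
  ext z
  simp only [bracketDeriv, smul_apply, smul_eq_mul, nsmul_eq_mul]
  push_cast
  ring

-- Concavity of `q ↦ q^{c/2}`, in the form of Bernoulli's inequality.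
lemma bracket_add_le_sq (hc₀ : 0 ≤ c) (hc : c ≤ 2) (y z : E) :
    bracket c (y + z) - bracket c y - bracketDeriv c y z ≤ ‖z‖ ^ 2 := by
  set q := 1 + ‖y‖ ^ 2 with hq
  set h := 2 * ⟪y, z⟫ + ‖z‖ ^ 2 with hh
  have hq1 : 1 ≤ q := one_le_one_add_norm_sq y
  have hq0 : 0 < q := by linarith
  have hexpand : 1 + ‖y + z‖ ^ 2 = q * (1 + h / q) := by
    rw [norm_add_sq_real]
    field_simp
    ring
  have hnonneg : 0 ≤ 1 + h / q := by
    refine nonneg_of_mul_nonneg_right (a := q) ?_ hq0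
    rw [← hexpand]
    positivity
  have hbernoulli : bracket c (y + z) ≤ q ^ (c / 2) + c / 2 * (q ^ (c / 2 - 1) * h) := by
    calc bracket c (y + z) = q ^ (c / 2) * (1 + h / q) ^ (c / 2) := by
          rw [bracket, hexpand, Real.mul_rpow hq0.le hnonneg]
      _ ≤ q ^ (c / 2) * (1 + c / 2 * (h / q)) :=
          mul_le_mul_of_nonneg_left (rpow_one_add_le_one_add_mul_self (by linarith) (by linarith)
            (by linarith)) (Real.rpow_nonneg hq0.le _)
      _ = q ^ (c / 2) + c / 2 * (q ^ (c / 2 - 1) * h) := by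
          rw [Real.rpow_sub hq0, Real.rpow_one]
          ring
  have hderiv : bracketDeriv c y z = c * q ^ (c / 2 - 1) * ⟪y, z⟫ := by simp [bracketDeriv, hq]
  have hpow : q ^ (c / 2 - 1) ≤ 1 := Real.rpow_le_one_of_one_le_of_nonpos hq1 (by linarith)
  have hquad : c / 2 * q ^ (c / 2 - 1) * ‖z‖ ^ 2 ≤ ‖z‖ ^ 2 :=
    mul_le_of_le_one_left (sq_nonneg _)
      (mul_le_one₀ (by linarith) (Real.rpow_nonneg hq0.le _) hpow)
  have hval : bracket c y = q ^ (c / 2) := rfl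
  rw [hh] at hbernoulli
  linarith

lemma bracket_add_le (hc₀ : 0 ≤ c) (hc : c ≤ 2) (y z : E) :
    bracket c (y + z) ≤ 2 * bracket c y + 2 * ‖z‖ ^ c := by
  have hbase : 1 + ‖y + z‖ ^ 2 ≤ 2 * (1 + ‖y‖ ^ 2) + 2 * ‖z‖ ^ 2 := by
    nlinarith [parallelogram_law_with_norm ℝ y z, sq_nonneg ‖y - z‖]
  have htwo : (2 : ℝ) ^ (c / 2) ≤ 2 := by
    simpa using Real.rpow_le_rpow_of_exponent_le (x := 2) (by norm_num)
      (show c / 2 ≤ 1 by linarith)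
  have hy : 0 ≤ bracket c y := by linarith [one_le_bracket hc₀ y]
  calc bracket c (y + z) ≤ (2 * (1 + ‖y‖ ^ 2) + 2 * ‖z‖ ^ 2) ^ (c / 2) :=
        Real.rpow_le_rpow (by positivity) hbase (by linarith)
    _ ≤ (2 * (1 + ‖y‖ ^ 2)) ^ (c / 2) + (2 * ‖z‖ ^ 2) ^ (c / 2) :=
        Real.rpow_add_le_add_rpow (by positivity) (by positivity) (by linarith) (by linarith)
    _ = 2 ^ (c / 2) * bracket c y + 2 ^ (c / 2) * ‖z‖ ^ c := by
        rw [Real.mul_rpow (by norm_num) (by positivity),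
          Real.mul_rpow (by norm_num) (by positivity), sq_rpow_half (norm_nonneg z), bracket]
    _ ≤ 2 * bracket c y + 2 * ‖z‖ ^ c := by gcongr

lemma norm_bracketDeriv (hc₀ : 0 ≤ c) (y : E) :
    ‖bracketDeriv c y‖ = c * (1 + ‖y‖ ^ 2) ^ (c / 2 - 1) * ‖y‖ := by
  rw [bracketDeriv, norm_smul, innerSL_apply_norm, Real.norm_of_nonneg (by positivity)]

lemma norm_bracketDeriv_le (hc₀ : 0 ≤ c) (hc : c ≤ 2) (y : E) :
    ‖bracketDeriv c y‖ ≤ 2 * bracket c y := by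
  have hq0 : 0 < 1 + ‖y‖ ^ 2 := by positivity
  calc ‖bracketDeriv c y‖ = c * (1 + ‖y‖ ^ 2) ^ (c / 2 - 1) * ‖y‖ := norm_bracketDeriv hc₀ y
    _ ≤ 2 * (1 + ‖y‖ ^ 2) ^ (c / 2 - 1) * (1 + ‖y‖ ^ 2) := by
        gcongr
        nlinarith [sq_nonneg (‖y‖ - 1)]
    _ = 2 * bracket c y := by
        rw [mul_assoc, Real.rpow_sub hq0, Real.rpow_one, div_mul_cancel₀ _ hq0.ne', bracket]

lemma norm_bracketDeriv_one_le (y : E) : ‖bracketDeriv 1 y‖ ≤ 1 := by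
  have hq0 : 0 < 1 + ‖y‖ ^ 2 := by positivity
  rw [norm_bracketDeriv zero_le_one, show (1 / 2 - 1 : ℝ) = -(1 / 2) by norm_num,
    Real.rpow_neg hq0.le, ← Real.sqrt_eq_rpow, one_mul, ← div_eq_inv_mul,
    div_le_one (Real.sqrt_pos.2 hq0)]
  exact Real.le_sqrt_of_sq_le (by linarith)

lemma abs_bracket_one_sub_le (x y : E) : |bracket 1 y - bracket 1 x| ≤ ‖y - x‖ := by
  simpa using Convex.norm_image_sub_le_of_norm_hasFDerivWithin_le (𝕜 := ℝ) (s := univ) (x := x)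
    (y := y) (fun x _ => (hasFDerivAt_bracket 1 x).hasFDerivWithinAt)
    (fun x _ => norm_bracketDeriv_one_le x) convex_univ (mem_univ _) (mem_univ _)

-- The factor `bracket γ y` makes this bound usable in a Grönwall argument.
lemma bracket_add_le_levyWeight (hγ₁ : 1 ≤ γ) (hγ₂ : γ ≤ 2) (y z : E) :
    bracket γ (y + z) - bracket γ y - bracketDeriv γ y z ≤ 5 * bracket γ y * levyWeight γ z := by
  have hone := one_le_bracket (c := γ) (by linarith) y
  refine le_mul_levyWeight (by linarith) hγ₂ (fun _ => ?_) (fun hz => ?_)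
  · nlinarith [bracket_add_le_sq (c := γ) (by linarith) hγ₂ y z, sq_nonneg ‖z‖]
  · have hpow : ‖z‖ ≤ ‖z‖ ^ γ := Real.self_le_rpow_of_one_le hz hγ₁
    have hlin : -bracketDeriv γ y z ≤ 2 * bracket γ y * ‖z‖ ^ γ :=
      calc -bracketDeriv γ y z ≤ ‖bracketDeriv γ y‖ * ‖z‖ :=
            (neg_le_abs _).trans ((bracketDeriv γ y).le_opNorm z)
        _ ≤ 2 * bracket γ y * ‖z‖ ^ γ := by
            gcongr
            exact norm_bracketDeriv_le (by linarith) hγ₂ y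
    nlinarith [bracket_add_le (c := γ) (by linarith) hγ₂ y z]

lemma bracket_one_add_le_levyWeight (hγ₁ : 1 ≤ γ) (hγ₂ : γ ≤ 2) (y z : E) :
    bracket 1 (y + z) - bracket 1 y - bracketDeriv 1 y z ≤ 2 * levyWeight γ z := by
  refine le_mul_levyWeight (by linarith) hγ₂ (fun _ => ?_) (fun hz => ?_)
  · nlinarith [bracket_add_le_sq (c := 1) (by linarith) (by norm_num) y z, sq_nonneg ‖z‖]
  · have hpow : ‖z‖ ≤ ‖z‖ ^ γ := Real.self_le_rpow_of_one_le hz hγ₁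
    have hincr : bracket 1 (y + z) - bracket 1 y ≤ ‖z‖ := by
      simpa using (le_abs_self _).trans (abs_bracket_one_sub_le y (y + z))
    have hlin : -bracketDeriv 1 y z ≤ 1 * ‖z‖ := (neg_le_abs _).trans
      ((bracketDeriv 1 y).le_of_opNorm_le (norm_bracketDeriv_one_le y) z)
    linarith

end Bracket

/-! ### Bounded `C²` data -/

section Datum

variable {E : Type*} [NormedAddCommGroup E] [NormedSpace ℝ E] {γ M : ℝ} {f : E → ℝ}

/-- `f` is `C²`, and `f` and its first two derivatives are bounded by `M`. -/
structure HasC2Bound (M : ℝ) (f : E → ℝ) : Prop where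
  contDiff : ContDiff ℝ 2 f
  abs_le : ∀ x, |f x| ≤ M
  norm_fderiv_le : ∀ x, ‖fderiv ℝ f x‖ ≤ M
  norm_fderiv_fderiv_le : ∀ x, ‖fderiv ℝ (fderiv ℝ f) x‖ ≤ M

lemma HasC2Bound.nonneg (hf : HasC2Bound M f) : 0 ≤ M := (abs_nonneg _).trans (hf.abs_le 0)

lemma HasC2Bound.differentiable (hf : HasC2Bound M f) : Differentiable ℝ f :=
  hf.contDiff.differentiable two_ne_zero

lemma HasC2Bound.neg (hf : HasC2Bound M f) : HasC2Bound M (fun x => -f x) where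
  contDiff := hf.contDiff.neg
  abs_le x := by simpa only [abs_neg] using hf.abs_le x
  norm_fderiv_le x := by simpa only [fderiv_fun_neg, norm_neg] using hf.norm_fderiv_le x
  norm_fderiv_fderiv_le x := by
    have hderiv : fderiv ℝ (fun x => -f x) = fun x => -fderiv ℝ f x :=
      funext fun _ => fderiv_fun_neg
    rw [hderiv, fderiv_fun_neg]
    exact (norm_neg (E := E →L[ℝ] E →L[ℝ] ℝ) _).trans_le (hf.norm_fderiv_fderiv_le x)

lemma HasC2Bound.sub_le (hf : HasC2Bound M f) (x y : E) : f y - f x ≤ M * ‖y - x‖ :=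
  (le_abs_self _).trans (Convex.norm_image_sub_le_of_norm_fderiv_le (𝕜 := ℝ)
    (fun x _ => hf.differentiable x) (fun x _ => hf.norm_fderiv_le x) convex_univ
    (mem_univ x) (mem_univ y))

lemma HasC2Bound.add_le_sq (hf : HasC2Bound M f) (y z : E) :
    f (y + z) - f y - fderiv ℝ f y z ≤ M * ‖z‖ ^ 2 := by
  have hdiff : Differentiable ℝ (fderiv ℝ f) :=
    (hf.contDiff.fderiv_right (m := 1) (by norm_num)).differentiable one_ne_zero
  have hlip : ∀ x ∈ closedBall y ‖z‖, ‖fderiv ℝ f x - fderiv ℝ f y‖ ≤ M * ‖z‖ := fun x hx =>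
    (Convex.norm_image_sub_le_of_norm_fderiv_le (𝕜 := ℝ) (fun x _ => hdiff x)
      (fun x _ => hf.norm_fderiv_fderiv_le x) convex_univ (mem_univ y) (mem_univ x)).trans
      (mul_le_mul_of_nonneg_left (mem_closedBall_iff_norm.1 hx) hf.nonneg)
  have htaylor := Convex.norm_image_sub_le_of_norm_fderiv_le' (𝕜 := ℝ) (f := f)
    (fun x _ => hf.differentiable x) hlip (convex_closedBall y ‖z‖)
    (mem_closedBall_self (norm_nonneg z)) (show y + z ∈ closedBall y ‖z‖ by simp)
  rw [add_sub_cancel_left, mul_assoc, ← pow_two] at htaylor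
  exact (le_abs_self _).trans htaylor

lemma HasC2Bound.add_le_levyWeight (hf : HasC2Bound M f) (hγ₁ : 1 ≤ γ) (hγ₂ : γ ≤ 2) (y z : E) :
    f (y + z) - f y - fderiv ℝ f y z ≤ 2 * M * levyWeight γ z := by
  refine le_mul_levyWeight (by linarith) hγ₂ (fun _ => ?_) (fun hz => ?_)
  · nlinarith [hf.add_le_sq y z, mul_nonneg hf.nonneg (sq_nonneg ‖z‖)]
  · have hincr := hf.sub_le y (y + z)
    rw [add_sub_cancel_left] at hincr
    have hlin : -fderiv ℝ f y z ≤ M * ‖z‖ :=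
      (neg_le_abs _).trans ((fderiv ℝ f y).le_of_opNorm_le (hf.norm_fderiv_le y) z)
    have hpow : M * ‖z‖ ≤ M * ‖z‖ ^ γ :=
      mul_le_mul_of_nonneg_left (Real.self_le_rpow_of_one_le hz hγ₁) hf.nonneg
    linarith

lemma H4.exists_hasC2Bound {N : ℕ} {u₀ : EN N → ℝ} (h : H4 N u₀) : ∃ M, HasC2Bound M u₀ :=
  let ⟨hc, M, hM⟩ := h
  ⟨M, hc, fun x => (hM x).1, fun x => (hM x).2.1, fun x => (hM x).2.2⟩

end Datum

/-! ### Viscosity inequalities at global extrema -/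

section JointContinuity

variable {E : Type*} [TopologicalSpace E] {u : ℝ → E → ℝ}

/-- Joint continuity of `u` on `[0, ∞) × E`. -/
def JointlyContinuous (u : ℝ → E → ℝ) : Prop :=
  ContinuousOn (fun q : ℝ × E => u q.1 q.2) (Ici 0 ×ˢ univ)

lemma JointlyContinuous.neg (hu : JointlyContinuous u) : JointlyContinuous fun t x => -u t x :=
  ContinuousOn.neg hu

lemma JointlyContinuous.continuous (hu : JointlyContinuous u) {t : ℝ} (ht : 0 ≤ t) :
    Continuous (u t) :=
  ContinuousOn.comp_continuous (f := fun x : E => (t, x)) (g := fun q : ℝ × E => u q.1 q.2) hu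
    (by fun_prop) fun x => ⟨ht, mem_univ x⟩

lemma JointlyContinuous.continuousOn_time (hu : JointlyContinuous u) (x : E) :
    ContinuousOn (fun t => u t x) (Ici 0) :=
  ContinuousOn.comp hu (f := fun t : ℝ => (t, x)) (by fun_prop) fun _ ht => ⟨ht, mem_univ x⟩

lemma JointlyContinuous.continuousOn_Icc (hu : JointlyContinuous u) (S : ℝ) :
    ContinuousOn (fun q : ℝ × E => u q.1 q.2) (Icc 0 S ×ˢ univ) :=
  ContinuousOn.mono hu (prod_mono Icc_subset_Ici_self subset_rfl)

end JointContinuity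

lemma JointlyContinuous.exists_abs_le_Icc {N : ℕ} {u : ℝ → EN N → ℝ} (hu : JointlyContinuous u)
    (hb : LocBddPos N u) {T : ℝ} (hT : 0 < T) : ∃ B, ∀ t ∈ Icc (0 : ℝ) T, ∀ x, |u t x| ≤ B := by
  obtain ⟨B, hB⟩ := hb T hT
  refine ⟨B, fun t ht x => ?_⟩
  rcases ht.1.eq_or_lt with rfl | h
  · have hlim : Tendsto (fun t => |u t x|) (nhdsWithin 0 (Ioi 0)) (nhds |u 0 x|) :=
      ((hu.continuousOn_time x 0 self_mem_Ici).mono Ioi_subset_Ici_self).abs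
    refine le_of_tendsto hlim ?_
    filter_upwards [Ioc_mem_nhdsGT hT] with t ht using hB t ht x
  · exact hB t ⟨h, ht.2⟩ x

lemma exists_isMaxOn_of_norm_le {E : Type*} [NormedAddCommGroup E] [ProperSpace E] {Z : Set E}
    (hZ : IsClosed Z) {f : E → ℝ} (hf : ContinuousOn f Z) {a₀ : E} (ha₀ : a₀ ∈ Z) {R : ℝ}
    (hR : ∀ a ∈ Z, f a₀ ≤ f a → ‖a‖ ≤ R) : ∃ a ∈ Z, IsMaxOn f Z a := by
  have hbdd : ∀ᶠ a in cocompact E ⊓ 𝓟 Z, f a ≤ f a₀ := by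
    rw [eventually_inf_principal]
    filter_upwards [(isCompact_closedBall (0 : E) R).compl_mem_cocompact] with a ha haZ
    by_contra! h
    exact ha (mem_closedBall_zero_iff.2 (hR a haZ h.le))
  exact hf.exists_isMaxOn' hZ ha₀ hbdd

section TestAtExtremum

variable {N : ℕ} {s : ℝ} {g : EN N → ℝ} {F : ℝ → EN N → ℝ → (EN N →L[ℝ] ℝ) → ℝ → ℝ}
  {u₀ : EN N → ℝ} {u φ : ℝ → EN N → ℝ} {S t₀ r : ℝ} {x₀ : EN N}

lemma exists_Ioo_subset_Icc {a b t : ℝ} (ht : t ∈ Ioo a b) :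
    ∃ τ, 0 < τ ∧ τ < t - a ∧ Ioo (t - τ) (t + τ) ⊆ Icc a b := by
  have hpos : 0 < min (t - a) (b - t) := lt_min (sub_pos.2 ht.1) (sub_pos.2 ht.2)
  have hleft := min_le_left (t - a) (b - t)
  have hright := min_le_right (t - a) (b - t)
  exact ⟨min (t - a) (b - t) / 2, by linarith, by linarith,
    fun t' ht' => ⟨by linarith [ht'.1], by linarith [ht'.2]⟩⟩

lemma IsSubsol.deriv_le_of_isMax (hu : IsSubsol N s g F u₀ u) (ht₀ : t₀ ∈ Ioo 0 S)
    (hφ : ContDiff ℝ 2 fun q : ℝ × EN N => φ q.1 q.2) (hr : 0 < r)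
    (hmax : ∀ t ∈ Icc 0 S, ∀ x, u t x - φ t x ≤ u t₀ x₀ - φ t₀ x₀) :
    deriv (fun t => φ t x₀) t₀ ≤ F t₀ x₀ (u t₀ x₀) (fderiv ℝ (φ t₀) x₀)
      (levyI1 N s g (φ t₀) r x₀ + levyI2 N s g (u t₀) r x₀) := by
  obtain ⟨τ, hτ, hτt, hsub⟩ := exists_Ioo_subset_Icc ht₀
  rw [sub_zero] at hτt
  exact sub_nonpos.1 (hu.2.2.2 t₀ x₀ ht₀.1 φ hφ τ r hτ hτt hr fun t x ht _ => hmax t (hsub ht) x)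

lemma IsSupersol.le_deriv_of_isMin (hu : IsSupersol N s g F u₀ u) (ht₀ : t₀ ∈ Ioo 0 S)
    (hφ : ContDiff ℝ 2 fun q : ℝ × EN N => φ q.1 q.2) (hr : 0 < r)
    (hmin : ∀ t ∈ Icc 0 S, ∀ x, u t₀ x₀ - φ t₀ x₀ ≤ u t x - φ t x) :
    F t₀ x₀ (u t₀ x₀) (fderiv ℝ (φ t₀) x₀)
      (levyI1 N s g (φ t₀) r x₀ + levyI2 N s g (u t₀) r x₀) ≤ deriv (fun t => φ t x₀) t₀ := by
  obtain ⟨τ, hτ, hτt, hsub⟩ := exists_Ioo_subset_Icc ht₀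
  rw [sub_zero] at hτt
  exact sub_nonneg.1 (hu.2.2.2 t₀ x₀ ht₀.1 φ hφ τ r hτ hτt hr fun t x ht _ => hmin t (hsub ht) x)

end TestAtExtremum

/-! ### Reflection -/

section Reflection

variable {N : ℕ} {s : ℝ} {g : EN N → ℝ} {F : ℝ → EN N → ℝ → (EN N →L[ℝ] ℝ) → ℝ → ℝ}
  {u₀ : EN N → ℝ} {u : ℝ → EN N → ℝ}

/-- The nonlinearity of the equation solved by `-u` when `u` solves the equation of `F`. -/
def reflectRHS (F : ℝ → EN N → ℝ → (EN N →L[ℝ] ℝ) → ℝ → ℝ) :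
    ℝ → EN N → ℝ → (EN N →L[ℝ] ℝ) → ℝ → ℝ :=
  fun t x v q I => -F t x (-v) (-q) (-I)

lemma LocBddPos.neg (h : LocBddPos N u) : LocBddPos N fun t x => -u t x := by
  simpa only [LocBddPos, abs_neg] using h

lemma IsSupersol.neg (h : IsSupersol N s g F u₀ u) :
    IsSubsol N s g (reflectRHS F) (fun x => -u₀ x) (fun t x => -u t x) := by
  obtain ⟨hlsc, hb, hinit, hv⟩ := h
  refine ⟨fun q hq y hy => ?_, hb.neg, fun x => neg_le_neg (hinit x), ?_⟩
  · filter_upwards [hlsc q hq (-y) (by linarith)] with a ha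
    linarith
  · intro t₀ x₀ ht₀ φ hφ τ r hτ hτt hr hmax
    have hineq := hv t₀ x₀ ht₀ (fun t x => -φ t x) hφ.neg τ r hτ hτt hr fun t x ht hx => by
      linarith [hmax t x ht hx]
    rw [deriv.fun_neg, fderiv_fun_neg, levyI1_neg] at hineq
    simp only [reflectRHS]
    rw [levyI2_neg, neg_neg, neg_add, neg_neg]
    linarith

lemma IsSubsol.neg (h : IsSubsol N s g F u₀ u) :
    IsSupersol N s g (reflectRHS F) (fun x => -u₀ x) (fun t x => -u t x) := by
  obtain ⟨husc, hb, hinit, hv⟩ := h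
  refine ⟨fun q hq y hy => ?_, hb.neg, fun x => neg_le_neg (hinit x), ?_⟩
  · filter_upwards [husc q hq (-y) (by linarith)] with a ha
    linarith
  · intro t₀ x₀ ht₀ φ hφ τ r hτ hτt hr hmin
    have hineq := hv t₀ x₀ ht₀ (fun t x => -φ t x) hφ.neg τ r hτ hτt hr fun t x ht hx => by
      linarith [hmin t x ht hx]
    rw [deriv.fun_neg, fderiv_fun_neg, levyI1_neg] at hineq
    simp only [reflectRHS]
    rw [levyI2_neg, neg_neg, neg_add, neg_neg]
    linarith

lemma IsSol.neg (h : IsSol N s g F u₀ u) :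
    IsSol N s g (reflectRHS F) (fun x => -u₀ x) (fun t x => -u t x) :=
  ⟨ContinuousOn.neg h.1, h.2.2.neg, h.2.1.neg⟩

end Reflection

/-! ### Linear growth of subsolutions in time -/

section Barrier

variable {N : ℕ} {s γ : ℝ} {g : EN N → ℝ} {F : ℝ → EN N → ℝ → (EN N →L[ℝ] ℝ) → ℝ → ℝ}
  {u₀ : EN N → ℝ} {u : ℝ → EN N → ℝ} {M B C β a T : ℝ}

/-- A strict supersolution above the datum `u₀`. The term `β * bracket 1 x` confines the maxima of
`u - barrier` in space, and the exponential, which is at most `β` before the time `T`, keeps them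
away from the time `T + 1`. -/
noncomputable def barrier (u₀ : EN N → ℝ) (C β a T : ℝ) (t : ℝ) (x : EN N) : ℝ :=
  u₀ x + (C + 1) * t + β * bracket 1 x + β * Real.exp (a * (t - T))

lemma contDiff_barrier (hu₀ : ContDiff ℝ 2 u₀) :
    ContDiff ℝ 2 fun q : ℝ × EN N => barrier u₀ C β a T q.1 q.2 := by
  have hbracket : ContDiff ℝ 2 (bracket 1 : EN N → ℝ) := contDiff_bracket 1
  unfold barrier
  fun_prop

lemma lt_deriv_barrier (hβ : 0 ≤ β) (ha : 0 ≤ a) (t : ℝ) (x : EN N) :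
    C < deriv (fun t => barrier u₀ C β a T t x) t := by
  have hderiv : HasDerivAt (fun t => barrier u₀ C β a T t x)
      ((C + 1) * 1 + β * (Real.exp (a * (t - T)) * (a * 1))) t :=
    ((((hasDerivAt_id t).const_mul (C + 1)).const_add (u₀ x)).add_const _).add
      ((((hasDerivAt_id t).sub_const T).const_mul a).exp.const_mul β)
  rw [hderiv.deriv]
  have : 0 ≤ β * (Real.exp (a * (t - T)) * (a * 1)) := by positivity
  linarith

lemma fderiv_barrier (hu₀ : Differentiable ℝ u₀) (t : ℝ) (x : EN N) :
    fderiv ℝ (barrier u₀ C β a T t) x = fderiv ℝ u₀ x + β • bracketDeriv 1 x :=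
  ((((hu₀ x).hasFDerivAt.add_const _).add
    ((hasFDerivAt_bracket 1 x).const_mul β)).add_const _).fderiv

lemma norm_fderiv_barrier_le (hu₀ : HasC2Bound M u₀) (hβ : β ∈ Icc 0 1) (t : ℝ) (x : EN N) :
    ‖fderiv ℝ (barrier u₀ C β a T t) x‖ ≤ M + 1 := by
  rw [fderiv_barrier hu₀.differentiable]
  refine norm_add_le_of_le (hu₀.norm_fderiv_le x) ?_
  rw [norm_smul, Real.norm_of_nonneg hβ.1]
  exact mul_le_one₀ hβ.2 (norm_nonneg _) (norm_bracketDeriv_one_le x)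

lemma barrier_add_le_levyWeight (hu₀ : HasC2Bound M u₀) (hγ₁ : 1 ≤ γ) (hγ₂ : γ ≤ 2)
    (hβ : β ∈ Icc 0 1) (t : ℝ) (x z : EN N) :
    barrier u₀ C β a T t (x + z) - barrier u₀ C β a T t x
      - fderiv ℝ (barrier u₀ C β a T t) x z ≤ (2 * M + 2) * levyWeight γ z := by
  have hdatum := hu₀.add_le_levyWeight hγ₁ hγ₂ x z
  have hbracket := mul_le_mul_of_nonneg_left (bracket_one_add_le_levyWeight hγ₁ hγ₂ x z) hβ.1
  have hβle := mul_le_mul_of_nonneg_right hβ.2 (levyWeight_nonneg γ z)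
  rw [fderiv_barrier hu₀.differentiable]
  simp only [barrier, add_apply, smul_apply, smul_eq_mul]
  linarith

lemma not_isMax_sub_barrier (hk : IsLevyKernel γ (levyKernel N s g)) (hu₀ : HasC2Bound M u₀)
    (hu : JointlyContinuous u) (hsub : IsSubsol N s g F u₀ u)
    (hF : ∀ t x v q I, ‖q‖ ≤ M + 1 → I ≤ (2 * M + 2) * levyMass γ (levyKernel N s g) →
      F t x v q I ≤ C)
    (hβ : β ∈ Icc 0 1) (ha : 0 ≤ a) {S t₁ : ℝ} (ht₁ : t₁ ∈ Ioo 0 S) {x₁ : EN N}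
    (hB : ∀ x, |u t₁ x| ≤ B) :
    ¬ ∀ t ∈ Icc 0 S, ∀ x,
      u t x - barrier u₀ C β a T t x ≤ u t₁ x₁ - barrier u₀ C β a T t₁ x₁ := by
  intro hmax
  refine (lt_deriv_barrier hβ.1 ha t₁ x₁).not_ge ((hsub.deriv_le_of_isMax ht₁
    (contDiff_barrier hu₀.contDiff) one_pos hmax).trans (hF _ _ _ _ _
      (norm_fderiv_barrier_le hu₀ hβ t₁ x₁) ?_))
  exact levyI1_add_levyI2_le hk one_pos (hu.continuous ht₁.1.le).measurable hB
    (by linarith [hu₀.nonneg])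
    (barrier_add_le_levyWeight hu₀ hk.one_lt.le hk.lt_two.le hβ t₁ x₁) fun z => by
      linarith [hmax t₁ (Ioo_subset_Icc_self ht₁) (x₁ + z)]

lemma sub_barrier_le {t S : ℝ} {x : EN N} (hB : |u t x| ≤ B) (hM : |u₀ x| ≤ M)
    (ht : t ∈ Icc 0 S) :
    u t x - barrier u₀ C β a T t x ≤
      B + M + |C + 1| * S - β * bracket 1 x - β * Real.exp (a * (t - T)) := by
  have hdrift : -(|C + 1| * S) ≤ (C + 1) * t := by
    rw [neg_le]
    calc -((C + 1) * t) ≤ |C + 1| * t := by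
          rw [← neg_mul]
          exact mul_le_mul_of_nonneg_right (neg_le_abs _) ht.1
      _ ≤ |C + 1| * S := mul_le_mul_of_nonneg_left ht.2 (abs_nonneg _)
  rw [barrier]
  linarith [le_of_abs_le hB, neg_le_of_abs_le hM]

lemma exists_isMax_sub_barrier (hu₀ : HasC2Bound M u₀) (hu : JointlyContinuous u)
    (hinit : ∀ x, u 0 x ≤ u₀ x) (hB : ∀ t ∈ Icc 0 (T + 1), ∀ x, |u t x| ≤ B) (hβ : 0 < β)
    (ha : B + M + |C + 1| * (T + 1) < β * Real.exp a) {t : ℝ} (ht : t ∈ Icc 0 T) {x : EN N}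
    (hlt : barrier u₀ C β a T t x < u t x) :
    ∃ t₁ ∈ Ioo 0 (T + 1), ∃ x₁, ∀ t ∈ Icc 0 (T + 1), ∀ x,
      u t x - barrier u₀ C β a T t x ≤ u t₁ x₁ - barrier u₀ C β a T t₁ x₁ := by
  have hup : ∀ q ∈ Icc 0 (T + 1) ×ˢ (univ : Set (EN N)),
      u q.1 q.2 - barrier u₀ C β a T q.1 q.2 ≤ _ := fun q hq =>
    sub_barrier_le (hB q.1 hq.1 q.2) (hu₀.abs_le q.2) hq.1
  have htx : (t, x) ∈ Icc 0 (T + 1) ×ˢ (univ : Set (EN N)) :=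
    ⟨⟨ht.1, by linarith [ht.2]⟩, mem_univ x⟩
  obtain ⟨⟨t₁, x₁⟩, hmem, hmax⟩ := exists_isMaxOn_of_norm_le
    (f := fun q : ℝ × EN N => u q.1 q.2 - barrier u₀ C β a T q.1 q.2)
    (isClosed_Icc.prod isClosed_univ)
    ((hu.continuousOn_Icc (T + 1)).sub (contDiff_barrier hu₀.contDiff).continuous.continuousOn) htx
    (R := max (T + 1) ((B + M + |C + 1| * (T + 1)) / β)) fun q hq hle => by
      refine max_le_max ?_ ?_
      · rw [Real.norm_of_nonneg hq.1.1]
        exact hq.1.2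
      · have hexp : 0 ≤ β * Real.exp (a * (q.1 - T)) := by positivity
        have hnorm := mul_le_mul_of_nonneg_left (norm_le_bracket le_rfl q.2) hβ.le
        rw [le_div_iff₀ hβ]
        linarith [hup q hq]
  have hpos : barrier u₀ C β a T t₁ x₁ < u t₁ x₁ := by
    have : u t x - barrier u₀ C β a T t x ≤ u t₁ x₁ - barrier u₀ C β a T t₁ x₁ := hmax htx
    linarith
  have hbracket : 0 ≤ β * bracket 1 x₁ :=
    mul_nonneg hβ.le (zero_le_one.trans (one_le_bracket zero_le_one x₁))
  refine ⟨t₁, ⟨hmem.1.1.lt_of_ne ?_, hmem.1.2.lt_of_ne ?_⟩, x₁, fun t ht x =>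
    hmax (show (t, x) ∈ Icc 0 (T + 1) ×ˢ univ from ⟨ht, mem_univ x⟩)⟩
  · rintro rfl
    have hexp : 0 ≤ β * Real.exp (a * (0 - T)) := by positivity
    rw [barrier] at hpos
    linarith [hinit x₁]
  · rintro rfl
    have hle := hup _ hmem
    rw [add_sub_cancel_left, mul_one] at hle
    linarith

lemma IsSubsol.le_add_mul (hk : IsLevyKernel γ (levyKernel N s g)) (hu₀ : HasC2Bound M u₀)
    (hu : JointlyContinuous u) (hsub : IsSubsol N s g F u₀ u)
    (hF : ∀ t x v q I, ‖q‖ ≤ M + 1 → I ≤ (2 * M + 2) * levyMass γ (levyKernel N s g) →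
      F t x v q I ≤ C)
    {t : ℝ} (ht : 0 ≤ t) (x : EN N) : u t x ≤ u₀ x + (C + 1) * t := by
  obtain ⟨B, hB⟩ := hu.exists_abs_le_Icc hsub.2.1 (T := t + 1) (by linarith)
  set D := B + M + |C + 1| * (t + 1)
  have hD : 0 ≤ D := by
    have := (abs_nonneg _).trans (hB 0 ⟨le_rfl, by linarith⟩ x)
    have := hu₀.nonneg
    positivity
  have hχ : 0 < bracket 1 x + 1 := by linarith [one_le_bracket zero_le_one x]
  refine le_of_forall_pos_le_add fun e he => ?_
  set β := min 1 (e / (bracket 1 x + 1))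
  have hβ : 0 < β := by positivity
  have ha : D < β * Real.exp (D / β) := by
    have := Real.add_one_le_exp (D / β)
    rw [← div_lt_iff₀' hβ]
    linarith
  have hle : u t x ≤ barrier u₀ C β (D / β) t t x := by
    by_contra! hlt
    obtain ⟨t₁, ht₁, x₁, hmax⟩ :=
      exists_isMax_sub_barrier hu₀ hu hsub.2.2.1 hB hβ ha ⟨ht, le_rfl⟩ hlt
    exact not_isMax_sub_barrier hk hu₀ hu hsub hF ⟨hβ.le, min_le_left _ _⟩ (by positivity) ht₁
      (hB t₁ (Ioo_subset_Icc_self ht₁)) hmax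
  have hβe : β * (bracket 1 x + 1) ≤ e := by
    rw [← le_div_iff₀ hχ]
    exact min_le_right _ _
  rw [barrier, sub_self, mul_zero, Real.exp_zero] at hle
  linarith

end Barrier

/-! ### Periodic reaction terms -/

section Reaction

variable {N : ℕ} {h : ℝ → EN N → ℝ → ℝ} {K : ℝ}

/-- The point of the lattice `ℤ^N ⊆ ℝ^N` with coordinates `k`. -/
noncomputable def latticePoint {N : ℕ} (k : Fin N → ℤ) : EN N :=
  (WithLp.equiv 2 (Fin N → ℝ)).symm fun j => (k j : ℝ)

lemma exists_norm_sub_latticePoint_le (x : EN N) : ∃ k, ‖x - latticePoint k‖ ≤ √N := by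
  refine ⟨fun j => ⌊x j⌋, ?_⟩
  rw [EuclideanSpace.norm_eq]
  refine Real.sqrt_le_sqrt ((Finset.sum_le_card_nsmul _ _ 1 fun j _ => ?_).trans_eq (by simp))
  change ‖Int.fract (x j)‖ ^ 2 ≤ 1
  rw [Real.norm_of_nonneg (Int.fract_nonneg _)]
  exact pow_le_one₀ (Int.fract_nonneg _) (Int.fract_lt_one _).le

/-- A reaction term `h(τ, y, v)`, with Lipschitz constant `K`, which is `1`-periodic in `τ`,
`ℤ^N`-periodic in `y` and `1`-periodic in `v`. The model case is `σ(τ, y) - W'(v)`. -/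
structure IsPeriodicReaction (K : ℝ) (h : ℝ → EN N → ℝ → ℝ) : Prop where
  abs_sub_le : ∀ τ y v τ' y' v', |h τ y v - h τ' y' v'| ≤ K * (|τ - τ'| + ‖y - y'‖ + |v - v'|)
  time_periodic : ∀ y v, Function.Periodic (fun τ => h τ y v) 1
  space_periodic : ∀ k τ y v, h τ (y + latticePoint k) v = h τ y v
  value_periodic : ∀ τ y, Function.Periodic (h τ y) 1

lemma IsPeriodicReaction.nonneg (hh : IsPeriodicReaction K h) : 0 ≤ K := by
  have hK := (abs_nonneg _).trans (hh.abs_sub_le 0 0 0 1 0 0)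
  simpa using hK

lemma IsPeriodicReaction.sub_le (hh : IsPeriodicReaction K h) (τ y v τ' y' v') :
    h τ y v - h τ' y' v' ≤ K * (|τ - τ'| + ‖y - y'‖ + |v - v'|) :=
  (le_abs_self _).trans (hh.abs_sub_le τ y v τ' y' v')

lemma IsPeriodicReaction.add_lattice (hh : IsPeriodicReaction K h) (m : ℕ) (k : Fin N → ℤ) (n : ℤ)
    (τ : ℝ) (y : EN N) (v : ℝ) : h (m + τ) (latticePoint k + y) (v + n) = h τ y v := by
  have htime := (hh.time_periodic (y + latticePoint k) (v + n)).nat_mul m τ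
  have hvalue := (hh.value_periodic τ y).int_mul n v
  rw [mul_one] at htime hvalue
  rw [add_comm (m : ℝ), add_comm (latticePoint k), htime, hh.space_periodic, hvalue]

lemma IsPeriodicReaction.exists_abs_le (hh : IsPeriodicReaction K h) :
    ∃ C, ∀ τ y v, |h τ y v| ≤ C := by
  refine ⟨|h 0 0 0| + K * (1 + √N + 1), fun τ y v => ?_⟩
  obtain ⟨k, hk⟩ := exists_norm_sub_latticePoint_le y
  have htime := (hh.time_periodic y v).int_mul ⌊τ⌋ (Int.fract τ)
  have hspace := hh.space_periodic k (Int.fract τ) (y - latticePoint k) v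
  have hvalue := (hh.value_periodic (Int.fract τ) (y - latticePoint k)).int_mul ⌊v⌋ (Int.fract v)
  rw [mul_one, Int.fract_add_floor] at htime hvalue
  rw [sub_add_cancel] at hspace
  have hcell := hh.abs_sub_le (Int.fract τ) (y - latticePoint k) (Int.fract v) 0 0 0
  simp only [sub_zero, Int.abs_fract] at hcell
  have hsize : K * (Int.fract τ + ‖y - latticePoint k‖ + Int.fract v) ≤ K * (1 + √N + 1) :=
    mul_le_mul_of_nonneg_left (add_le_add_three (Int.fract_lt_one τ).le hk (Int.fract_lt_one v).le)
      hh.nonneg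
  rw [htime, hspace, hvalue]
  linarith [abs_sub_abs_le_abs_sub (h (Int.fract τ) (y - latticePoint k) (Int.fract v)) (h 0 0 0)]

/-- The reaction term of the equation solved by `-u` when `u` solves the equation of `h`. -/
def reflectReaction (h : ℝ → EN N → ℝ → ℝ) : ℝ → EN N → ℝ → ℝ := fun τ y v => -h τ y (-v)

lemma IsPeriodicReaction.reflect (hh : IsPeriodicReaction K h) :
    IsPeriodicReaction K (reflectReaction h) where
  abs_sub_le τ y v τ' y' v' := by
    have hneg := hh.abs_sub_le τ' y' (-v') τ y (-v)
    rwa [neg_sub_neg, abs_sub_comm τ', norm_sub_rev y', ← neg_sub_neg] at hneg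
  time_periodic y v τ := congrArg Neg.neg (hh.time_periodic y (-v) τ)
  space_periodic k τ y v := congrArg Neg.neg (hh.space_periodic k τ y (-v))
  value_periodic τ y v := by
    have hper := hh.value_periodic τ y (-(v + 1))
    rw [show -(v + 1) + 1 = -v by ring] at hper
    exact congrArg Neg.neg hper.symm

lemma H2.periodic_deriv {W : ℝ → ℝ} (hW : H2 W) : Function.Periodic (deriv W) 1 :=
  fun v => by rw [← deriv_comp_add_const, funext hW.2.2]

lemma exists_isPeriodicReaction {W : ℝ → ℝ} {σ : ℝ → EN N → ℝ} (hW : H2 W) (hσ : H3 N σ) :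
    ∃ K, IsPeriodicReaction K fun τ y v => σ τ y - deriv W v := by
  obtain ⟨K₁, hK₁⟩ := hW.2.1
  obtain ⟨⟨K₂, hK₂⟩, htime, hspace⟩ := hσ
  refine ⟨K₁ + K₂, fun τ y v τ' y' v' => ?_, fun y v τ => by simp only [htime],
    fun k τ y v => congrArg (· - deriv W v) (hspace k τ y),
    fun τ y v => by simp only [hW.periodic_deriv v]⟩
  have hWle : |deriv W v - deriv W v'| ≤ K₁ * |v - v'| := hK₁.dist_le_mul v v'
  have hσle : |σ τ y - σ τ' y'| ≤ K₂ * (|τ - τ'| + ‖y - y'‖) :=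
    (hK₂.dist_le_mul (τ, y) (τ', y')).trans (mul_le_mul_of_nonneg_left
      ((Prod.dist_eq.trans_le (max_le_add_of_nonneg dist_nonneg dist_nonneg)).trans_eq (by
        rw [Real.dist_eq, dist_eq_norm])) K₂.2)
  have hcross : 0 ≤ K₁ * (|τ - τ'| + ‖y - y'‖) + K₂ * |v - v'| := by positivity
  calc |σ τ y - deriv W v - (σ τ' y' - deriv W v')|
      = |(σ τ y - σ τ' y') - (deriv W v - deriv W v')| := by ring_nf
    _ ≤ |σ τ y - σ τ' y'| + |deriv W v - deriv W v'| := abs_sub _ _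
    _ ≤ (K₁ + K₂) * (|τ - τ'| + ‖y - y'‖ + |v - v'|) := by linarith

/-- The right-hand side of `∂_τ v = I_s[v] + h(τ, y, v)`. -/
noncomputable def reactionF (h : ℝ → EN N → ℝ → ℝ) : ℝ → EN N → ℝ → (EN N →L[ℝ] ℝ) → ℝ → ℝ :=
  fun τ y v _ I => I + h τ y v

/-- The right-hand side of the equation `∂_τ w = I_s[w] + h(τ, y, w + p · y)` of the corrector of
slope `p`. -/
noncomputable def correctorF (h : ℝ → EN N → ℝ → ℝ) (p : EN N) :
    ℝ → EN N → ℝ → (EN N →L[ℝ] ℝ) → ℝ → ℝ :=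
  fun τ y v _ I => I + h τ y (v + ⟪p, y⟫)

/-- The right-hand side of the oscillating equation
`∂_t u = ε^{2s-1} I_s[u] + h(t/ε, x/ε, u/ε)`. -/
noncomputable def oscillatingF (s : ℝ) (h : ℝ → EN N → ℝ → ℝ) (ε : ℝ) :
    ℝ → EN N → ℝ → (EN N →L[ℝ] ℝ) → ℝ → ℝ :=
  fun t x v _ I => ε ^ (2 * s - 1) * I + h (t / ε) (ε⁻¹ • x) (v / ε)

/-- The right-hand side of the Hamilton–Jacobi equation `∂_t u = H(∇u)`. -/
noncomputable def hamiltonF (H : EN N → ℝ) : ℝ → EN N → ℝ → (EN N →L[ℝ] ℝ) → ℝ → ℝ :=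
  fun _ _ _ Du _ => H ((InnerProductSpace.toDual ℝ (EN N)).symm Du)

lemma reflectRHS_reactionF : reflectRHS (reactionF h) = reactionF (reflectReaction h) := by
  funext τ y v q I
  simp only [reflectRHS, reactionF, reflectReaction, neg_add, neg_neg]

lemma reflectRHS_correctorF (p : EN N) :
    reflectRHS (correctorF h (-p)) = correctorF (reflectReaction h) p := by
  funext τ y v q I
  simp only [reflectRHS, correctorF, reflectReaction, inner_neg_left, neg_add, neg_neg]

lemma reflectRHS_oscillatingF {s ε : ℝ} :
    reflectRHS (oscillatingF s h ε) = oscillatingF s (reflectReaction h) ε := by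
  funext t x v q I
  simp only [reflectRHS, oscillatingF, reflectReaction, mul_neg, neg_add, neg_neg, neg_div]

lemma reflectRHS_hamiltonF (H : EN N → ℝ) :
    reflectRHS (hamiltonF H) = hamiltonF fun p => -H (-p) := by
  funext t x v q I
  simp only [reflectRHS, hamiltonF, map_neg]

end Reaction

/-! ### Blow-up at a lattice point -/

section BlowUp

variable {N : ℕ} {s ε r : ℝ} {g : EN N → ℝ} {f : EN N → ℝ} {h : ℝ → EN N → ℝ → ℝ}
  {u : ℝ → EN N → ℝ} {m n : ℝ} {k : EN N}

open scoped Pointwise in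
lemma setIntegral_smul_mul_levyKernel (hε : 0 < ε) (A : Set (EN N)) (f : EN N → ℝ) :
    ∫ z in ε • A, f z * levyKernel N s g z =
      ε ^ (-(2 * s)) * ∫ z in A, f (ε • z) * levyKernel N s g z := by
  have hscale := Measure.setIntegral_comp_smul_of_pos (volume : Measure (EN N))
    (fun z => f z * levyKernel N s g z) A hε
  have hpow : ε ^ N * ε ^ (-(N : ℝ) - 2 * s) = ε ^ (-(2 * s)) := by
    rw [← Real.rpow_natCast ε N, ← Real.rpow_add hε]
    ring_nf
  simp only [levyKernel_smul hε, mul_left_comm (f _), integral_const_mul, smul_eq_mul,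
    finrank_euclideanSpace_fin] at hscale
  rw [← hpow, mul_assoc, hscale, mul_inv_cancel_left₀ (by positivity)]

open scoped Pointwise in
lemma setOf_norm_le_mul (hε : 0 < ε) : {z : EN N | ‖z‖ ≤ ε * r} = ε • {z : EN N | ‖z‖ ≤ r} := by
  ext z
  rw [mem_smul_set_iff_inv_smul_mem₀ hε.ne', mem_ofPred_eq, mem_ofPred_eq, norm_smul, norm_inv,
    Real.norm_of_nonneg hε.le, inv_mul_le_iff₀ hε]

open scoped Pointwise in
lemma setOf_mul_lt_norm (hε : 0 < ε) : {z : EN N | ε * r < ‖z‖} = ε • {z : EN N | r < ‖z‖} := by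
  ext z
  rw [mem_smul_set_iff_inv_smul_mem₀ hε.ne', mem_ofPred_eq, mem_ofPred_eq, norm_smul, norm_inv,
    Real.norm_of_nonneg hε.le, lt_inv_mul_iff₀ hε]

/-- The function `u`, blown up at scale `ε` around the time `ε m` and the point `ε k`, and shifted
down by `n`. -/
noncomputable def blowUp (ε m : ℝ) (k : EN N) (n : ℝ) (u : ℝ → EN N → ℝ) (τ : ℝ) (y : EN N) : ℝ :=
  u (ε * (m + τ)) (ε • (k + y)) / ε - n

/-- The inverse operation of `blowUp`. -/
noncomputable def blowDown (ε m : ℝ) (k : EN N) (n : ℝ) (v : ℝ → EN N → ℝ) (t : ℝ) (x : EN N) : ℝ :=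
  ε * (v (ε⁻¹ * t - m) (ε⁻¹ • x - k) + n)

lemma blowUp_blowDown (hε : ε ≠ 0) (v : ℝ → EN N → ℝ) :
    blowUp ε m k n (blowDown ε m k n v) = v := by
  funext τ y
  simp only [blowUp, blowDown, inv_mul_cancel_left₀ hε, inv_smul_smul₀ hε, add_sub_cancel_left,
    mul_div_cancel_left₀ _ hε, add_sub_cancel_right]

lemma blowDown_blowUp (hε : ε ≠ 0) (u : ℝ → EN N → ℝ) :
    blowDown ε m k n (blowUp ε m k n u) = u := by
  funext t x
  simp only [blowUp, blowDown, add_sub_cancel, mul_inv_cancel_left₀ hε, smul_inv_smul₀ hε,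
    sub_add_cancel, mul_div_cancel₀ _ hε]

lemma contDiff_blowDown {φ : ℝ → EN N → ℝ} (hφ : ContDiff ℝ 2 fun q : ℝ × EN N => φ q.1 q.2) :
    ContDiff ℝ 2 fun q : ℝ × EN N => blowDown ε m k n φ q.1 q.2 :=
  contDiff_const.mul ((hφ.comp (g := fun q : ℝ × EN N => φ q.1 q.2)
    (f := fun q : ℝ × EN N => (ε⁻¹ * q.1 - m, ε⁻¹ • q.2 - k)) (by fun_prop)).add contDiff_const)

lemma deriv_blowUp (hε : ε ≠ 0) (τ : ℝ) (y : EN N) :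
    deriv (fun τ => blowUp ε m k n u τ y) τ = deriv (fun t => u t (ε • (k + y))) (ε * (m + τ)) := by
  simp only [blowUp]
  rw [deriv_sub_const, deriv_div_const, deriv_comp_const_add (fun τ => u (ε * τ) (ε • (k + y))),
    deriv_comp_mul_left ε (fun t => u t (ε • (k + y))), smul_eq_mul, mul_div_cancel_left₀ _ hε]

lemma fderiv_blowUp (hε : ε ≠ 0) (τ : ℝ) (y : EN N) :
    fderiv ℝ (blowUp ε m k n u τ) y = fderiv ℝ (u (ε * (m + τ))) (ε • (k + y)) := by
  have hsmul : blowUp ε m k n u τ =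
      fun y => (ε⁻¹ • fun y => u (ε * (m + τ)) (ε • (k + y))) y - n := by
    funext y
    simp only [blowUp, Pi.smul_apply, smul_eq_mul, div_eq_inv_mul]
  rw [hsmul, fderiv_sub_const, fderiv_const_smul_field, Pi.smul_apply,
    fderiv_comp_add_left (f := fun y => u (ε * (m + τ)) (ε • y)), fderiv_comp_smul,
    inv_smul_smul₀ hε]

lemma levyI1_blowUp (hε : 0 < ε) (τ : ℝ) (y : EN N) :
    levyI1 N s g (blowUp ε m k n u τ) r y =
      ε ^ (2 * s - 1) * levyI1 N s g (u (ε * (m + τ))) (ε * r) (ε • (k + y)) := by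
  rw [levyI1, levyI1, setOf_norm_le_mul hε, setIntegral_smul_mul_levyKernel hε, ← mul_assoc,
    ← Real.rpow_add hε, show 2 * s - 1 + -(2 * s) = -1 by ring, Real.rpow_neg_one,
    ← integral_const_mul]
  refine setIntegral_congr_fun (measurableSet_norm_le r) fun z _ => ?_
  rw [fderiv_blowUp hε.ne', map_smul]
  simp only [blowUp, smul_add, ← add_assoc, smul_eq_mul]
  field

lemma levyI2_blowUp (hε : 0 < ε) (τ : ℝ) (y : EN N) :
    levyI2 N s g (blowUp ε m k n u τ) r y =
      ε ^ (2 * s - 1) * levyI2 N s g (u (ε * (m + τ))) (ε * r) (ε • (k + y)) := by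
  rw [levyI2, levyI2, setOf_mul_lt_norm hε, setIntegral_smul_mul_levyKernel hε, ← mul_assoc,
    ← Real.rpow_add hε, show 2 * s - 1 + -(2 * s) = -1 by ring, Real.rpow_neg_one,
    ← integral_const_mul]
  refine setIntegral_congr_fun (measurableSet_lt_norm r) fun z _ => ?_
  simp only [blowUp, smul_add, ← add_assoc]
  field

lemma JointlyContinuous.blowUp (hε : 0 < ε) (hm : 0 ≤ m) (hu : JointlyContinuous u) :
    JointlyContinuous (blowUp ε m k n u) := by
  refine (ContinuousOn.div_const (ContinuousOn.comp hu
    (f := fun q : ℝ × EN N => (ε * (m + q.1), ε • (k + q.2))) (by fun_prop) fun q hq => ?_)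
    ε).sub continuousOn_const
  exact ⟨mul_nonneg hε.le (add_nonneg hm hq.1), mem_univ _⟩

lemma LocBddPos.blowUp (hε : 0 < ε) (hm : 0 ≤ m) (hu : LocBddPos N u) :
    LocBddPos N (blowUp ε m k n u) := by
  intro T hT
  obtain ⟨B, hB⟩ := hu (ε * (m + T)) (by positivity)
  refine ⟨B / ε + |n|, fun τ hτ y => (abs_sub _ _).trans (add_le_add_left ?_ _)⟩
  rw [abs_div, abs_of_pos hε]
  exact div_le_div_of_nonneg_right (hB _ ⟨by nlinarith [hτ.1], by gcongr; exact hτ.2⟩ _) hε.le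

lemma sub_blowDown (hε : ε ≠ 0) (φ : ℝ → EN N → ℝ) (t : ℝ) (x : EN N) :
    u t x - blowDown ε m k n φ t x =
      ε * (blowUp ε m k n u (ε⁻¹ * t - m) (ε⁻¹ • x - k) - φ (ε⁻¹ * t - m) (ε⁻¹ • x - k)) := by
  have hu : u t x = ε * (blowUp ε m k n u (ε⁻¹ * t - m) (ε⁻¹ • x - k) + n) :=
    (congrFun₂ (blowDown_blowUp hε u) t x).symm
  rw [hu, blowDown]
  ring

lemma IsSubsol.blowUp (hε : 0 < ε) {K : ℝ} (hh : IsPeriodicReaction K h)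
    {u₀ : EN N → ℝ} (hu : JointlyContinuous u) (hsub : IsSubsol N s g (oscillatingF s h ε) u₀ u)
    (m : ℕ) (k : Fin N → ℤ) (n : ℤ) :
    IsSubsol N s g (reactionF h) (blowUp ε m (latticePoint k) n u 0)
      (blowUp ε m (latticePoint k) n u) := by
  refine ⟨(hu.blowUp hε m.cast_nonneg).upperSemicontinuousOn, hsub.2.1.blowUp hε m.cast_nonneg,
    fun _ => le_rfl, fun t₀ x₀ ht₀ φ hφ τ r hτ hτt hr hmax => ?_⟩
  have htest := hsub.2.2.2 (ε * (m + t₀)) (ε • (latticePoint k + x₀)) (by positivity)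
    (blowDown ε m (latticePoint k) n φ) (contDiff_blowDown hφ) (ε * τ) (ε * r) (by positivity)
    (by nlinarith [m.cast_nonneg (α := ℝ)]) (by positivity) fun t x ht hx => by
      rw [sub_blowDown hε.ne', sub_blowDown hε.ne', inv_mul_cancel_left₀ hε.ne',
        inv_smul_smul₀ hε.ne', add_sub_cancel_left, add_sub_cancel_left]
      refine mul_le_mul_of_nonneg_left (hmax _ _ ?_ ?_) hε.le
      · rw [← mul_sub, ← mul_add, mem_Ioo, ← lt_inv_mul_iff₀ hε, ← inv_mul_lt_iff₀ hε] at ht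
        constructor <;> linarith [ht.1, ht.2]
      · rw [mem_ball, dist_eq_norm] at hx ⊢
        rw [show ε⁻¹ • x - latticePoint k - x₀ = ε⁻¹ • (x - ε • (latticePoint k + x₀)) by
          rw [smul_sub, inv_smul_smul₀ hε.ne', sub_sub], norm_smul, norm_inv,
          Real.norm_of_nonneg hε.le]
        rwa [inv_mul_lt_iff₀ hε]
  have hI₁ := levyI1_blowUp (s := s) (g := g) (r := r) (m := m) (n := n) (k := latticePoint k)
    (u := blowDown ε m (latticePoint k) n φ) hε t₀ x₀
  have hI₂ := levyI2_blowUp (s := s) (g := g) (r := r) (m := m) (n := n) (k := latticePoint k)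
    (u := u) hε t₀ x₀
  rw [blowUp_blowDown hε.ne'] at hI₁
  rw [← deriv_blowUp hε.ne' (n := n), blowUp_blowDown hε.ne', oscillatingF, mul_add, ← hI₁, ← hI₂,
    mul_div_cancel_left₀ _ hε.ne', inv_smul_smul₀ hε.ne', ← sub_add_cancel (u _ _ / ε) (n : ℝ),
    hh.add_lattice] at htest
  exact htest

end BlowUp

/-! ### Doubling of variables -/

section Doubling

variable {X : Type*} [NormedAddCommGroup X] {Z : Set X} {P w : X → ℝ}
  {Q : X → X → ℝ} {B R : ℝ} {z : X}

lemma exists_penalty_confining (hP : BddAbove (P '' Z)) (hB : ∀ a ∈ Z, -B ≤ w a)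
    (hR : ∀ a ∈ Z, -B ≤ P a → ‖a‖ ≤ R) (hQ : ∀ a b, ‖a - b‖ ^ 2 ≤ Q a b) {ρ : ℝ} (hρ : 0 < ρ) :
    ∃ δ > 0, ∀ a ∈ Z, ∀ b ∈ Z, 0 ≤ P a - w b - Q a b / (2 * δ) →
      ‖a‖ ≤ R ∧ ‖a - b‖ < ρ ∧ w b ≤ P a := by
  obtain ⟨C, hC⟩ := hP
  set D := max (C + B) 0
  set δ := ρ ^ 2 / (2 * (D + 1))
  have hδ : 0 < δ := by positivity
  have hδρ : 2 * δ * D < ρ ^ 2 := by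
    rw [show 2 * δ * D = ρ ^ 2 * (D / (D + 1)) by simp only [δ]; field_simp]
    exact mul_lt_of_lt_one_right (by positivity) ((div_lt_one (by positivity)).2 (by linarith))
  refine ⟨δ, hδ, fun a ha b hb hle => ?_⟩
  have hQnn : 0 ≤ Q a b / (2 * δ) := div_nonneg ((sq_nonneg _).trans (hQ a b)) (by positivity)
  have hQle : Q a b / (2 * δ) ≤ D := le_max_of_le_left (by
    linarith [hB b hb, hC (mem_image_of_mem P ha)])
  rw [div_le_iff₀' (by positivity)] at hQle
  exact ⟨hR a ha (by linarith [hB b hb]),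
    lt_of_pow_lt_pow_left₀ 2 hρ.le (by linarith [hQ a b]), by linarith⟩

variable [ProperSpace X]

lemma exists_isMax_sub_penalty (hZ : IsClosed Z) (hP : ContinuousOn P Z) (hw : ContinuousOn w Z)
    (hz : z ∈ Z) (hPz : P z = w z) (hB : ∀ a ∈ Z, -B ≤ w a) (hR : ∀ a ∈ Z, -B ≤ P a → ‖a‖ ≤ R)
    (hQc : Continuous fun q : X × X => Q q.1 q.2) (hQz : Q z z = 0)
    (hQ : ∀ a b, ‖a - b‖ ^ 2 ≤ Q a b) {ρ : ℝ} (hρ : 0 < ρ) :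
    ∃ δ > 0, ∃ a ∈ Z, ∃ b ∈ Z, ‖a‖ ≤ R ∧ ‖a - b‖ < ρ ∧ w b ≤ P a ∧
      ∀ a' ∈ Z, ∀ b' ∈ Z, P a' - w b' - Q a' b' / (2 * δ) ≤ P a - w b - Q a b / (2 * δ) := by
  obtain ⟨a₀, -, hC⟩ := exists_isMaxOn_of_norm_le hZ hP hz (R := R) fun a ha hle =>
    hR a ha ((hB z hz).trans (hPz.symm.trans_le hle))
  obtain ⟨δ, hδ, hconf⟩ := exists_penalty_confining hC.bddAbove hB hR hQ hρ
  have hΨz : P z - w z - Q z z / (2 * δ) = 0 := by rw [hPz, hQz, sub_self, zero_div, sub_zero]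
  obtain ⟨⟨a, b⟩, ⟨ha, hb⟩, hmax⟩ := exists_isMaxOn_of_norm_le (a₀ := (z, z)) (R := R + ρ)
    (hZ.prod hZ) (f := fun q => P q.1 - w q.2 - Q q.1 q.2 / (2 * δ))
    (((hP.comp continuousOn_fst fun q hq => hq.1).sub
      (hw.comp continuousOn_snd fun q hq => hq.2)).sub (hQc.div_const _).continuousOn) ⟨hz, hz⟩
    fun q hq hle => by
      rw [hΨz] at hle
      obtain ⟨h₁, h₂, -⟩ := hconf q.1 hq.1 q.2 hq.2 hle
      exact max_le (by linarith) (by linarith [norm_le_norm_add_norm_sub q.1 q.2])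
  have hnn : P z - w z - Q z z / (2 * δ) ≤ P a - w b - Q a b / (2 * δ) :=
    hmax (show (z, z) ∈ Z ×ˢ Z from ⟨hz, hz⟩)
  obtain ⟨haR, hab, hwP⟩ := hconf a ha b hb (hΨz.symm.trans_le hnn)
  exact ⟨δ, hδ, a, ha, b, hb, haR, hab, hwP, fun a' ha' b' hb' =>
    hmax (show (a', b') ∈ Z ×ˢ Z from ⟨ha', hb'⟩)⟩

lemma exists_pos_forall_abs_sub_lt (hZ : IsClosed Z) {f : X → ℝ} (hf : ContinuousOn f Z) (R : ℝ)
    {ω : ℝ} (hω : 0 < ω) :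
    ∃ ρ > 0, ∀ a ∈ Z, ∀ b ∈ Z, ‖a‖ ≤ R → ‖a - b‖ < ρ → |f a - f b| < ω := by
  have hcompact : IsCompact (closedBall (0 : X) (R + 1) ∩ Z) :=
    (isCompact_closedBall 0 (R + 1)).inter_right hZ
  obtain ⟨ρ, hρ, hfu⟩ := Metric.uniformContinuousOn_iff.1
    (hcompact.uniformContinuousOn_of_continuous (hf.mono inter_subset_right)) ω hω
  refine ⟨min ρ 1, by positivity, fun a ha b hb haR hab => ?_⟩
  rw [lt_min_iff] at hab
  exact hfu a ⟨mem_closedBall_zero_iff.2 (by linarith), ha⟩ b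
    ⟨mem_closedBall_zero_iff.2 (by linarith [norm_le_norm_add_norm_sub a b]), hb⟩
    ((dist_eq_norm a b).trans_lt hab.1)

lemma exists_isMax_doubling (hZ : IsClosed Z) (hP : ContinuousOn P Z) (hw : ContinuousOn w Z)
    (hPw : ∀ a ∈ Z, P a ≤ w a) (hz : z ∈ Z) (hPz : P z = w z) (hB : ∀ a ∈ Z, -B ≤ w a)
    (hR : ∀ a ∈ Z, -B ≤ P a → ‖a‖ ≤ R) (hQc : Continuous fun q : X × X => Q q.1 q.2)
    (hQz : Q z z = 0) (hQ : ∀ a b, ‖a - b‖ ^ 2 ≤ Q a b) {ω : ℝ} (hω : 0 < ω) :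
    ∃ δ > 0, ∃ a ∈ Z, ∃ b ∈ Z, ‖a - b‖ < ω ∧ w b ≤ P a ∧ P a ≤ w b + ω ∧ w a ≤ P a + ω ∧
      w b ≤ P b + ω ∧
      ∀ a' ∈ Z, ∀ b' ∈ Z, P a' - w b' - Q a' b' / (2 * δ) ≤ P a - w b - Q a b / (2 * δ) := by
  obtain ⟨ρ₁, hρ₁, hPu⟩ := exists_pos_forall_abs_sub_lt hZ hP R hω
  obtain ⟨ρ₂, hρ₂, hwu⟩ := exists_pos_forall_abs_sub_lt hZ hw R hω
  obtain ⟨δ, hδ, a, ha, b, hb, haR, hab, hwP, hmax⟩ := exists_isMax_sub_penalty hZ hP hw hz hPz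
    hB hR hQc hQz hQ (ρ := min ω (min ρ₁ ρ₂)) (by positivity)
  rw [lt_min_iff, lt_min_iff] at hab
  have hPab := abs_lt.1 (hPu a ha b hb haR hab.2.1)
  have hwab := abs_lt.1 (hwu a ha b hb haR hab.2.2)
  exact ⟨δ, hδ, a, ha, b, hb, hab.1, hwP, by linarith [hPw a ha], by linarith, by linarith, hmax⟩

lemma exists_least_multiple (hZ : IsClosed Z) {D G : X → ℝ} (hD : ContinuousOn D Z)
    (hG : ContinuousOn G Z) (hGpos : ∀ a ∈ Z, 0 < G a) {κ : ℝ} {a₀ : X} (ha₀ : a₀ ∈ Z)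
    (hlt : κ * G a₀ < D a₀) (hR : ∀ a ∈ Z, κ * G a ≤ D a → ‖a‖ ≤ R) :
    ∃ κ' > κ, (∃ a ∈ Z, D a = κ' * G a) ∧ ∀ a ∈ Z, D a ≤ κ' * G a := by
  have hlt' : κ < D a₀ / G a₀ := (lt_div_iff₀ (hGpos a₀ ha₀)).2 hlt
  obtain ⟨a, ha, hmax⟩ := exists_isMaxOn_of_norm_le hZ (hD.div hG fun a ha => (hGpos a ha).ne') ha₀
    fun a ha hle => hR a ha ((le_div_iff₀ (hGpos a ha)).1 (hlt'.le.trans hle))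
  exact ⟨D a / G a, hlt'.trans_le (hmax ha₀),
    ⟨a, ha, (div_mul_cancel₀ _ (hGpos a ha).ne').symm⟩,
    fun b hb => (div_le_iff₀ (hGpos b hb)).1 (hmax hb)⟩

end Doubling

section DoubledInequality

variable {N : ℕ} {s γ : ℝ} {g : EN N → ℝ}

/-- The quadratic penalty that ties together the two copies of `(t, x)` in the doubling of
variables. -/
noncomputable def doublingPenalty (a b : ℝ × EN N) : ℝ := ‖a.2 - b.2‖ ^ 2 + (a.1 - b.1) ^ 2

lemma doublingPenalty_self (a : ℝ × EN N) : doublingPenalty a a = 0 := by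
  simp only [doublingPenalty, sub_self, norm_zero, ne_eq, OfNat.ofNat_ne_zero, not_false_eq_true,
    zero_pow, add_zero]

lemma doublingPenalty_comm (a b : ℝ × EN N) : doublingPenalty a b = doublingPenalty b a := by
  rw [doublingPenalty, doublingPenalty, norm_sub_rev, ← neg_sub b.1, neg_sq]

lemma norm_sub_sq_le_doublingPenalty (a b : ℝ × EN N) : ‖a - b‖ ^ 2 ≤ doublingPenalty a b := by
  rw [Prod.norm_def, doublingPenalty, Prod.fst_sub, Prod.snd_sub, Real.norm_eq_abs,
    ← sq_abs (a.1 - _)]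
  rcases max_choice |a.1 - b.1| ‖a.2 - b.2‖ with h | h <;> rw [h] <;>
    linarith [sq_nonneg |a.1 - b.1|, sq_nonneg ‖a.2 - b.2‖]

lemma contDiff_doublingPenalty {n : WithTop ℕ∞} :
    ContDiff ℝ n fun q : (ℝ × EN N) × (ℝ × EN N) => doublingPenalty q.1 q.2 :=
  (ContDiff.norm_sq ℝ (contDiff_fst.snd.sub contDiff_snd.snd)).add
    ((contDiff_fst.fst.sub contDiff_snd.fst).pow 2)

lemma doublingPenalty_add_shift (t t' : ℝ) (x x' z : EN N) :
    doublingPenalty (t, x + z) (t', x' + z) = doublingPenalty (t, x) (t', x') := by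
  simp only [doublingPenalty, add_sub_add_right_eq_sub]

lemma hasDerivAt_doublingPenalty (t : ℝ) (x : EN N) (b : ℝ × EN N) :
    HasDerivAt (fun t => doublingPenalty (t, x) b) (2 * (t - b.1)) t := by
  simpa [doublingPenalty] using (((hasDerivAt_id t).sub_const b.1).pow 2).const_add (‖x - b.2‖ ^ 2)

lemma hasFDerivAt_doublingPenalty (t : ℝ) (x : EN N) (b : ℝ × EN N) :
    HasFDerivAt (fun x => doublingPenalty (t, x) b) (2 • innerSL ℝ (x - b.2)) x := by
  simpa only [doublingPenalty, id_eq, ContinuousLinearMap.comp_id] using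
    ((hasFDerivAt_id (𝕜 := ℝ) x).sub_const b.2).norm_sq.add_const ((t - b.1) ^ 2)

lemma doublingPenalty_add (t : ℝ) (x z : EN N) (b : ℝ × EN N) :
    doublingPenalty (t, x + z) b - doublingPenalty (t, x) b - (2 • innerSL ℝ (x - b.2)) z =
      ‖z‖ ^ 2 := by
  simp only [doublingPenalty, add_sub_right_comm x z, norm_add_sq_real, smul_apply,
    innerSL_apply_apply, nsmul_eq_mul, Nat.cast_ofNat]
  ring

lemma IsSubsol.doubled_deriv_le (hk : IsLevyKernel γ (levyKernel N s g))
    {h : ℝ → EN N → ℝ → ℝ} {u₀ : EN N → ℝ} {u φ : ℝ → EN N → ℝ} {c δ S r t₁ : ℝ} {x₁ : EN N}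
    {b : ℝ × EN N} (hu : IsSubsol N s g (reactionF h) u₀ u) (ht₁ : t₁ ∈ Ioo 0 S)
    (hφ : ContDiff ℝ 2 fun q : ℝ × EN N => φ q.1 q.2) (hc : 0 ≤ c)
    (hinc : ∀ z, φ t₁ (x₁ + z) - φ t₁ x₁ - fderiv ℝ (φ t₁) x₁ z ≤ c * levyWeight γ z)
    (hδ : 0 < δ) (hr : r ∈ Ioc 0 1)
    (hmax : ∀ t ∈ Icc 0 S, ∀ x, u t x - φ t x - doublingPenalty (t, x) b / (2 * δ) ≤
      u t₁ x₁ - φ t₁ x₁ - doublingPenalty (t₁, x₁) b / (2 * δ)) :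
    deriv (fun t => φ t x₁) t₁ + (t₁ - b.1) / δ ≤
      (c + 1 / (2 * δ)) * innerMass γ (levyKernel N s g) r + levyI2 N s g (u t₁) r x₁ +
        h t₁ x₁ (u t₁ x₁) := by
  set ψ : ℝ → EN N → ℝ := fun t x => φ t x + doublingPenalty (t, x) b / (2 * δ)
  have hψ : ContDiff ℝ 2 fun q : ℝ × EN N => ψ q.1 q.2 :=
    hφ.add ((contDiff_doublingPenalty.comp (contDiff_id.prodMk contDiff_const)).div_const _)
  have hφt : DifferentiableAt ℝ (fun t => φ t x₁) t₁ :=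
    (hφ.comp (f := fun t : ℝ => (t, x₁)) (by fun_prop)).differentiable (by norm_num) t₁
  have hφx : DifferentiableAt ℝ (φ t₁) x₁ :=
    (hφ.comp (f := fun x : EN N => (t₁, x)) (by fun_prop)).differentiable (by norm_num) x₁
  have hderiv : deriv (fun t => ψ t x₁) t₁ = deriv (fun t => φ t x₁) t₁ + (t₁ - b.1) / δ := by
    rw [← mul_div_mul_left (t₁ - b.1) δ two_ne_zero]
    exact (hφt.hasDerivAt.add ((hasDerivAt_doublingPenalty t₁ x₁ b).div_const _)).deriv
  have hfderiv : fderiv ℝ (ψ t₁) x₁ =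
      fderiv ℝ (φ t₁) x₁ + (2 * δ)⁻¹ • (2 • innerSL ℝ (x₁ - b.2)) := by
    simp only [ψ, div_eq_inv_mul]
    exact (hφx.hasFDerivAt.add
      ((hasFDerivAt_doublingPenalty t₁ x₁ b).const_mul (2 * δ)⁻¹)).fderiv
  have hvisc := hu.deriv_le_of_isMax (φ := ψ) ht₁ hψ hr.1 fun t ht x => by
    simpa only [ψ, sub_sub] using hmax t ht x
  have hI1 : levyI1 N s g (ψ t₁) r x₁ ≤ (c + 1 / (2 * δ)) * innerMass γ (levyKernel N s g) r := by
    refine levyI1_le hk (by positivity) fun z hz => ?_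
    have hweight : levyWeight γ z = ‖z‖ ^ 2 :=
      levyWeight_of_norm_le_one (zero_lt_one.trans hk.one_lt) hk.lt_two.le (hz.trans hr.2)
    have hquad := congrArg (· / (2 * δ)) (doublingPenalty_add t₁ x₁ z b)
    simp only [← hweight, sub_div, ← one_div_mul_eq_div _ (levyWeight γ z)] at hquad
    rw [hfderiv, add_apply, smul_apply, smul_eq_mul, inv_mul_eq_div, add_mul]
    refine le_of_eq_of_le ?_ (add_le_add (hinc z) hquad.le)
    simp only [ψ]
    ring
  rw [hderiv] at hvisc
  exact hvisc.trans (add_le_add_left (add_le_add_left hI1 _) _)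

lemma IsSubsol.deriv_le_of_isMax_doubling (hk : IsLevyKernel γ (levyKernel N s g))
    {h₁ h₂ : ℝ → EN N → ℝ → ℝ} {u₀ w₀ : EN N → ℝ} {u w φ : ℝ → EN N → ℝ} {B c δ S : ℝ}
    {a b : ℝ × EN N} (hu : IsSubsol N s g (reactionF h₁) u₀ u)
    (hw : IsSupersol N s g (reactionF h₂) w₀ w) (huc : JointlyContinuous u)
    (hwc : JointlyContinuous w) (huB : ∀ t ∈ Icc 0 S, ∀ x, |u t x| ≤ B)
    (hwB : ∀ t ∈ Icc 0 S, ∀ x, |w t x| ≤ B) (ha : a.1 ∈ Ioo 0 S) (hb : b.1 ∈ Ioo 0 S)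
    (hφ : ContDiff ℝ 2 fun q : ℝ × EN N => φ q.1 q.2) (hc : 0 ≤ c)
    (hinc : ∀ z, φ a.1 (a.2 + z) - φ a.1 a.2 - fderiv ℝ (φ a.1) a.2 z ≤ c * levyWeight γ z)
    (hδ : 0 < δ)
    (hmax : ∀ t ∈ Icc 0 S, ∀ x, ∀ t' ∈ Icc 0 S, ∀ x',
      u t x - φ t x - w t' x' - doublingPenalty (t, x) (t', x') / (2 * δ) ≤
        u a.1 a.2 - φ a.1 a.2 - w b.1 b.2 - doublingPenalty a b / (2 * δ)) :
    deriv (fun t => φ t a.2) a.1 ≤ c * levyMass γ (levyKernel N s g) +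
      (h₁ a.1 a.2 (u a.1 a.2) - h₂ b.1 b.2 (w b.1 b.2)) := by
  obtain ⟨t₁, x₁⟩ := a
  obtain ⟨t₂, x₂⟩ := b
  have ht₁ : t₁ ∈ Icc 0 S := Ioo_subset_Icc_self ha
  have ht₂ : t₂ ∈ Icc 0 S := Ioo_subset_Icc_self hb
  -- The common shift `z` of both variables cancels the penalty, so only `φ` is felt by `I^{2,r}`.
  have hfar : ∀ r > 0, levyI2 N s g (u t₁) r x₁ - levyI2 N s g (w t₂) r x₂ ≤
      c * outerMass γ (levyKernel N s g) r := fun r hr =>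
    levyI2_sub_levyI2_le hk hr (huc.continuous ht₁.1).measurable (huB t₁ ht₁)
      (hwc.continuous ht₂.1).measurable (hwB t₂ ht₂) (fderiv ℝ (φ t₁) x₁) fun z => by
        have hshift := hmax t₁ ht₁ (x₁ + z) t₂ ht₂ (x₂ + z)
        rw [doublingPenalty_add_shift] at hshift
        linarith [hinc z]
  have hle : ∀ r ∈ Ioc (0 : ℝ) 1, deriv (fun t => φ t x₁) t₁ ≤
      δ⁻¹ * innerMass γ (levyKernel N s g) r + (c * levyMass γ (levyKernel N s g) +
        (h₁ t₁ x₁ (u t₁ x₁) - h₂ t₂ x₂ (w t₂ x₂))) := by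
    intro r hr
    have hsub := hu.doubled_deriv_le hk (b := (t₂, x₂)) ha hφ hc hinc hδ hr fun t ht x => by
      linarith [hmax t ht x t₂ ht₂ x₂]
    have hsup := hw.neg
    rw [reflectRHS_reactionF] at hsup
    have hsup := hsup.doubled_deriv_le hk (φ := fun _ _ => 0) (c := 0) (b := (t₁, x₁)) hb
      contDiff_const le_rfl (fun z => by simp) hδ hr fun t ht x => by
        rw [doublingPenalty_comm, doublingPenalty_comm (t₂, x₂)]
        linarith [hmax t₁ ht₁ x₁ t ht x]
    simp only [deriv_const, levyI2_neg, reflectReaction, neg_neg] at hsup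
    rw [← hk.innerMass_add_outerMass (r := r)]
    have hcancel : (t₂ - t₁) / δ = -((t₁ - t₂) / δ) := by ring
    have hsplit : δ⁻¹ = 1 / (2 * δ) + 1 / (2 * δ) := by field_simp; norm_num
    rw [hsplit]
    linarith [hfar r hr.1]
  have hlim := (hk.tendsto_innerMass.const_mul δ⁻¹).add_const (c * levyMass γ (levyKernel N s g) +
    (h₁ t₁ x₁ (u t₁ x₁) - h₂ t₂ x₂ (w t₂ x₂)))
  rw [mul_zero, zero_add] at hlim
  refine ge_of_tendsto hlim ?_
  filter_upwards [Ioc_mem_nhdsGT one_pos] with r hr using hle r hr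

end DoubledInequality

/-! ### Comparison with a corrector -/

section CorrectorComparison

variable {N : ℕ} {s γ : ℝ} {g : EN N → ℝ}

/-- The plane `⟪p, ·⟫` penalized at infinity by the superlinear bracket with a time-dependent
weight `A`. -/
noncomputable def penalizedPlane (p : EN N) (γ : ℝ) (A : ℝ → ℝ) (t : ℝ) (x : EN N) : ℝ :=
  ⟪p, x⟫ + A t * bracket γ x

lemma contDiff_penalizedPlane (p : EN N) (γ : ℝ) {A : ℝ → ℝ} (hA : ContDiff ℝ 2 A) :
    ContDiff ℝ 2 fun q : ℝ × EN N => penalizedPlane p γ A q.1 q.2 :=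
  (contDiff_const.inner ℝ contDiff_snd).add
    ((hA.comp contDiff_fst).mul ((contDiff_bracket γ).comp contDiff_snd))

lemma deriv_penalizedPlane (p : EN N) (γ : ℝ) {A : ℝ → ℝ} {t : ℝ} (hA : DifferentiableAt ℝ A t)
    (x : EN N) : deriv (fun t => penalizedPlane p γ A t x) t = deriv A t * bracket γ x :=
  ((hA.hasDerivAt.mul_const (bracket γ x)).const_add ⟪p, x⟫).deriv

lemma fderiv_penalizedPlane (p : EN N) (γ : ℝ) (A : ℝ → ℝ) (t : ℝ) (x : EN N) :
    fderiv ℝ (penalizedPlane p γ A t) x = innerSL ℝ p + A t • bracketDeriv γ x :=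
  ((innerSL ℝ p).hasFDerivAt.add ((hasFDerivAt_bracket γ x).const_mul (A t))).fderiv

lemma penalizedPlane_add_le_levyWeight (hγ₁ : 1 ≤ γ) (hγ₂ : γ ≤ 2) (p : EN N) {A : ℝ → ℝ} {t : ℝ}
    (hA : 0 ≤ A t) (x z : EN N) :
    penalizedPlane p γ A t (x + z) - penalizedPlane p γ A t x -
      fderiv ℝ (penalizedPlane p γ A t) x z ≤ 5 * (A t * bracket γ x) * levyWeight γ z := by
  rw [fderiv_penalizedPlane, add_apply, smul_apply, innerSL_apply_apply, smul_eq_mul,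
    penalizedPlane, penalizedPlane, inner_add_right]
  linarith [mul_le_mul_of_nonneg_left (bracket_add_le_levyWeight hγ₁ hγ₂ x z) hA]

variable {K : ℝ} {h : ℝ → EN N → ℝ → ℝ}

/-- The exponential rate at which the penalization of a plane has to grow for the penalized plane
to be a strict barrier. -/
noncomputable def penaltyRate (γ : ℝ) (N : ℕ) (s : ℝ) (g : EN N → ℝ) (K : ℝ) : ℝ :=
  5 * levyMass γ (levyKernel N s g) + K + 1

lemma penaltyRate_nonneg (hk : IsLevyKernel γ (levyKernel N s g)) (hh : IsPeriodicReaction K h) :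
    0 ≤ penaltyRate γ N s g K :=
  add_nonneg (add_nonneg (mul_nonneg (by norm_num) hk.levyMass_nonneg) hh.nonneg) zero_le_one

lemma IsPeriodicReaction.sub_corrector_le (hh : IsPeriodicReaction K h) {p y y' : EN N}
    {τ τ' v v' X ω : ℝ} (hdist : ‖(τ, y) - (τ', y')‖ ≤ ω) (hX : 0 ≤ X)
    (hle : v' ≤ v - (⟪p, y⟫ + X)) (hge : v - (⟪p, y⟫ + X) ≤ v' + ω) :
    h τ y v - h τ' y' (v' + ⟪p, y'⟫) ≤ K * X + K * (‖p‖ + 3) * ω := by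
  have hK := hh.nonneg
  have hτ : |τ - τ'| ≤ ω := (norm_fst_le _).trans hdist
  have hy : ‖y - y'‖ ≤ ω := (norm_snd_le _).trans hdist
  have hp := abs_le.1 ((abs_real_inner_le_norm p (y - y')).trans
    (mul_le_mul_of_nonneg_left hy (norm_nonneg p)))
  rw [inner_sub_right] at hp
  have hv : |v - (v' + ⟪p, y'⟫)| ≤ X + ω + ‖p‖ * ω := by
    rw [abs_le]
    constructor <;> linarith
  calc h τ y v - h τ' y' (v' + ⟪p, y'⟫)
      ≤ K * (|τ - τ'| + ‖y - y'‖ + |v - (v' + ⟪p, y'⟫)|) := hh.sub_le ..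
    _ ≤ K * (ω + ω + (X + ω + ‖p‖ * ω)) := by gcongr
    _ = K * X + K * (‖p‖ + 3) * ω := by ring

lemma exists_pos_lt_and_mul_lt (a : ℝ) {b c : ℝ} (hb : 0 < b) (hc : 0 < c) :
    ∃ x > 0, x < b ∧ a * x < c := by
  have hlim : Tendsto (fun x => a * x) (nhdsWithin 0 (Ioi 0)) (nhds 0) := by
    simpa using (continuous_const_mul a).continuousWithinAt.tendsto (x := 0)
  obtain ⟨x, hx, hlt⟩ := ((eventually_mem_set.2 (Ioo_mem_nhdsGT hb)).and
    (hlim.eventually_lt_const hc)).exists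
  exact ⟨x, hx.1, hx.2, hlt⟩

lemma exists_norm_le_of_bracket_le_inner (hγ : 1 < γ) {κ : ℝ} (hκ : 0 < κ) (p : EN N) (C S : ℝ) :
    ∃ R : ℝ, ∀ t ∈ Icc 0 S, ∀ x, κ * bracket γ x ≤ C - ⟪p, x⟫ → ‖(t, x)‖ ≤ R := by
  obtain ⟨R, hR⟩ := exists_norm_le_of_bracket_le (E := EN N) hγ hκ (|C| + ‖p‖)
  refine ⟨max S R, fun t ht x hx => max_le_max ?_ (hR x ?_)⟩
  · exact (Real.norm_of_nonneg ht.1).trans_le ht.2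
  · have hp := neg_le_of_abs_le (abs_real_inner_le_norm p x)
    have hC : 0 ≤ |C| * ‖x‖ := by positivity
    linarith [le_abs_self C, norm_nonneg p]

/-- An exponential of rate `Λ`, boosted after time `T` by a factor of rate `a`: it stays comparable
to `exp (Λ t)` up to time `T`, but exceeds `a` at time `T + 1`. -/
noncomputable def growthFactor (Λ a T t : ℝ) : ℝ := Real.exp (Λ * t) * (1 + Real.exp (a * (t - T)))

section GrowthFactor

variable {Λ a T t : ℝ}

lemma contDiff_growthFactor (Λ a T : ℝ) : ContDiff ℝ 2 (growthFactor Λ a T) := by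
  unfold growthFactor
  fun_prop

lemma one_le_growthFactor (hΛ : 0 ≤ Λ) (ht : 0 ≤ t) : 1 ≤ growthFactor Λ a T t :=
  one_le_mul_of_one_le_of_one_le (Real.one_le_exp (by positivity))
    (le_add_of_nonneg_right (Real.exp_pos _).le)

lemma growthFactor_le (ha : 0 ≤ a) (ht : t ≤ T) : growthFactor Λ a T t ≤ 2 * Real.exp (Λ * t) := by
  have hexp : Real.exp (a * (t - T)) ≤ 1 :=
    Real.exp_le_one_iff.2 (mul_nonpos_of_nonneg_of_nonpos ha (sub_nonpos.2 ht))
  rw [growthFactor, mul_comm]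
  gcongr
  linarith

lemma one_add_le_growthFactor (hΛ : 0 ≤ Λ) (hT : 0 ≤ T) :
    1 + a ≤ growthFactor Λ a T (T + 1) := by
  rw [growthFactor, add_sub_cancel_left, mul_one]
  refine le_trans ?_ (le_mul_of_one_le_left (by positivity) (Real.one_le_exp (by positivity)))
  linarith [Real.add_one_le_exp a]

lemma mul_growthFactor_le_deriv (ha : 0 ≤ a) (t : ℝ) :
    Λ * growthFactor Λ a T t ≤ deriv (growthFactor Λ a T) t := by
  have hderiv : HasDerivAt (growthFactor Λ a T) (Real.exp (Λ * t) * (Λ * 1) *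
      (1 + Real.exp (a * (t - T))) + Real.exp (Λ * t) * (Real.exp (a * (t - T)) * (a * 1))) t :=
    ((hasDerivAt_id t).const_mul Λ).exp.mul
      ((((hasDerivAt_id t).sub_const T).const_mul a).exp.const_add 1)
  rw [hderiv.deriv, growthFactor]
  have hpos : 0 ≤ Real.exp (Λ * t) * (Real.exp (a * (t - T)) * (a * 1)) := by positivity
  linarith

end GrowthFactor

lemma IsSubsol.not_touches_corrector (hk : IsLevyKernel γ (levyKernel N s g))
    (hh : IsPeriodicReaction K h) {V₀ w₀ : EN N → ℝ} {V w : ℝ → EN N → ℝ} {p : EN N}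
    {A : ℝ → ℝ} {B S η κ : ℝ} {z : ℝ × EN N} (hV : IsSubsol N s g (reactionF h) V₀ V)
    (hw : IsSupersol N s g (correctorF h p) w₀ w) (hVc : JointlyContinuous V)
    (hwc : JointlyContinuous w) (hVB : ∀ t ∈ Icc 0 S, ∀ x, |V t x| ≤ B)
    (hwB : ∀ t ∈ Icc 0 S, ∀ x, |w t x| ≤ B) (hA : ContDiff ℝ 2 A) (hκ : 0 < κ)
    (hκA : ∀ t ∈ Icc 0 S, κ ≤ A t)
    (hrate : ∀ t ∈ Icc 0 S, penaltyRate γ N s g K * A t ≤ deriv A t) (hη : 0 < η)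
    (hle : ∀ t ∈ Icc 0 S, ∀ x, V t x - penalizedPlane p γ A t x ≤ w t x)
    (hgap₀ : ∀ x, V 0 x - penalizedPlane p γ A 0 x ≤ w 0 x - η)
    (hgapS : ∀ x, V S x - penalizedPlane p γ A S x ≤ w S x - η) (hz : z.1 ∈ Icc 0 S)
    (htouch : V z.1 z.2 - penalizedPlane p γ A z.1 z.2 = w z.1 z.2) : False := by
  have hγ₀ : 0 ≤ γ := zero_le_one.trans hk.one_lt.le
  obtain ⟨ω, hω, hωη, hωκ⟩ := exists_pos_lt_and_mul_lt (K * (‖p‖ + 3)) hη hκ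
  obtain ⟨R, hR⟩ := exists_norm_le_of_bracket_le_inner hk.one_lt hκ p (B + B) S
  have hinterior : ∀ t ∈ Icc 0 S, ∀ x, w t x ≤ V t x - penalizedPlane p γ A t x + ω →
      t ∈ Ioo 0 S := by
    refine fun t ht x hclose => ⟨ht.1.lt_of_ne' fun h₀ => ?_, ht.2.lt_of_ne fun hS => ?_⟩ <;>
      subst t
    · linarith [hgap₀ x]
    · linarith [hgapS x]
  obtain ⟨δ, hδ, a, ha, b, hb, hab, hwP, hPw, hwa, hwb, hmax⟩ := exists_isMax_doubling
    (P := fun a => V a.1 a.2 - penalizedPlane p γ A a.1 a.2) (w := fun a => w a.1 a.2) (z := z)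
    (B := B) (R := R) (isClosed_Icc.prod isClosed_univ)
    ((hVc.continuousOn_Icc S).sub (contDiff_penalizedPlane p γ hA).continuous.continuousOn)
    (hwc.continuousOn_Icc S) (fun a ha => hle a.1 ha.1 a.2) ⟨hz, mem_univ _⟩ htouch
    (fun a ha => neg_le_of_abs_le (hwB a.1 ha.1 a.2)) (fun a ha hB => hR a.1 ha.1 a.2 (by
      have hA := mul_le_mul_of_nonneg_right (hκA a.1 ha.1)
        (zero_le_one.trans (one_le_bracket hγ₀ a.2))
      rw [penalizedPlane] at hB
      linarith [le_of_abs_le (hVB a.1 ha.1 a.2)]))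
    (contDiff_doublingPenalty (n := 0)).continuous (doublingPenalty_self z)
    norm_sub_sq_le_doublingPenalty hω
  have hκX : κ ≤ A a.1 * bracket γ a.2 :=
    (hκA a.1 ha.1).trans (le_mul_of_one_le_right (hκ.le.trans (hκA a.1 ha.1))
      (one_le_bracket hγ₀ a.2))
  have hX : 0 ≤ A a.1 * bracket γ a.2 := hκ.le.trans hκX
  have hvisc := hV.deriv_le_of_isMax_doubling hk hw hVc hwc hVB hwB
    (hinterior a.1 ha.1 a.2 hwa) (hinterior b.1 hb.1 b.2 hwb) (contDiff_penalizedPlane p γ hA)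
    (by positivity) (penalizedPlane_add_le_levyWeight hk.one_lt.le hk.lt_two.le p
      (hκ.le.trans (hκA a.1 ha.1)) a.2) hδ
    fun t ht x t' ht' x' => hmax (t, x) ⟨ht, mem_univ x⟩ (t', x') ⟨ht', mem_univ x'⟩
  rw [deriv_penalizedPlane p γ (hA.differentiable (by norm_num) a.1)] at hvisc
  have hreact := hh.sub_corrector_le hab.le hX hwP hPw
  have hgrow := mul_le_mul_of_nonneg_right (hrate a.1 ha.1)
    (zero_le_one.trans (one_le_bracket hγ₀ a.2))
  -- With `X = A t * bracket γ x ≥ κ`, the growth rate of the penalty exceeds by one the rate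
  -- `5 * levyMass + K` at which the nonlocal and reaction terms can compensate it, while
  -- `K * (‖p‖ + 3) * ω < κ ≤ X`.
  rw [penaltyRate] at hgrow
  linarith

lemma IsSubsol.le_corrector_add_penalizedPlane (hk : IsLevyKernel γ (levyKernel N s g))
    (hh : IsPeriodicReaction K h) {V₀ w₀ : EN N → ℝ} {V w : ℝ → EN N → ℝ} {p : EN N}
    {A : ℝ → ℝ} {B S κ t : ℝ} (hV : IsSubsol N s g (reactionF h) V₀ V)
    (hw : IsSupersol N s g (correctorF h p) w₀ w) (hVc : JointlyContinuous V)
    (hwc : JointlyContinuous w) (hVB : ∀ t ∈ Icc 0 S, ∀ x, |V t x| ≤ B)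
    (hwB : ∀ t ∈ Icc 0 S, ∀ x, |w t x| ≤ B) (hA : ContDiff ℝ 2 A) (hκ : 0 < κ)
    (hκA : ∀ t ∈ Icc 0 S, κ ≤ A t)
    (hrate : ∀ t ∈ Icc 0 S, penaltyRate γ N s g K * A t ≤ deriv A t)
    (h₀ : ∀ x, V 0 x ≤ w 0 x + penalizedPlane p γ A 0 x)
    (hS : ∀ x, V S x ≤ w S x + penalizedPlane p γ A S x) (ht : t ∈ Icc 0 S) (x : EN N) :
    V t x ≤ w t x + penalizedPlane p γ A t x := by
  by_contra! hlt
  have hone : ∀ x : EN N, 1 ≤ bracket γ x := one_le_bracket (zero_le_one.trans hk.one_lt.le)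
  have hG : ∀ t ∈ Icc 0 S, ∀ x : EN N, κ ≤ A t * bracket γ x := fun t ht x =>
    (hκA t ht).trans (le_mul_of_one_le_right (hκ.le.trans (hκA t ht)) (hone x))
  obtain ⟨R, hR⟩ := exists_norm_le_of_bracket_le_inner hk.one_lt hκ p (B + B) S
  obtain ⟨c, hc, ⟨z, hz, htouch⟩, hle⟩ := exists_least_multiple (κ := 1) (a₀ := (t, x)) (R := R)
    (isClosed_Icc.prod isClosed_univ) (D := fun a : ℝ × EN N => V a.1 a.2 - w a.1 a.2 - ⟪p, a.2⟫)
    (((hVc.continuousOn_Icc S).sub (hwc.continuousOn_Icc S)).sub (by fun_prop))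
    (G := fun a => A a.1 * bracket γ a.2)
    ((hA.continuous.comp continuous_fst).mul
      ((contDiff_bracket γ).continuous.comp continuous_snd)).continuousOn
    (fun a ha => hκ.trans_le (hG a.1 ha.1 a.2)) ⟨ht, mem_univ x⟩
    (by rw [penalizedPlane] at hlt; linarith) fun a ha hD => hR a.1 ha.1 a.2 (by
      have hA := mul_le_mul_of_nonneg_right (hκA a.1 ha.1) (zero_le_one.trans (hone a.2))
      linarith [le_of_abs_le (hVB a.1 ha.1 a.2), neg_le_of_abs_le (hwB a.1 ha.1 a.2)])
  have hcA : ∀ t ∈ Icc 0 S, A t ≤ c * A t := fun t ht =>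
    le_mul_of_one_le_left (hκ.le.trans (hκA t ht)) hc.le
  have hgap : ∀ t ∈ Icc 0 S, (∀ x, V t x ≤ w t x + penalizedPlane p γ A t x) → ∀ x,
      V t x - penalizedPlane p γ (fun t => c * A t) t x ≤ w t x - (c - 1) * κ := by
    intro t ht hle x
    have hle := hle x
    have hκG := mul_le_mul_of_nonneg_left (hG t ht x) (sub_nonneg.2 hc.le)
    rw [penalizedPlane] at hle ⊢
    linarith
  refine hV.not_touches_corrector (z := z) hk hh hw hVc hwc hVB hwB (contDiff_const.mul hA) hκ
    (fun t ht => (hκA t ht).trans (hcA t ht)) (fun t ht => ?_)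
    (mul_pos (sub_pos.2 hc) hκ) (fun t ht x => ?_)
    (hgap 0 ⟨le_rfl, ht.1.trans ht.2⟩ h₀) (hgap S ⟨ht.1.trans ht.2, le_rfl⟩ hS) hz.1 ?_
  · rw [deriv_const_mul _ (hA.differentiable (by norm_num) t), mul_left_comm]
    exact mul_le_mul_of_nonneg_left (hrate t ht) (zero_le_one.trans hc.le)
  · have hD := hle (t, x) ⟨ht, mem_univ x⟩
    rw [penalizedPlane]
    linarith
  · rw [penalizedPlane]
    linarith

lemma add_norm_mul_norm_le_bracket (hγ : 1 ≤ γ) {c : ℝ} (hc : 0 ≤ c) (p x : EN N) :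
    c + ‖p‖ * ‖x‖ ≤ (c + ‖p‖) * bracket γ x := by
  rw [add_mul]
  exact add_le_add (le_mul_of_one_le_right hc (one_le_bracket (zero_le_one.trans hγ) x))
    (mul_le_mul_of_nonneg_left (norm_le_bracket hγ x) (norm_nonneg p))

lemma IsSubsol.le_corrector_add (hk : IsLevyKernel γ (levyKernel N s g))
    (hh : IsPeriodicReaction K h) {V₀ : EN N → ℝ} {V w : ℝ → EN N → ℝ} {p : EN N} {κ τ : ℝ}
    (hV : IsSubsol N s g (reactionF h) V₀ V)
    (hw : IsSupersol N s g (correctorF h p) (fun _ => 0) w) (hVc : JointlyContinuous V)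
    (hwc : JointlyContinuous w) (hκ : 0 < κ) (hinit : ∀ y, V 0 y ≤ ⟪p, y⟫ + κ * bracket γ y)
    (hτ : 0 ≤ τ) (y : EN N) :
    V τ y ≤ w τ y + ⟪p, y⟫ + 2 * κ * Real.exp (penaltyRate γ N s g K * τ) * bracket γ y := by
  have hone : ∀ x : EN N, 1 ≤ bracket γ x := one_le_bracket (zero_le_one.trans hk.one_lt.le)
  have hΛ := penaltyRate_nonneg hk hh
  obtain ⟨B₁, hB₁⟩ := hVc.exists_abs_le_Icc hV.2.1 (T := τ + 1) (by linarith)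
  obtain ⟨B₂, hB₂⟩ := hwc.exists_abs_le_Icc hw.2.1 (T := τ + 1) (by linarith)
  have hVB := fun t ht x => (hB₁ t ht x).trans (le_max_left B₁ B₂)
  have hwB := fun t ht x => (hB₂ t ht x).trans (le_max_right B₁ B₂)
  set B := max B₁ B₂
  have hlast : τ + 1 ∈ Icc 0 (τ + 1) := ⟨by linarith, le_rfl⟩
  have hB : 0 ≤ B := (abs_nonneg _).trans (hVB _ hlast 0)
  set a := (2 * B + ‖p‖) / κ
  have ha : 0 ≤ a := by positivity
  set G := growthFactor (penaltyRate γ N s g K) a τ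
  have hκG : ∀ t ∈ Icc 0 (τ + 1), κ ≤ κ * G t := fun t ht =>
    le_mul_of_one_le_right hκ.le (one_le_growthFactor hΛ ht.1)
  have hcomp := hV.le_corrector_add_penalizedPlane hk hh (A := fun t => κ * G t) hw hVc hwc hVB hwB
    (contDiff_const.mul (contDiff_growthFactor _ a τ)) hκ hκG (fun t _ => ?_) (fun x => ?_)
    (fun x => ?_) (t := τ) ⟨hτ, by linarith⟩ y
  · have hG := mul_le_mul_of_nonneg_right (mul_le_mul_of_nonneg_left
      (growthFactor_le (Λ := penaltyRate γ N s g K) ha (le_refl τ)) hκ.le)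
      (zero_le_one.trans (hone y))
    rw [penalizedPlane] at hcomp
    linarith
  · rw [deriv_const_mul _ ((contDiff_growthFactor _ a τ).differentiable (by norm_num) t),
      mul_left_comm]
    exact mul_le_mul_of_nonneg_left (mul_growthFactor_le_deriv ha t) hκ.le
  · have hG := mul_le_mul_of_nonneg_right (hκG 0 ⟨le_rfl, by linarith⟩)
      (zero_le_one.trans (hone x))
    rw [penalizedPlane]
    linarith [hinit x, hw.2.2.1 x]
  · have hG := mul_le_mul_of_nonneg_right (mul_le_mul_of_nonneg_left
      (one_add_le_growthFactor (a := a) hΛ hτ) hκ.le) (zero_le_one.trans (hone x))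
    have hC := add_norm_mul_norm_le_bracket hk.one_lt.le (mul_nonneg zero_le_two hB) p x
    rw [← mul_div_cancel₀ (2 * B + ‖p‖) hκ.ne'] at hC
    rw [penalizedPlane]
    linarith [le_of_abs_le (hVB _ hlast x), neg_le_of_abs_le (hwB _ hlast x),
      neg_le_of_abs_le (abs_real_inner_le_norm p x), mul_pos hκ (zero_lt_one.trans_le (hone x))]

end CorrectorComparison

/-! ### The slope of a subsolution at a contact point -/

section Superlinear

variable {γ ε v : ℝ}

lemma mul_rpow_sub_one_mul_rpow (hε : 0 < ε) (hv : 0 ≤ v) (γ : ℝ) :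
    ε * (ε ^ (γ - 1) * v ^ γ) = (ε * v) ^ γ := by
  rw [Real.mul_rpow hε.le hv, ← mul_assoc, mul_comm ε, ← Real.rpow_add_one hε.ne', sub_add_cancel]

lemma mul_sq_le_rpow_mul_rpow (hγ : 0 ≤ γ) (hγ₂ : γ ≤ 2) (hε : 0 < ε) (hv : 0 ≤ v)
    (hεv : ε * v ≤ 1) : ε * v ^ 2 ≤ ε ^ (γ - 1) * v ^ γ := by
  refine le_of_mul_le_mul_left ?_ hε
  rw [mul_rpow_sub_one_mul_rpow hε hv, ← mul_assoc, ← sq, ← mul_pow, ← Real.rpow_two]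
  exact Real.rpow_le_rpow_of_exponent_ge' (by positivity) hεv hγ hγ₂

lemma le_rpow_mul_rpow (hγ : 1 ≤ γ) (hε : 0 < ε) (hv : 0 ≤ v) (hεv : 1 ≤ ε * v) :
    v ≤ ε ^ (γ - 1) * v ^ γ := by
  refine le_of_mul_le_mul_left ?_ hε
  rw [mul_rpow_sub_one_mul_rpow hε hv]
  exact Real.self_le_rpow_of_one_le hεv hγ

-- The quadratic bound is used for `v ≤ ε⁻¹` and the linear one beyond; both error terms are then
-- small multiples of `v ^ γ`.
lemma le_superlinear {δ ρ b Q a F : ℝ} (hγ : 1 ≤ γ) (hγ₂ : γ ≤ 2) (hε : 0 < ε) (hδ : 0 ≤ δ)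
    (hρ : 0 ≤ ρ) (hb : 0 ≤ b) (hQ : 0 ≤ Q) (hv : 0 ≤ v) (hvF : v ≤ F) (hvγF : v ^ γ ≤ F)
    (hquad : a ≤ ρ * v + ε / δ * v ^ 2) (hlin : a ≤ b / ε + Q * v) :
    a ≤ (ρ + (1 / δ + b + Q) * ε ^ (γ - 1)) * F := by
  have hF : 0 ≤ F := hv.trans hvF
  have hpow : ε ^ (γ - 1) * v ^ γ ≤ ε ^ (γ - 1) * F := by gcongr
  rcases le_total (ε * v) 1 with hεv | hεv
  · have hsq := (mul_sq_le_rpow_mul_rpow (zero_le_one.trans hγ) hγ₂ hε hv hεv).trans hpow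
    calc a ≤ ρ * v + 1 / δ * (ε * v ^ 2) := by rwa [← mul_assoc, one_div_mul_eq_div]
      _ ≤ ρ * F + 1 / δ * (ε ^ (γ - 1) * F) := by gcongr
      _ ≤ ρ * F + 1 / δ * (ε ^ (γ - 1) * F) + (b + Q) * (ε ^ (γ - 1) * F) :=
        le_add_of_nonneg_right (by positivity)
      _ = (ρ + (1 / δ + b + Q) * ε ^ (γ - 1)) * F := by ring
  · have hvpow := (le_rpow_mul_rpow hγ hε hv hεv).trans hpow
    calc a ≤ b / ε + Q * v := hlin
      _ ≤ b * v + Q * v := by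
        gcongr
        rw [div_le_iff₀ hε, mul_assoc, mul_comm v]
        exact le_mul_of_one_le_right hb hεv
      _ ≤ b * (ε ^ (γ - 1) * F) + Q * (ε ^ (γ - 1) * F) := by gcongr
      _ ≤ b * (ε ^ (γ - 1) * F) + Q * (ε ^ (γ - 1) * F) + (ρ * F + 1 / δ * (ε ^ (γ - 1) * F)) :=
        le_add_of_nonneg_right (by positivity)
      _ = (ρ + (1 / δ + b + Q) * ε ^ (γ - 1)) * F := by ring

end Superlinear

lemma exists_nat_sub_mem_Icc {T a : ℝ} (ha : T ≤ a) : ∃ m : ℕ, a - m ∈ Icc T (T + 1) :=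
  ⟨⌊a - T⌋₊, by linarith [Nat.floor_le (sub_nonneg.2 ha)],
    by linarith [Nat.lt_floor_add_one (a - T)]⟩

/-- On the past `[0, t] × ℝ^N`, the function `u` is touched from above at `(t, x)` by a paraboloid
of time slope `lam`, gradient `q` and opening `1 / δ`, up to a cone of opening `β`, and it exceeds
its value at `(t, x)` by at most `b`. -/
structure IsUpperContact {N : ℕ} (δ β b : ℝ) (u : ℝ → EN N → ℝ) (t : ℝ) (x : EN N) (lam : ℝ)
    (q : EN N) : Prop where
  sub_le_paraboloid : ∀ t' ∈ Icc 0 t, ∀ x', u t' x' - u t x ≤ lam * (t' - t) +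
    (t' - t) ^ 2 / (2 * δ) + ⟪q, x' - x⟫ + ‖x' - x‖ ^ 2 / (2 * δ) + β * ‖x' - x‖
  sub_le : ∀ t' ∈ Icc 0 t, ∀ x', u t' x' - u t x ≤ b

section Contact

variable {N : ℕ} {u : ℝ → EN N → ℝ} {δ β b ε m n τ lam : ℝ} {k e q : EN N}

lemma blowUp_zero_sub (u : ℝ → EN N → ℝ) (y : EN N) :
    blowUp ε m k n u 0 y - blowUp ε m k n u τ e =
      (u (ε * m) (ε • (k + y)) - u (ε * (m + τ)) (ε • (k + e))) / ε := by
  rw [blowUp, blowUp, add_zero, sub_sub_sub_cancel_right, ← sub_div]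

lemma mul_mem_Icc_mul_add (hε : 0 ≤ ε) (hm : 0 ≤ m) (hτ : 0 ≤ τ) :
    ε * m ∈ Icc 0 (ε * (m + τ)) :=
  ⟨mul_nonneg hε hm, mul_le_mul_of_nonneg_left (le_add_of_nonneg_right hτ) hε⟩

lemma IsUpperContact.blowUp_zero_sub_le_paraboloid
    (hu : IsUpperContact δ β b u (ε * (m + τ)) (ε • (k + e)) lam q) (hε : 0 < ε) (hm : 0 ≤ m)
    (hτ : 0 ≤ τ) (y : EN N) :
    blowUp ε m k n u 0 y - blowUp ε m k n u τ e ≤ -(lam * τ) + ε * (τ ^ 2 / (2 * δ)) +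
      ⟪q, y - e⟫ + ε * (‖y - e‖ ^ 2 / (2 * δ)) + β * ‖y - e‖ := by
  have hpar := hu.sub_le_paraboloid (ε * m) (mul_mem_Icc_mul_add hε.le hm hτ) (ε • (k + y))
  rw [← smul_sub, add_sub_add_left_eq_sub, norm_smul, Real.norm_of_nonneg hε.le,
    real_inner_smul_right, ← mul_sub, sub_add_cancel_left] at hpar
  rw [blowUp_zero_sub, div_le_iff₀ hε]
  refine hpar.trans_eq ?_
  ring

lemma IsUpperContact.blowUp_zero_sub_le
    (hu : IsUpperContact δ β b u (ε * (m + τ)) (ε • (k + e)) lam q) (hε : 0 < ε) (hm : 0 ≤ m)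
    (hτ : 0 ≤ τ) (y : EN N) : blowUp ε m k n u 0 y - blowUp ε m k n u τ e ≤ b / ε := by
  rw [blowUp_zero_sub]
  exact div_le_div_of_nonneg_right (hu.sub_le _ (mul_mem_Icc_mul_add hε.le hm hτ) _) hε.le

lemma paraboloid_le {ρ Q R S : ℝ} {p : EN N} (hδ : 0 < δ) (hβ : 0 ≤ β) (hε : 0 ≤ ε)
    (he : ‖e‖ ≤ R) (hτ : τ ∈ Icc 0 S) (hq : ‖q‖ + β ≤ Q) (hqp : ‖q - p‖ ≤ ρ)
    (hεδ : ε * (S ^ 2 / (2 * δ) + R ^ 2 / δ) ≤ 1) (y : EN N) :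
    ε * (τ ^ 2 / (2 * δ)) + ⟪q, y - e⟫ + ε * (‖y - e‖ ^ 2 / (2 * δ)) + β * ‖y - e‖ ≤
      ⟪p, y⟫ + (ρ + β) * ‖y‖ + ε / δ * ‖y‖ ^ 2 + (Q * R + 1) := by
  have hR : 0 ≤ R := (norm_nonneg e).trans he
  have hnorm : ‖y - e‖ ≤ ‖y‖ + R := (norm_sub_le y e).trans (by gcongr)
  have hsq : ‖y - e‖ ^ 2 ≤ 2 * (‖y‖ ^ 2 + R ^ 2) :=
    (pow_le_pow_left₀ (norm_nonneg _) hnorm 2).trans add_sq_le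
  have htime : ε * (τ ^ 2 / (2 * δ)) ≤ ε * (S ^ 2 / (2 * δ)) := by
    gcongr
    exacts [hτ.1, hτ.2]
  have hspace : ε * (‖y - e‖ ^ 2 / (2 * δ)) ≤ ε / δ * ‖y‖ ^ 2 + ε * (R ^ 2 / δ) :=
    calc ε * (‖y - e‖ ^ 2 / (2 * δ)) ≤ ε * (2 * (‖y‖ ^ 2 + R ^ 2) / (2 * δ)) := by gcongr
      _ = ε / δ * ‖y‖ ^ 2 + ε * (R ^ 2 / δ) := by field
  have hinner : ⟪q, y - e⟫ ≤ ⟪p, y⟫ + ρ * ‖y‖ + ‖q‖ * R := by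
    have hqpy := (real_inner_le_norm (q - p) y).trans
      (mul_le_mul_of_nonneg_right hqp (norm_nonneg y))
    have hqe := (neg_le_of_abs_le (abs_real_inner_le_norm q e)).trans' (neg_le_neg
      (mul_le_mul_of_nonneg_left he (norm_nonneg q)))
    rw [inner_sub_left] at hqpy
    rw [inner_sub_right]
    linarith
  have hcone : β * ‖y - e‖ ≤ β * ‖y‖ + β * R := by
    rw [← mul_add]
    gcongr
  have hQ : (‖q‖ + β) * R ≤ Q * R := by gcongr
  linarith

lemma IsUpperContact.blowUp_zero_le_plane {γ ρ L Q R S : ℝ} {p : EN N}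
    (hu : IsUpperContact δ β b u (ε * (m + τ)) (ε • (k + e)) lam q) (hγ : 1 ≤ γ) (hγ₂ : γ ≤ 2)
    (hδ : 0 < δ) (hβ : 0 ≤ β) (hb : 0 ≤ b) (hε : 0 < ε) (hε₁ : ε ≤ 1) (hm : 0 ≤ m)
    (hτ : τ ∈ Icc 0 S) (he : ‖e‖ ≤ R) (hlam : lam * τ ≤ L) (hL : 0 ≤ L) (hp : ‖p‖ ≤ Q)
    (hq : ‖q‖ + β ≤ Q) (hqp : ‖q - p‖ ≤ ρ) (hεδ : ε * (S ^ 2 / (2 * δ) + R ^ 2 / δ) ≤ 1)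
    (hstart : blowUp ε m k n u τ e ≤ lam * τ - (Q * R + 1)) (y : EN N) :
    blowUp ε m k n u 0 y ≤
      ⟪p, y⟫ + (ρ + β + (1 / δ + (b + L) + Q) * ε ^ (γ - 1)) * bracket γ y := by
  have hQ : 0 ≤ Q := (norm_nonneg p).trans hp
  have hR : 0 ≤ R := (norm_nonneg e).trans he
  have hρ : 0 ≤ ρ := (norm_nonneg _).trans hqp
  have hquad : blowUp ε m k n u 0 y - ⟪p, y⟫ ≤ (ρ + β) * ‖y‖ + ε / δ * ‖y‖ ^ 2 := by
    have hpar := hu.blowUp_zero_sub_le_paraboloid (n := n) hε hm hτ.1 y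
    linarith [paraboloid_le hδ hβ hε.le he hτ hq hqp hεδ y]
  have hlin : blowUp ε m k n u 0 y - ⟪p, y⟫ ≤ (b + L) / ε + Q * ‖y‖ := by
    have hb := hu.blowUp_zero_sub_le (n := n) hε hm hτ.1 y
    have hLε : L ≤ L / ε := le_div_self hL hε hε₁
    have hpy := mul_le_mul_of_nonneg_right hp (norm_nonneg y)
    have hQR : 0 ≤ Q * R := by positivity
    rw [add_div]
    linarith [neg_le_of_abs_le (abs_real_inner_le_norm p y)]
  have hsuper := le_superlinear hγ hγ₂ hε hδ.le (by positivity) (by positivity) hQ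
    (norm_nonneg y) (norm_le_bracket hγ y) (norm_rpow_le_bracket (by positivity) y) hquad hlin
  linarith

lemma exp_penaltyRate_mul_bracket_le {s γ K S : ℝ} {g : EN N → ℝ} {h : ℝ → EN N → ℝ → ℝ}
    (hk : IsLevyKernel γ (levyKernel N s g)) (hh : IsPeriodicReaction K h) (hτ : τ ≤ S)
    (he : ‖e‖ ≤ √N) : Real.exp (penaltyRate γ N s g K * τ) * bracket γ e ≤
      Real.exp (penaltyRate γ N s g K * S) * (1 + N) := by
  have hΛ := penaltyRate_nonneg hk hh
  have hbracket : bracket γ e ≤ 1 + √N ^ 2 :=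
    (bracket_le_one_add_norm_sq hk.lt_two.le e).trans (by gcongr)
  rw [Real.sq_sqrt N.cast_nonneg] at hbracket
  have hbracket₀ := one_le_bracket (zero_le_one.trans hk.one_lt.le) e
  gcongr

lemma IsUpperContact.mul_le_corrector {s γ K T₀ L ρ Q t : ℝ} {g u₀ : EN N → ℝ}
    {h : ℝ → EN N → ℝ → ℝ} {w : ℝ → EN N → ℝ} {p x : EN N}
    (hk : IsLevyKernel γ (levyKernel N s g)) (hh : IsPeriodicReaction K h)
    (huc : JointlyContinuous u) (hsub : IsSubsol N s g (oscillatingF s h ε) u₀ u)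
    (hwc : JointlyContinuous w) (hw : IsSupersol N s g (correctorF h p) (fun _ => 0) w)
    (hu : IsUpperContact δ β b u t x lam q) (hδ : 0 < δ) (hβ : 0 < β) (hb : 0 ≤ b) (hε : 0 < ε)
    (hε₁ : ε ≤ 1) (hT₀ : 0 ≤ T₀) (ht : T₀ ≤ t / ε) (hlam : |lam| * (T₀ + 1) ≤ L) (hp : ‖p‖ ≤ Q)
    (hq : ‖q‖ + β ≤ Q) (hqp : ‖q - p‖ ≤ ρ) (hεδ : ε * ((T₀ + 1) ^ 2 / (2 * δ) + N / δ) ≤ 1) :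
    ∃ τ ∈ Icc T₀ (T₀ + 1), ∃ e : EN N, ‖e‖ ≤ √N ∧ lam * τ ≤ 2 * (Q * √N + 1) + w τ e +
      2 * (ρ + β + (1 / δ + (b + L) + Q) * ε ^ (γ - 1)) *
        Real.exp (penaltyRate γ N s g K * (T₀ + 1)) * (1 + N) := by
  -- The blow-up is centred at the point `(m, k)` of the time-space lattice next to the contact
  -- point, and is shifted by the integer `n` so that it starts below the plane of slope `p`.
  obtain ⟨m, hτ⟩ := exists_nat_sub_mem_Icc ht
  obtain ⟨k, he⟩ := exists_norm_sub_latticePoint_le (ε⁻¹ • x)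
  set τ := t / ε - m with hτ_def
  set e := ε⁻¹ • x - latticePoint k with he_def
  have htτ : ε * (m + τ) = t := by rw [hτ_def, add_sub_cancel, mul_div_cancel₀ t hε.ne']
  have hxe : ε • (latticePoint k + e) = x := by
    rw [he_def, add_sub_cancel, smul_inv_smul₀ hε.ne']
  have hτ₀ : 0 ≤ τ := hT₀.trans hτ.1
  have hN : √(N : ℝ) ^ 2 = N := Real.sq_sqrt N.cast_nonneg
  have hL : 0 ≤ L := hlam.trans' (by positivity)
  have hlamτ : lam * τ ≤ L := (mul_le_mul (le_abs_self lam) hτ.2 hτ₀ (abs_nonneg lam)).trans hlam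
  have hQ : 0 ≤ Q := (norm_nonneg p).trans hp
  set n := ⌈u t x / ε - lam * τ + (Q * √N + 1)⌉
  set κ := ρ + β + (1 / δ + (b + L) + Q) * ε ^ (γ - 1)
  have hρ : 0 ≤ ρ := (norm_nonneg _).trans hqp
  have hκ : 0 < κ := by positivity
  have hVe : blowUp ε m (latticePoint k) n u τ e = u t x / ε - n := by rw [blowUp, htτ, hxe]
  rw [← htτ, ← hxe] at hu
  have hstart := hu.blowUp_zero_le_plane (n := n) hk.one_lt.le hk.lt_two.le hδ hβ.le hb hε hε₁
    m.cast_nonneg ⟨hτ₀, hτ.2⟩ he hlamτ hL hp hq hqp (hN.symm ▸ hεδ)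
    (by linarith [Int.le_ceil (u t x / ε - lam * τ + (Q * √N + 1))])
  have hcorr := (hsub.blowUp hε hh huc m k n).le_corrector_add hk hh hw
    (huc.blowUp hε m.cast_nonneg) hwc hκ hstart hτ₀ e
  have hpe : ⟪p, e⟫ ≤ Q * √N :=
    (real_inner_le_norm p e).trans (mul_le_mul hp he (norm_nonneg e) hQ)
  have hgrowth := mul_le_mul_of_nonneg_left (exp_penaltyRate_mul_bracket_le hk hh hτ.2 he)
    (mul_nonneg zero_le_two hκ.le)
  refine ⟨τ, hτ, e, he, ?_⟩
  rw [hVe] at hcorr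
  linarith [Int.ceil_lt_add_one (u t x / ε - lam * τ + (Q * √N + 1))]

end Contact

/-! ### Uniform slope bound -/

section SlopeBound

open scoped Topology

variable {N : ℕ} {s γ K : ℝ} {g u₀ : EN N → ℝ} {h : ℝ → EN N → ℝ → ℝ} {u : ℝ → ℝ → EN N → ℝ}
  {Ham : EN N → ℝ} {δ tmin θ lamMax b : ℝ}

/-- For small `β` and then small `ε`, a contact of `u ε` from above, at a time `t ≥ tmin` and with
gradient `q ∈ A`, has a time slope at most `Ham q + θ`. -/
def HasSlopeBound (Ham : EN N → ℝ) (u : ℝ → ℝ → EN N → ℝ) (δ tmin θ lamMax b : ℝ)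
    (A : Set (EN N)) : Prop :=
  ∀ᶠ β in 𝓝[>] 0, ∀ᶠ ε in 𝓝[>] 0, ∀ q ∈ A, ∀ t x lam, tmin ≤ t → |lam| ≤ lamMax →
    IsUpperContact δ β b (u ε) t x lam q → lam ≤ Ham q + θ

lemma HasSlopeBound.mono {A B : Set (EN N)} (hAB : A ⊆ B)
    (hB : HasSlopeBound Ham u δ tmin θ lamMax b B) : HasSlopeBound Ham u δ tmin θ lamMax b A :=
  Eventually.mono hB fun _ hβ => hβ.mono fun _ hε q hq => hε q (hAB hq)

lemma HasSlopeBound.union {A B : Set (EN N)} (hA : HasSlopeBound Ham u δ tmin θ lamMax b A)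
    (hB : HasSlopeBound Ham u δ tmin θ lamMax b B) :
    HasSlopeBound Ham u δ tmin θ lamMax b (A ∪ B) := by
  filter_upwards [hA, hB] with β hAβ hBβ
  filter_upwards [hAβ, hBβ] with ε hAε hBε q hq
  exact hq.elim (hAε q) (hBε q)

lemma SlopeLim.exists_add_le_mul {w : ℝ → EN N → ℝ} {lam : ℝ} (hw : SlopeLim N w lam) (hθ : 0 < θ)
    (C : ℝ) {R : ℝ} (hR : 0 < R) :
    ∃ T > 0, ∀ τ, T ≤ τ → ∀ y, ‖y‖ ≤ R → C + w τ y ≤ (lam + θ) * τ := by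
  obtain ⟨T, hT⟩ := hw (θ / 2) (half_pos hθ) R hR
  refine ⟨max (max 1 T) (C / (θ / 2)), by positivity, fun τ hτ y hy => ?_⟩
  simp only [max_le_iff] at hτ
  have hτ₀ : 0 < τ := zero_lt_one.trans_le hτ.1.1
  have hwτ := le_of_abs_le (hT τ hτ.1.2 y hy)
  rw [sub_le_iff_le_add', div_le_iff₀ hτ₀] at hwτ
  have hC := (div_le_iff₀' (half_pos hθ)).1 hτ.2
  linarith

lemma eventually_nhdsGT_zero_le {f : ℝ → ℝ} {c : ℝ} (hf : ContinuousAt f 0) (hc : f 0 < c) :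
    ∀ᶠ ε in 𝓝[>] 0, f ε ≤ c :=
  (hf.eventually_lt_const hc).filter_mono nhdsWithin_le_nhds |>.mono fun _ => le_of_lt

lemma eventually_nhdsGT_zero_scale {a c tmin : ℝ} (ha : 0 < a) (hc : 0 < c) (htmin : 0 < tmin)
    (B D T : ℝ) :
    ∀ᶠ ε in 𝓝[>] 0, 0 < ε ∧ ε ≤ 1 ∧ B * ε ^ a ≤ c ∧ ε * D ≤ 1 ∧ T ≤ tmin / ε := by
  have hrpow : ContinuousAt (fun ε : ℝ => B * ε ^ a) 0 :=
    (Real.continuousAt_rpow_const 0 a (Or.inr ha.le)).const_mul B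
  filter_upwards [self_mem_nhdsWithin, eventually_nhdsGT_zero_le continuousAt_id one_pos,
    eventually_nhdsGT_zero_le hrpow (by simpa [Real.zero_rpow ha.ne'] using hc),
    eventually_nhdsGT_zero_le (f := fun ε => ε * D) (c := 1) (by fun_prop) (by simp),
    eventually_nhdsGT_zero_le (f := fun ε => T * ε) (c := tmin) (by fun_prop)
      (by simpa using htmin)] with ε hε hone hB hD hT
  exact ⟨hε, hone, hB, hD, (le_div_iff₀ hε).2 hT⟩

-- The microscopic time `T₀` is chosen so that the corrector has almost reached its asymptotic
-- slope, and only then `ρ`, `β` and `ε` so that the errors are negligible up to that time.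
lemma exists_hasSlopeBound_closedBall (hk : IsLevyKernel γ (levyKernel N s g))
    (hh : IsPeriodicReaction K h) (huc : ∀ ε, 0 < ε → JointlyContinuous (u ε))
    (hu : ∀ ε, 0 < ε → IsSubsol N s g (oscillatingF s h ε) u₀ (u ε)) (hHam : Continuous Ham)
    {p : EN N} {w : ℝ → EN N → ℝ} (hwc : JointlyContinuous w)
    (hw : IsSupersol N s g (correctorF h p) (fun _ => 0) w) (hlim : SlopeLim N w (Ham p))
    (hδ : 0 < δ) (htmin : 0 < tmin) (hθ : 0 < θ) (hb : 0 ≤ b) :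
    ∃ ρ > 0, HasSlopeBound Ham u δ tmin θ lamMax b (closedBall p ρ) := by
  set Q := ‖p‖ + 2 with hQ
  obtain ⟨T₀, hT₀, hgrowth⟩ := hlim.exists_add_le_mul (half_pos hθ) (2 * (Q * √N + 1) + 1)
    (R := √N + 1) (by positivity)
  set G := Real.exp (penaltyRate γ N s g K * (T₀ + 1)) * (1 + N)
  have : 0 < G := by positivity
  obtain ⟨ρ₀, hρ₀, hHamρ⟩ := Metric.continuousAt_iff.1 (hHam.continuousAt (x := p)) (θ / 2)
    (half_pos hθ)
  obtain ⟨ρ, hρ, hρmin⟩ := exists_between (show 0 < min ρ₀ (min 1 (1 / (6 * G))) by positivity)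
  simp only [lt_min_iff] at hρmin
  refine ⟨ρ, hρ, ?_⟩
  filter_upwards [self_mem_nhdsWithin, eventually_nhdsGT_zero_le continuousAt_id
    (show 0 < min 1 (1 / (6 * G)) by positivity)] with β hβ hβmin
  filter_upwards [eventually_nhdsGT_zero_scale (sub_pos.2 hk.one_lt)
    (show 0 < 1 / (6 * G) by positivity) htmin (1 / δ + (b + lamMax * (T₀ + 1)) + Q)
    ((T₀ + 1) ^ 2 / (2 * δ) + N / δ) T₀] with ε ⟨hε, hε₁, hεγ, hεδ, hεT⟩
  intro q hq t x lam ht hlamle hcontact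
  rw [mem_closedBall, dist_eq_norm] at hq
  simp only [id, le_min_iff] at hβmin
  have hqQ : ‖q‖ + β ≤ Q := by linarith [hQ, norm_le_norm_add_norm_sub' q p, hρmin.2.1]
  obtain ⟨τ, hτ, e, he, hle⟩ := hcontact.mul_le_corrector (L := lamMax * (T₀ + 1)) hk hh
    (huc ε hε) (hu ε hε) hwc hw hδ hβ hb hε hε₁ hT₀.le (hεT.trans (by gcongr)) (by gcongr)
    (by linarith) hqQ hq hεδ
  rw [mul_assoc (2 * _)] at hle
  have herror : 2 * (ρ + β + (1 / δ + (b + lamMax * (T₀ + 1)) + Q) * ε ^ (γ - 1)) * G ≤ 1 :=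
    calc _ ≤ 2 * (1 / (6 * G) + 1 / (6 * G) + 1 / (6 * G)) * G := by
          gcongr
          exacts [hρmin.2.2.le, hβmin.2]
      _ = 1 := by field
  have hτ₀ : 0 < τ := hT₀.trans_le hτ.1
  have hlamp : lam ≤ Ham p + θ / 2 := by
    refine le_of_mul_le_mul_right ?_ hτ₀
    linarith [hgrowth τ hτ.1 e (by linarith)]
  have hHamq := hHamρ (x := q) (by rw [dist_eq_norm]; exact hq.trans_lt hρmin.1)
  rw [Real.dist_eq] at hHamq
  linarith [(abs_lt.1 hHamq).1]

lemma hasSlopeBound_of_isCompact {A : Set (EN N)} (hA : IsCompact A)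
    (hk : IsLevyKernel γ (levyKernel N s g)) (hh : IsPeriodicReaction K h)
    (huc : ∀ ε, 0 < ε → JointlyContinuous (u ε))
    (hu : ∀ ε, 0 < ε → IsSubsol N s g (oscillatingF s h ε) u₀ (u ε)) (hHam : Continuous Ham)
    (hw : ∀ p, ∃ w : ℝ → EN N → ℝ, JointlyContinuous w ∧
      IsSupersol N s g (correctorF h p) (fun _ => 0) w ∧ SlopeLim N w (Ham p))
    (hδ : 0 < δ) (htmin : 0 < tmin) (hθ : 0 < θ) (hb : 0 ≤ b) :
    HasSlopeBound Ham u δ tmin θ lamMax b A := by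
  refine hA.induction_on ?_ (fun _ _ => HasSlopeBound.mono) (fun _ _ => HasSlopeBound.union)
    fun p _ => ?_
  · exact .of_forall fun β => .of_forall fun ε q hq => (notMem_empty q hq).elim
  · obtain ⟨w, hwc, hws, hlim⟩ := hw p
    obtain ⟨ρ, hρ, hbound⟩ := exists_hasSlopeBound_closedBall hk hh huc hu hHam hwc hws hlim hδ
      htmin hθ hb
    exact ⟨closedBall p ρ, mem_nhdsWithin_of_mem_nhds (closedBall_mem_nhds p hρ), hbound⟩

end SlopeBound

/-! ### Comparison with the limit equation -/

section PenalizedGap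

variable {N : ℕ} {s B B' T S d δ θ β : ℝ} {g u₀ Ham : EN N → ℝ} {u v : ℝ → EN N → ℝ}
  {a b : ℝ × EN N}

/-- The functional maximised in the doubling of variables: the gap between `u` at `a` and `v` at
`b`, penalized by the distance from `a` to `b`, by the time and by the growth at infinity. -/
noncomputable def penalizedGap (δ θ β : ℝ) (u v : ℝ → EN N → ℝ) (a b : ℝ × EN N) : ℝ :=
  u a.1 a.2 - v b.1 b.2 - doublingPenalty a b / (2 * δ) - θ * a.1 - β * bracket 1 a.2

lemma penalizedGap_self (a : ℝ × EN N) :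
    penalizedGap δ θ β u v a a = u a.1 a.2 - v a.1 a.2 - θ * a.1 - β * bracket 1 a.2 := by
  rw [penalizedGap, doublingPenalty_self, zero_div, sub_zero]

lemma doublingPenalty_nonneg (a b : ℝ × EN N) : 0 ≤ doublingPenalty a b :=
  (sq_nonneg _).trans (norm_sub_sq_le_doublingPenalty a b)

lemma mul_bracket_nonneg (hβ : 0 ≤ β) (x : EN N) : 0 ≤ β * bracket 1 x :=
  mul_nonneg hβ (zero_le_one.trans (one_le_bracket zero_le_one x))

lemma penalizedGap_add_le (hθ : 0 ≤ θ) (ha : 0 ≤ a.1) :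
    penalizedGap δ θ β u v a b + doublingPenalty a b / (2 * δ) + β * bracket 1 a.2 ≤
      u a.1 a.2 - v b.1 b.2 := by
  rw [penalizedGap]
  linarith [mul_nonneg hθ ha]

lemma penalizedGap_le (hδ : 0 ≤ δ) (hθ : 0 ≤ θ) (hβ : 0 ≤ β) (ha : 0 ≤ a.1) :
    penalizedGap δ θ β u v a b ≤ u a.1 a.2 - v b.1 b.2 := by
  have hdist : 0 ≤ doublingPenalty a b / (2 * δ) :=
    div_nonneg (doublingPenalty_nonneg a b) (by positivity)
  linarith [penalizedGap_add_le (δ := δ) (β := β) (u := u) (v := v) (b := b) hθ ha,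
    mul_bracket_nonneg hβ a.2]

lemma norm_sub_lt_of_penalizedGap_nonneg (hδ : 0 < δ) (hθ : 0 ≤ θ) (hβ : 0 ≤ β) (hd : 0 ≤ d)
    (hδd : B * (2 * δ) < d ^ 2) (ha : 0 ≤ a.1) (hB : u a.1 a.2 - v b.1 b.2 ≤ B)
    (hgap : 0 ≤ penalizedGap δ θ β u v a b) : ‖a - b‖ < d := by
  have hpen : doublingPenalty a b ≤ B * (2 * δ) :=
    (div_le_iff₀ (by positivity)).1 (by
      linarith [penalizedGap_add_le (δ := δ) (β := β) (u := u) (v := v) (b := b) hθ ha,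
        mul_bracket_nonneg hβ a.2])
  exact lt_of_pow_lt_pow_left₀ 2 hd
    (((norm_sub_sq_le_doublingPenalty a b).trans hpen).trans_lt hδd)

lemma norm_le_of_penalizedGap_nonneg (hδ : 0 ≤ δ) (hθ : 0 ≤ θ) (hβ : 0 < β) (ha : 0 ≤ a.1)
    (hB : u a.1 a.2 - v b.1 b.2 ≤ B) (hgap : 0 ≤ penalizedGap δ θ β u v a b) :
    ‖a.2‖ ≤ B / β := by
  have hdist : 0 ≤ doublingPenalty a b / (2 * δ) :=
    div_nonneg (doublingPenalty_nonneg a b) (by positivity)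
  refine (norm_le_bracket le_rfl _).trans ((le_div_iff₀' hβ).2 ?_)
  linarith [penalizedGap_add_le (δ := δ) (β := β) (u := u) (v := v) (b := b) hθ ha]

lemma JointlyContinuous.continuousOn_penalizedGap (hu : JointlyContinuous u)
    (hv : JointlyContinuous v) :
    ContinuousOn (fun q : (ℝ × EN N) × (ℝ × EN N) => penalizedGap δ θ β u v q.1 q.2)
      ((Icc 0 T ×ˢ univ) ×ˢ (Icc 0 S ×ˢ univ)) := by
  have hbracket : Continuous (bracket 1 : EN N → ℝ) := (contDiff_bracket 1).continuous
  have hpenalty : Continuous fun q : (ℝ × EN N) × (ℝ × EN N) => doublingPenalty q.1 q.2 :=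
    (contDiff_doublingPenalty (n := 0)).continuous
  refine (((ContinuousOn.sub ?_ ?_).sub ?_).sub ?_).sub ?_
  · exact (hu.continuousOn_Icc T).comp continuousOn_fst fun q hq => hq.1
  · exact (hv.continuousOn_Icc S).comp continuousOn_snd fun q hq => hq.2
  all_goals exact Continuous.continuousOn (by fun_prop)

lemma exists_isMax_penalizedGap (hu : JointlyContinuous u) (hv : JointlyContinuous v)
    (huB : ∀ t ∈ Icc 0 T, ∀ x, u t x ≤ B) (hvB : ∀ t ∈ Icc 0 S, ∀ x, -B' ≤ v t x) (hδ : 0 < δ)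
    (hθ : 0 ≤ θ) (hβ : 0 < β) (hd : 0 ≤ d) (hδd : (B + B') * (2 * δ) < d ^ 2) {t₁ : ℝ} {x₁ : EN N}
    (hT : t₁ ∈ Icc 0 T) (hS : t₁ ∈ Icc 0 S)
    (hgap : 0 ≤ penalizedGap δ θ β u v (t₁, x₁) (t₁, x₁)) :
    ∃ a ∈ Icc 0 T ×ˢ univ, ∃ b ∈ Icc 0 S ×ˢ univ,
      ∀ a' ∈ Icc 0 T ×ˢ univ, ∀ b' ∈ Icc 0 S ×ˢ univ,
        penalizedGap δ θ β u v a' b' ≤ penalizedGap δ θ β u v a b := by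
  obtain ⟨⟨a, b⟩, ⟨ha, hb⟩, hmax⟩ := exists_isMaxOn_of_norm_le
    ((isClosed_Icc.prod isClosed_univ).prod (isClosed_Icc.prod isClosed_univ))
    (hu.continuousOn_penalizedGap hv) (a₀ := ((t₁, x₁), (t₁, x₁)))
    (R := max T ((B + B') / β) + d) ⟨⟨hT, mem_univ _⟩, ⟨hS, mem_univ _⟩⟩
    fun q ⟨ha, hb⟩ hle => by
      have hB : u q.1.1 q.1.2 - v q.2.1 q.2.2 ≤ B + B' := by
        linarith [huB _ ha.1 q.1.2, hvB _ hb.1 q.2.2]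
      have hdist := norm_sub_lt_of_penalizedGap_nonneg hδ hθ hβ.le hd hδd ha.1.1 hB
        (hgap.trans hle)
      have hfst : ‖q.1‖ ≤ max T ((B + B') / β) :=
        max_le_max ((Real.norm_of_nonneg ha.1.1).trans_le ha.1.2)
          (norm_le_of_penalizedGap_nonneg hδ.le hθ hβ ha.1.1 hB (hgap.trans hle))
      exact max_le (by linarith) (by linarith [norm_le_norm_add_norm_sub q.1 q.2])
  exact ⟨a, ha, b, hb, fun a' ha' b' hb' => hmax (show (a', b') ∈ _ from ⟨ha', hb'⟩)⟩

lemma IsSupersol.hamiltonian_le_of_isMin (hv : IsSupersol N s g (hamiltonF Ham) u₀ v)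
    (hb : b.1 ∈ Ioo 0 S)
    (hmin : ∀ t ∈ Icc 0 S, ∀ x, v b.1 b.2 + doublingPenalty b a / (2 * δ) ≤
      v t x + doublingPenalty (t, x) a / (2 * δ)) :
    Ham (δ⁻¹ • (a.2 - b.2)) ≤ (a.1 - b.1) / δ := by
  obtain ⟨t', y⟩ := b
  have hφ : ContDiff ℝ 2 fun q : ℝ × EN N => -(doublingPenalty q a / (2 * δ)) :=
    ((contDiff_doublingPenalty.comp (contDiff_id.prodMk contDiff_const)).div_const _).neg
  have hvisc := hv.le_deriv_of_isMin (φ := fun t x => -(doublingPenalty (t, x) a / (2 * δ))) hb hφ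
    one_pos fun t ht x => by simpa only [sub_neg_eq_add] using hmin t ht x
  have hderiv : deriv (fun t => -(doublingPenalty (t, y) a / (2 * δ))) t' = (a.1 - t') / δ := by
    rw [((hasDerivAt_doublingPenalty t' y a).div_const _).fun_neg.deriv,
      mul_div_mul_left _ _ two_ne_zero, ← neg_div, neg_sub]
  have hfderiv : fderiv ℝ (fun x => -(doublingPenalty (t', x) a / (2 * δ))) y =
      InnerProductSpace.toDual ℝ (EN N) (δ⁻¹ • (a.2 - y)) := by
    simp only [div_eq_inv_mul]
    rw [((hasFDerivAt_doublingPenalty t' y a).const_mul (2 * δ)⁻¹).fun_neg.fderiv]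
    ext z
    simp only [neg_apply, smul_apply, innerSL_apply_apply, InnerProductSpace.toDual_apply_apply,
      real_inner_smul_left, smul_eq_mul, nsmul_eq_mul, Nat.cast_ofNat, inner_sub_left, mul_inv]
    ring
  rw [hderiv, hfderiv, hamiltonF, LinearIsometryEquiv.symm_apply_apply] at hvisc
  exact hvisc

lemma isUpperContact_of_isMax_penalizedGap (hδ : δ ≠ 0) (hβ : 0 ≤ β)
    (hmax : ∀ t ∈ Icc 0 a.1, ∀ x,
      penalizedGap δ θ β u v (t, x) b ≤ penalizedGap δ θ β u v a b)
    (hB : ∀ t ∈ Icc 0 a.1, ∀ x, u t x - u a.1 a.2 ≤ B) :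
    IsUpperContact δ β B u a.1 a.2 ((a.1 - b.1) / δ + θ) (δ⁻¹ • (a.2 - b.2)) where
  sub_le_paraboloid t ht x := by
    have hle := hmax t ht x
    have hexpand : doublingPenalty (t, x) b / (2 * δ) = doublingPenalty a b / (2 * δ) +
        (a.1 - b.1) / δ * (t - a.1) + (t - a.1) ^ 2 / (2 * δ) + ⟪δ⁻¹ • (a.2 - b.2), x - a.2⟫ +
        ‖x - a.2‖ ^ 2 / (2 * δ) := by
      rw [doublingPenalty, doublingPenalty, ← sub_add_sub_cancel x a.2 b.2, norm_add_sq_real,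
        real_inner_smul_left, real_inner_comm]
      field
    have hbracket : β * (bracket 1 x - bracket 1 a.2) ≤ β * ‖x - a.2‖ :=
      mul_le_mul_of_nonneg_left ((le_abs_self _).trans (abs_bracket_one_sub_le a.2 x)) hβ
    rw [penalizedGap, penalizedGap, hexpand] at hle
    linarith
  sub_le := hB

end PenalizedGap

section Comparison

open scoped Topology

variable {N : ℕ} {s C M T R d δ η θ β tmin : ℝ} {g u₀ Ham : EN N → ℝ}

lemma exists_isMax_penalizedGap_of_lt {u v : ℝ → EN N → ℝ} (huc : JointlyContinuous u)
    (hvc : JointlyContinuous v) (hu₀ : ∀ x, |u₀ x| ≤ M)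
    (hu : ∀ t, 0 ≤ t → ∀ x, u t x ≤ u₀ x + C * t) (hv : ∀ t, 0 ≤ t → ∀ x, u₀ x - C * t ≤ v t x)
    (hC : 0 ≤ C) (hδ : 0 < δ) (hd : 0 ≤ d) (hδd : (2 * M + C * (2 * T + 1)) * (2 * δ) < d ^ 2)
    (hθ : 0 ≤ θ) (hθT : θ * T ≤ η / 4) (hβ : 0 < β) (hβR : β * (1 + R) ≤ η / 4) (hη : 0 < η)
    {t₁ : ℝ} (ht₁ : t₁ ∈ Icc 0 T) {x₁ : EN N} (hx₁ : ‖x₁‖ ≤ R) (hlt : η < u t₁ x₁ - v t₁ x₁) :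
    ∃ a ∈ Icc 0 T ×ˢ univ, ∃ b ∈ Icc 0 (T + 1) ×ˢ univ,
      ‖a - b‖ < d ∧ η / 2 < u a.1 a.2 - v b.1 b.2 ∧
      (∀ t ∈ Icc 0 T, ∀ x, u t x - u a.1 a.2 ≤ 2 * M + C * (2 * T + 1)) ∧
      ∀ a' ∈ Icc 0 T ×ˢ univ, ∀ b' ∈ Icc 0 (T + 1) ×ˢ univ,
        penalizedGap δ θ β u v a' b' ≤ penalizedGap δ θ β u v a b := by
  have huB : ∀ t ∈ Icc 0 T, ∀ x, u t x ≤ M + C * T := fun t ht x =>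
    (hu t ht.1 x).trans (add_le_add (le_of_abs_le (hu₀ x)) (mul_le_mul_of_nonneg_left ht.2 hC))
  have hvB : ∀ t ∈ Icc 0 (T + 1), ∀ x, -(M + C * (T + 1)) ≤ v t x := fun t ht x => by
    linarith [hv t ht.1 x, neg_le_of_abs_le (hu₀ x), mul_le_mul_of_nonneg_left ht.2 hC]
  have hinit : η / 2 < penalizedGap δ θ β u v (t₁, x₁) (t₁, x₁) := by
    have htime : θ * t₁ ≤ θ * T := mul_le_mul_of_nonneg_left ht₁.2 hθ
    have hspace : β * bracket 1 x₁ ≤ β * (1 + R) :=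
      mul_le_mul_of_nonneg_left ((bracket_one_le_one_add_norm x₁).trans (by linarith)) hβ.le
    rw [penalizedGap_self]
    linarith
  have hT₁ : t₁ ∈ Icc 0 (T + 1) := ⟨ht₁.1, by linarith [ht₁.2]⟩
  obtain ⟨a, ha, b, hb, hmax⟩ := exists_isMax_penalizedGap (B := M + C * T)
    (B' := M + C * (T + 1)) huc hvc huB hvB hδ hθ hβ hd (by linarith) ht₁ hT₁ (by linarith)
  have hgap := hinit.trans_le (hmax _ ⟨ht₁, mem_univ _⟩ _ ⟨hT₁, mem_univ _⟩)
  have huv := hgap.trans_le (penalizedGap_le hδ.le hθ hβ.le ha.1.1)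
  refine ⟨a, ha, b, hb, ?_, huv, fun t ht x => ?_, hmax⟩
  · exact norm_sub_lt_of_penalizedGap_nonneg hδ hθ hβ.le hd hδd ha.1.1
      (by linarith [huB _ ha.1 a.2, hvB _ hb.1 b.2]) (by linarith)
  · linarith [huB t ht x, hvB _ hb.1 b.2]

lemma lt_fst_of_lt_sub {u v : ℝ → EN N → ℝ} {a b : ℝ × EN N}
    (hlip : ∀ x y, u₀ y - u₀ x ≤ M * ‖y - x‖) (hM : 0 ≤ M)
    (hu : ∀ t, 0 ≤ t → ∀ x, u t x ≤ u₀ x + C * t) (hv : ∀ t, 0 ≤ t → ∀ x, u₀ x - C * t ≤ v t x)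
    (hC : 0 ≤ C) (hdη : (M + C) * d ≤ η / 4) (htmin : 2 * C * tmin ≤ η / 4) (ha : 0 ≤ a.1)
    (hb : 0 ≤ b.1) (hab : ‖a - b‖ < d) (hlt : η / 2 < u a.1 a.2 - v b.1 b.2) : tmin < a.1 := by
  have htime : C * (b.1 - a.1) ≤ C * d := mul_le_mul_of_nonneg_left
    ((neg_sub a.1 b.1).symm.trans_le ((neg_le_abs _).trans ((norm_fst_le _).trans hab.le))) hC
  have hspace : M * ‖a.2 - b.2‖ ≤ M * d :=
    mul_le_mul_of_nonneg_left ((norm_snd_le (a - b)).trans hab.le) hM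
  refine lt_of_mul_lt_mul_left ?_ (mul_nonneg zero_le_two hC)
  linarith [hu a.1 ha a.2, hv b.1 hb b.2, hlip b.2 a.2]

lemma IsSupersol.sub_le_of_forall_isUpperContact {u v : ℝ → EN N → ℝ} (huc : JointlyContinuous u)
    (hvc : JointlyContinuous v) (hvs : IsSupersol N s g (hamiltonF Ham) u₀ v)
    (hu₀ : ∀ x, |u₀ x| ≤ M) (hlip : ∀ x y, u₀ y - u₀ x ≤ M * ‖y - x‖)
    (hu : ∀ t, 0 ≤ t → ∀ x, u t x ≤ u₀ x + C * t) (hv : ∀ t, 0 ≤ t → ∀ x, u₀ x - C * t ≤ v t x)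
    (hC : 0 ≤ C) (hη : 0 < η) (hδ : 0 < δ) (hδd : (2 * M + C * (2 * T + 1)) * (2 * δ) < d ^ 2)
    (hd : 0 ≤ d) (hdη : (M + C) * d ≤ η / 4) (hdt : d ≤ tmin) (hd₁ : d ≤ 1)
    (htmin : 2 * C * tmin ≤ η / 4) (hθ : 0 < θ) (hθT : θ * T ≤ η / 4) (hβ : 0 < β)
    (hβR : β * (1 + R) ≤ η / 4)
    (hslope : ∀ q ∈ closedBall 0 (d / δ), ∀ t x lam, tmin ≤ t → |lam| ≤ d / δ + θ →
      IsUpperContact δ β (2 * M + C * (2 * T + 1)) u t x lam q → lam ≤ Ham q + θ / 2)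
    {t₁ : ℝ} (ht₁ : t₁ ∈ Icc 0 T) {x₁ : EN N} (hx₁ : ‖x₁‖ ≤ R) : u t₁ x₁ - v t₁ x₁ ≤ η := by
  by_contra! hlt
  obtain ⟨a, ha, b, hb, hab, huv, hosc, hmax⟩ := exists_isMax_penalizedGap_of_lt huc hvc hu₀ hu hv
    hC hδ hd hδd hθ.le hθT hβ hβR hη ht₁ hx₁ hlt
  have hta := lt_fst_of_lt_sub hlip ((abs_nonneg _).trans (hu₀ 0)) hu hv hC hdη htmin ha.1.1 hb.1.1
    hab huv
  have htime : |a.1 - b.1| < d := (norm_fst_le (a - b)).trans_lt hab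
  have hb' : b.1 ∈ Ioo 0 (T + 1) := by
    have := abs_lt.1 htime
    constructor <;> linarith [ha.1.2]
  have hHam : Ham (δ⁻¹ • (a.2 - b.2)) ≤ (a.1 - b.1) / δ :=
    hvs.hamiltonian_le_of_isMin (δ := δ) hb' fun t ht x => by
      have hle := hmax a ha (t, x) ⟨ht, mem_univ x⟩
      rw [penalizedGap, penalizedGap, doublingPenalty_comm a b, doublingPenalty_comm a] at hle
      linarith
  have hcontact := isUpperContact_of_isMax_penalizedGap hδ.ne' hβ.le
    (fun t ht x => hmax (t, x) ⟨⟨ht.1, ht.2.trans ha.1.2⟩, mem_univ x⟩ b hb)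
    fun t ht x => hosc t ⟨ht.1, ht.2.trans ha.1.2⟩ x
  have hq : δ⁻¹ • (a.2 - b.2) ∈ closedBall (0 : EN N) (d / δ) := by
    rw [mem_closedBall_zero_iff, norm_smul, norm_inv, Real.norm_of_nonneg hδ.le, inv_mul_eq_div]
    exact div_le_div_of_nonneg_right ((norm_snd_le (a - b)).trans hab.le) hδ.le
  have hlam : |(a.1 - b.1) / δ + θ| ≤ d / δ + θ := by
    refine (abs_add_le _ _).trans (add_le_add ?_ (abs_of_pos hθ).le)
    rw [abs_div, abs_of_pos hδ]
    exact div_le_div_of_nonneg_right htime.le hδ.le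
  linarith [hslope _ hq a.1 a.2 _ hta.le hlam hcontact]

-- The scale `δ` of the doubling does not depend on `ε`, so that the slopes at contact points stay
-- in a fixed compact set while `β` and then `ε` tend to `0`.
lemma IsSupersol.eventually_sub_le {u : ℝ → ℝ → EN N → ℝ} {v : ℝ → EN N → ℝ}
    (huc : ∀ ε, 0 < ε → JointlyContinuous (u ε)) (hvc : JointlyContinuous v)
    (hvs : IsSupersol N s g (hamiltonF Ham) u₀ v) (hu₀ : ∀ x, |u₀ x| ≤ M)
    (hlip : ∀ x y, u₀ y - u₀ x ≤ M * ‖y - x‖)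
    (hu : ∀ᶠ ε in 𝓝[>] 0, ∀ t, 0 ≤ t → ∀ x, u ε t x ≤ u₀ x + C * t)
    (hv : ∀ t, 0 ≤ t → ∀ x, u₀ x - C * t ≤ v t x) (hC : 0 ≤ C)
    (hslope : ∀ δ > 0, ∀ tmin > 0, ∀ θ > 0, ∀ lamMax, ∀ b ≥ 0, ∀ r,
      HasSlopeBound Ham u δ tmin θ lamMax b (closedBall 0 r))
    (hη : 0 < η) (hT : 0 < T) (R : ℝ) :
    ∀ᶠ ε in 𝓝[>] 0, ∀ t ∈ Icc 0 T, ∀ x, ‖x‖ ≤ R → u ε t x - v t x ≤ η := by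
  have hM : 0 ≤ M := (abs_nonneg _).trans (hu₀ 0)
  have hsmall : ∀ c : ℝ, ∀ᶠ r in 𝓝[>] (0 : ℝ), c * r ≤ η / 4 := fun c =>
    eventually_nhdsGT_zero_le (f := fun r => c * r) (by fun_prop) (by simpa using hη)
  have hle : ∀ c > 0, ∀ᶠ r in 𝓝[>] (0 : ℝ), r ≤ c := fun c hc =>
    eventually_nhdsGT_zero_le continuousAt_id hc
  obtain ⟨tmin, htmin, htC⟩ := (eventually_mem_nhdsWithin.and (hsmall (2 * C))).exists
  obtain ⟨d, hd, hdη, hdt, hd₁⟩ := (eventually_mem_nhdsWithin.and ((hsmall (M + C)).and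
    ((hle tmin htmin).and (hle 1 one_pos)))).exists
  obtain ⟨θ, hθ, hθT⟩ := (eventually_mem_nhdsWithin.and (hsmall T)).exists
  obtain ⟨δ, hδ, hδd⟩ := exists_pos_mul_lt (pow_pos hd 2) (2 * (2 * M + C * (2 * T + 1)))
  obtain ⟨β, hβ, hβR, hβslope⟩ := (eventually_mem_nhdsWithin.and ((hsmall (1 + R)).and
    (hslope δ hδ tmin htmin (θ / 2) (half_pos hθ) (d / δ + θ) (2 * M + C * (2 * T + 1))
      (by positivity) (d / δ)))).exists
  filter_upwards [self_mem_nhdsWithin, hu, hβslope] with ε hε hεu hεslope t ht x hx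
  exact hvs.sub_le_of_forall_isUpperContact (huc ε hε) hvc hu₀ hlip hεu hv hC hη hδ (by linarith)
    hd.le hdη hdt hd₁ htC hθ (by linarith) hβ (by linarith) hεslope ht hx

end Comparison

/-! ### Convergence -/

section Convergence

open scoped Topology

variable {N : ℕ} {s γ K M : ℝ} {g u₀ Ham : EN N → ℝ} {h : ℝ → EN N → ℝ → ℝ}

lemma oscillatingF_le {A Ch ε I : ℝ} (hs : 1 / 2 ≤ s) (hh : ∀ τ y v, |h τ y v| ≤ Ch) (hA : 0 ≤ A)
    (hI : I ≤ A) (hε : 0 < ε) (hε₁ : ε ≤ 1) (t : ℝ) (x : EN N) (v : ℝ) (q : EN N →L[ℝ] ℝ) :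
    oscillatingF s h ε t x v q I ≤ A + Ch := by
  refine add_le_add ?_ (le_of_abs_le (hh _ _ _))
  calc ε ^ (2 * s - 1) * I ≤ ε ^ (2 * s - 1) * A := by gcongr
    _ ≤ A := mul_le_of_le_one_left hA (Real.rpow_le_one hε.le hε₁ (by linarith))

lemma eventually_forall_oscillating_le (hs : 1 / 2 ≤ s) (hk : IsLevyKernel γ (levyKernel N s g))
    (hh : IsPeriodicReaction K h) (hu₀ : HasC2Bound M u₀) {u : ℝ → ℝ → EN N → ℝ}
    (huc : ∀ ε, 0 < ε → JointlyContinuous (u ε))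
    (hu : ∀ ε, 0 < ε → IsSubsol N s g (oscillatingF s h ε) u₀ (u ε)) :
    ∀ᶠ C in atTop, ∀ ε, 0 < ε → ε ≤ 1 → ∀ t, 0 ≤ t → ∀ x, u ε t x ≤ u₀ x + C * t := by
  obtain ⟨Ch, hCh⟩ := hh.exists_abs_le
  have hA : 0 ≤ (2 * M + 2) * levyMass γ (levyKernel N s g) :=
    mul_nonneg (by linarith [hu₀.nonneg]) hk.levyMass_nonneg
  filter_upwards [eventually_ge_atTop ((2 * M + 2) * levyMass γ (levyKernel N s g) + Ch + 1)]
    with C hC ε hε hε₁ t ht x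
  refine ((hu ε hε).le_add_mul hk hu₀ (huc ε hε)
    (fun t x v q I _ hI => oscillatingF_le hs hCh hA hI hε hε₁ t x v q) ht x).trans ?_
  gcongr

lemma IsSupersol.eventually_forall_sub_le (hk : IsLevyKernel γ (levyKernel N s g))
    (hu₀ : HasC2Bound M u₀) (hHam : Continuous Ham) {v : ℝ → EN N → ℝ} (hvc : JointlyContinuous v)
    (hv : IsSupersol N s g (hamiltonF Ham) u₀ v) :
    ∀ᶠ C in atTop, ∀ t, 0 ≤ t → ∀ x, u₀ x - C * t ≤ v t x := by
  obtain ⟨B, hB⟩ := (isCompact_closedBall (0 : EN N) (M + 1)).exists_bound_of_continuousOn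
    hHam.continuousOn
  filter_upwards [eventually_ge_atTop (B + 1)] with C hC t ht x
  have hle := hv.neg.le_add_mul (C := B) hk hu₀.neg hvc.neg (fun t x v q I hq _ => by
    refine neg_le.1 (neg_le_of_abs_le (hB _ ?_))
    rwa [mem_closedBall_zero_iff, LinearIsometryEquiv.norm_map, norm_neg]) ht x
  linarith [mul_le_mul_of_nonneg_right hC ht]

lemma eventually_oscillating_sub_le (hs : s ∈ Ioo (1 / 2) 1) (hg : Continuous g)
    (hg₀ : ∀ z, ‖z‖ = 1 → 0 ≤ g z) (hgeven : ∀ z, g (-z) = g z) (hh : IsPeriodicReaction K h)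
    (hu₀ : HasC2Bound M u₀) (hHam : Continuous Ham)
    (hw : ∀ p, ∃ w : ℝ → EN N → ℝ, JointlyContinuous w ∧
      IsSupersol N s g (correctorF h p) (fun _ => 0) w ∧ SlopeLim N w (Ham p))
    {u : ℝ → ℝ → EN N → ℝ} (huc : ∀ ε, 0 < ε → JointlyContinuous (u ε))
    (hu : ∀ ε, 0 < ε → IsSubsol N s g (oscillatingF s h ε) u₀ (u ε))
    {v : ℝ → EN N → ℝ} (hvc : JointlyContinuous v) (hv : IsSupersol N s g (hamiltonF Ham) u₀ v)
    {η T : ℝ} (hη : 0 < η) (hT : 0 < T) (R : ℝ) :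
    ∀ᶠ ε in 𝓝[>] 0, ∀ t ∈ Icc 0 T, ∀ x, ‖x‖ ≤ R → u ε t x - v t x ≤ η := by
  obtain ⟨γ, hγ₁, hγ⟩ := exists_between (show 1 < 2 * s by linarith [hs.1])
  have hk := isLevyKernel_levyKernel hg hg₀ hgeven hs.2 hγ₁ hγ
  obtain ⟨C, hCu, hCv, hC⟩ := ((eventually_forall_oscillating_le hs.1.le hk hh hu₀ huc hu).and
    ((hv.eventually_forall_sub_le hk hu₀ hHam hvc).and (eventually_ge_atTop 0))).exists
  refine hv.eventually_sub_le huc hvc hu₀.abs_le hu₀.sub_le ?_ hCv hC (fun δ hδ tmin htmin θ hθ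
    lamMax b hb r => hasSlopeBound_of_isCompact (isCompact_closedBall 0 r) hk hh huc hu hHam hw hδ
      htmin hθ hb) hη hT R
  filter_upwards [Ioc_mem_nhdsGT one_pos] with ε hε using hCu ε hε.1 hε.2

lemma SlopeLim.neg {w : ℝ → EN N → ℝ} {lam : ℝ} (hw : SlopeLim N w lam) :
    SlopeLim N (fun τ y => -w τ y) (-lam) := by
  intro ε hε R hR
  obtain ⟨T, hT⟩ := hw ε hε R hR
  refine ⟨T, fun τ hτ y hy => ?_⟩
  rw [neg_div, ← neg_sub', abs_neg]
  exact hT τ hτ y hy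

lemma exists_reflected_corrector {p : EN N}
    (hw : ∃ w, IsSol N s g (correctorF h (-p)) (fun _ => 0) w ∧ SlopeLim N w (Ham (-p))) :
    ∃ w, IsSol N s g (correctorF (reflectReaction h) p) (fun _ => 0) w ∧
      SlopeLim N w (-Ham (-p)) := by
  obtain ⟨w, hsol, hlim⟩ := hw
  have hneg := hsol.neg
  simp only [neg_zero, reflectRHS_correctorF] at hneg
  exact ⟨_, hneg, hlim.neg⟩

lemma cellF_zero (W : ℝ → ℝ) (σ : ℝ → EN N → ℝ) (p : EN N) :
    cellF N W σ p 0 = correctorF (fun τ y v => σ τ y - deriv W v) p := by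
  funext τ y v q I
  simp only [cellF, correctorF]
  ring

lemma oscillatingF_sub_deriv (W : ℝ → ℝ) (σ : ℝ → EN N → ℝ) (ε : ℝ) :
    oscillatingF s (fun τ y v => σ τ y - deriv W v) ε = fun t x v _ I =>
      ε ^ (2 * s - 1) * I - deriv W (v / ε) + σ (t / ε) (ε⁻¹ • x) := by
  funext t x v q I
  simp only [oscillatingF]
  ring

theorem convergence_s_gt_half_general (hs : s ∈ Ioo (1 / 2) 1) (hg : Continuous g)
    (hg₀ : ∀ z, ‖z‖ = 1 → 0 ≤ g z) (hgeven : ∀ z, g (-z) = g z) (hh : IsPeriodicReaction K h)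
    (hu₀ : H4 N u₀) (hHam : Continuous Ham)
    (hw : ∀ p, ∃ w, IsSol N s g (correctorF h p) (fun _ => 0) w ∧ SlopeLim N w (Ham p))
    {u : ℝ → ℝ → EN N → ℝ} (hu : ∀ ε, 0 < ε → IsSol N s g (oscillatingF s h ε) u₀ (u ε))
    {v : ℝ → EN N → ℝ} (hv : IsSol N s g (hamiltonF Ham) u₀ v) {η T : ℝ} (hη : 0 < η) (hT : 0 < T)
    (R : ℝ) :
    ∃ ε₀ > 0, ∀ ε, 0 < ε → ε < ε₀ → ∀ t ∈ Icc 0 T, ∀ x, ‖x‖ ≤ R → |u ε t x - v t x| ≤ η := by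
  obtain ⟨M, hM⟩ := hu₀.exists_hasC2Bound
  have hupper := eventually_oscillating_sub_le hs hg hg₀ hgeven hh hM hHam
    (fun p => let ⟨w, hsol, hlim⟩ := hw p; ⟨w, hsol.1, hsol.2.2, hlim⟩)
    (fun ε hε => (hu ε hε).1) (fun ε hε => (hu ε hε).2.1) hv.1 hv.2.2 hη hT R
  have hu' : ∀ ε, 0 < ε → IsSol N s g (oscillatingF s (reflectReaction h) ε) (fun x => -u₀ x)
      (fun t x => -u ε t x) := fun ε hε => reflectRHS_oscillatingF (h := h) ▸ (hu ε hε).neg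
  have hv' := reflectRHS_hamiltonF Ham ▸ hv.neg
  have hlower := eventually_oscillating_sub_le (u := fun ε t x => -u ε t x)
    (v := fun t x => -v t x) hs hg hg₀ hgeven hh.reflect hM.neg (hHam.comp continuous_neg).neg
    (fun p =>
      let ⟨w, hsol, hlim⟩ := exists_reflected_corrector (hw (-p)); ⟨w, hsol.1, hsol.2.2, hlim⟩)
    (fun ε hε => (hu' ε hε).1) (fun ε hε => (hu' ε hε).2.1) hv'.1 hv'.2.2 hη hT R
  obtain ⟨ε₀, hε₀, hsub⟩ := mem_nhdsGT_iff_exists_Ioo_subset.1 (hupper.and hlower)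
  refine ⟨ε₀, hε₀, fun ε hε hlt t ht x hx => abs_le.2 ⟨?_, ?_⟩⟩
  · linarith [(hsub ⟨hε, hlt⟩).2 t ht x hx]
  · exact (hsub ⟨hε, hlt⟩).1 t ht x hx

end Convergence

/-- **Convergence for `s > 1/2` (Theorem 1.2).** Under (H1)–(H4), the solution `u^ε` of
`∂_t u^ε = ε^{2s−1} I_s[u^ε] − W'(u^ε/ε) + σ(t/ε, x/ε)`, `u^ε(0,·) = u₀`, converges locally
uniformly to the solution `u⁰` of `∂_t u = H̄₁(∇_x u)`, `u(0,·) = u₀`, where `H̄₁(p) = H̄(p,0)`. -/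
theorem convergence_s_gt_half
    (N : ℕ) (hN : 1 ≤ N) (s : ℝ) (hs : s ∈ Set.Ioo (1/2 : ℝ) 1)
    (g : EN N → ℝ) (hg : H1 N g)
    (W : ℝ → ℝ) (hW : H2 W)
    (σ : ℝ → EN N → ℝ) (hσ : H3 N σ)
    (u₀ : EN N → ℝ) (hu₀ : H4 N u₀)
    -- `H̄` is the effective Hamiltonian given by the ergodicity theorem:
    (Hbar : EN N → ℝ → ℝ)
    (hHbarCont : Continuous (fun q : EN N × ℝ => Hbar q.1 q.2))
    (hHbar : ∀ (p : EN N) (L : ℝ), ∃ w : ℝ → EN N → ℝ,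
      IsSol N s g (cellF N W σ p L) (fun _ => 0) w ∧ SlopeLim N w (Hbar p L))
    -- `u^ε` is the unique viscosity solution of the `ε`-problem:
    (uε : ℝ → ℝ → EN N → ℝ)
    (huε : ∀ ε : ℝ, 0 < ε →
      IsSol N s g
        (fun t x v _ I => ε ^ (2*s - 1) * I - deriv W (v / ε) + σ (t/ε) (ε⁻¹ • x))
        u₀ (uε ε) ∧
      (∀ u' : ℝ → EN N → ℝ,
        IsSol N s g
          (fun t x v _ I => ε ^ (2*s - 1) * I - deriv W (v / ε) + σ (t/ε) (ε⁻¹ • x))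
          u₀ u' → ∀ t, 0 ≤ t → ∀ x, u' t x = uε ε t x))
    -- `u⁰` is the unique viscosity solution of the homogenized problem:
    (u0 : ℝ → EN N → ℝ)
    (hu0 : IsSol N s g
      (fun _ _ _ Du _ => Hbar ((InnerProductSpace.toDual ℝ (EN N)).symm Du) 0) u₀ u0)
    (hu0uniq : ∀ u' : ℝ → EN N → ℝ,
      IsSol N s g
        (fun _ _ _ Du _ => Hbar ((InnerProductSpace.toDual ℝ (EN N)).symm Du) 0) u₀ u' →
      ∀ t, 0 ≤ t → ∀ x, u' t x = u0 t x) :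
    -- then `u^ε → u⁰` locally uniformly in `(t,x)` as `ε → 0`:
    ∀ η > 0, ∀ T > 0, ∀ R > 0, ∃ ε₀ > 0, ∀ ε : ℝ, 0 < ε → ε < ε₀ →
      ∀ t ∈ Set.Icc (0:ℝ) T, ∀ x : EN N, ‖x‖ ≤ R → |uε ε t x - u0 t x| ≤ η := by
  intro η hη T hT R _
  obtain ⟨K, hh⟩ := exists_isPeriodicReaction hW hσ
  exact convergence_s_gt_half_general hs hg.1 (fun z hz => (hg.2.1 z hz).le) hg.2.2 hh hu₀
    (hHbarCont.comp (continuous_id.prodMk continuous_const)) (fun p => cellF_zero W σ p ▸ hHbar p 0)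
    (fun ε hε => oscillatingF_sub_deriv W σ ε ▸ (huε ε hε).1) hu0 hη hT R
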